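/- arXiv:2304.05859 — 4 statements merged into one kernel-verified Lean document; each statement's English description precedes it below -/
import Mathlib

section
/- Let G be a connected graph (possibly with one pair of parallel edges, which counts as a cycle) of order n with exactly one cycle and maximum degree at most k, where k ≥ 3. Then G has a matching of size at least n/k. -/
/-!
Suppose a graph of maximum degree at most `k`, `k ≥ 3`, is oriented so that every vertex has at
most one outgoing edge. It has at most as many edges as non-isolated vertices, so by the
degree-sum formula either some vertex is a leaf or all non-isolated vertices have degree two. Both
cases give an edge `uv` with `deg u + deg v ≤ k + 1`: at most `k` edges meet `u` or `v`. Putting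
`uv` into the matching and deleting these edges leaves a graph oriented in the same way, so the
greedy matching has at least `e / k` edges, where `e` is the number of edges.

A connected graph with a cycle contains such an oriented graph with one edge for each vertex:
choose an edge `ab` that is not a bridge, send `a` to `b`, and send every other vertex one step
closer to `a` in the graph without `ab`.
-/

open SimpleGraph Finset

section

variable {V : Type*} {G H : SimpleGraph V} {k : ℕ} {u v : V}

/-- A pseudoforest is a graph in which every component has at most one cycle. It is encoded by an
orientation of its edges with outdegree at most one: `f v` is the head of the edge leaving `v`,
and is arbitrary when no edge leaves `v`. -/
def IsPseudoforest (G : SimpleGraph V) : Prop :=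
  ∃ f : V → V, ∀ ⦃a b⦄, G.Adj a b → f a = b ∨ f b = a

namespace IsPseudoforest

theorem mono (hGH : G ≤ H) : IsPseudoforest H → IsPseudoforest G
  | ⟨f, hf⟩ => ⟨f, fun _ _ hab ↦ hf (hGH hab)⟩

theorem card_edgeFinset_le_card_support [Fintype G.edgeSet] [Fintype G.support]
    (hG : IsPseudoforest G) : #G.edgeFinset ≤ #G.support.toFinset := by
  classical
  obtain ⟨f, hf⟩ := hG
  suffices G.edgeFinset ⊆ G.support.toFinset.image fun v ↦ s(v, f v) from
    (card_le_card this).trans card_image_le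
  intro e he
  induction e with | _ a b =>
  have hab : G.Adj a b := by simpa using he
  rw [mem_image]
  rcases hf hab with hfa | hfb
  · exact ⟨a, by simpa using hab.mem_support_left, by rw [hfa]⟩
  · exact ⟨b, by simpa using hab.mem_support_right, by rw [hfb, Sym2.eq_swap]⟩

variable [Fintype V] [DecidableRel G.Adj]

theorem degree_eq_two_of_mem_support (hG : IsPseudoforest G) (hleaf : ∀ v, G.degree v ≠ 1)
    (hv : v ∈ G.support) : G.degree v = 2 := by
  classical
  have two_le_degree : ∀ w ∈ G.support.toFinset, 2 ≤ G.degree w := fun w hw ↦ by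
    have := (G.degree_pos_iff_mem_support w).2 (by simpa using hw)
    have := hleaf w
    omega
  have sum_degree_le : ∑ w ∈ G.support.toFinset, G.degree w ≤ ∑ w ∈ G.support.toFinset, 2 := by
    rw [sum_degrees_support_eq_twice_card_edges, sum_const, smul_eq_mul, mul_comm]
    gcongr
    exact hG.card_edgeFinset_le_card_support
  have sum_eq := (sum_le_sum two_le_degree).antisymm sum_degree_le
  exact ((sum_eq_sum_iff_of_le two_le_degree).1 sum_eq v (by simpa using hv)).symm

theorem exists_adj_degree_add_degree_le (hG : IsPseudoforest G) (hk : 3 ≤ k)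
    (hdeg : ∀ v, G.degree v ≤ k) (hne : G ≠ ⊥) :
    ∃ u v, G.Adj u v ∧ G.degree u + G.degree v ≤ k + 1 := by
  by_cases! hleaf : ∃ u, G.degree u = 1
  · obtain ⟨u, hu⟩ := hleaf
    obtain ⟨v, huv⟩ := (G.degree_pos_iff_exists_adj u).1 (by omega)
    exact ⟨u, v, huv, by have := hdeg v; omega⟩
  · obtain ⟨u, v, huv⟩ := ne_bot_iff_exists_adj.1 hne
    have hu := hG.degree_eq_two_of_mem_support hleaf huv.mem_support_left
    have hv := hG.degree_eq_two_of_mem_support hleaf huv.mem_support_right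
    exact ⟨u, v, huv, by omega⟩

end IsPseudoforest

section DeleteIncidenceSet

variable [Fintype V] [DecidableEq V] [DecidableRel G.Adj]

theorem card_edgeFinset_deleteIncidenceSet_add_degree (v : V) :
    #(G.deleteIncidenceSet v).edgeFinset + G.degree v = #G.edgeFinset := by
  rw [card_edgeFinset_deleteIncidenceSet, Nat.sub_add_cancel]
  exact G.degree_le_card_edgeFinset v

theorem degree_deleteIncidenceSet_add_one_of_adj (huv : G.Adj u v) :
    (G.deleteIncidenceSet u).degree v + 1 = G.degree v := by
  have neighborFinset_eq : (G.deleteIncidenceSet u).neighborFinset v =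
      (G.neighborFinset v).erase u := by
    ext w
    simp [deleteIncidenceSet_adj, huv.ne', and_comm]
  rw [← card_neighborFinset_eq_degree, neighborFinset_eq,
    card_erase_add_one (by simpa using huv.symm), card_neighborFinset_eq_degree]

theorem card_edgeFinset_add_one_eq_of_adj (huv : G.Adj u v) :
    #G.edgeFinset + 1 = #((G.deleteIncidenceSet u).deleteIncidenceSet v).edgeFinset +
      (G.degree u + G.degree v) := by
  have deg_v := degree_deleteIncidenceSet_add_one_of_adj huv
  have delete_u := card_edgeFinset_deleteIncidenceSet_add_degree (G := G) u
  have delete_v := card_edgeFinset_deleteIncidenceSet_add_degree (G := G.deleteIncidenceSet u) v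
  omega

end DeleteIncidenceSet

theorem exists_isMatching_of_le {M : G.Subgraph} (hM : M.IsMatching) (hGH : G ≤ H) :
    ∃ N : H.Subgraph, N.IsMatching ∧ N.edgeSet = M.edgeSet ∧ N.support = M.support := by
  refine ⟨_, hM.map_ofLE hGH, by simp, ?_⟩
  ext w
  simp [Subgraph.mem_support, Relation.Map]

theorem exists_isMatching_edgeSet_eq_insert
    {M : ((G.deleteIncidenceSet u).deleteIncidenceSet v).Subgraph} (hM : M.IsMatching)
    (huv : G.Adj u v) :
    ∃ N : G.Subgraph, N.IsMatching ∧ N.edgeSet = insert s(u, v) M.edgeSet := by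
  obtain ⟨N, hN, hedge, hsupport⟩ := exists_isMatching_of_le hM
    ((deleteIncidenceSet_le _ v).trans (deleteIncidenceSet_le G u))
  have avoids_uv : ∀ w ∈ M.support, w ≠ u ∧ w ≠ v := by
    rintro w ⟨x, hwx⟩
    have hadj := M.adj_sub hwx
    simp only [deleteIncidenceSet_adj] at hadj
    exact ⟨hadj.1.2.1, hadj.2.1⟩
  refine ⟨N ⊔ G.subgraphOfAdj huv, hN.sup (.subgraphOfAdj huv) ?_, by simp [hedge]⟩
  rw [hsupport, support_subgraphOfAdj, Set.disjoint_left]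
  simpa using avoids_uv

theorem IsPseudoforest.exists_isMatching_card_edgeFinset_le [Fintype V] [DecidableRel G.Adj]
    (hG : IsPseudoforest G) (hk : 3 ≤ k) (hdeg : ∀ v, G.degree v ≤ k) :
    ∃ M : G.Subgraph, M.IsMatching ∧ #G.edgeFinset ≤ k * M.edgeSet.ncard := by
  classical
  induction hn : #G.edgeFinset using Nat.strong_induction_on generalizing G with | _ n ih =>
  subst hn
  rcases eq_or_ne G ⊥ with rfl | hne
  · exact ⟨⊥, by simp [Subgraph.IsMatching], by simp⟩
  obtain ⟨u, v, huv, hdeg_add⟩ := hG.exists_adj_degree_add_degree_le hk hdeg hne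
  let G' := (G.deleteIncidenceSet u).deleteIncidenceSet v
  have hle : G' ≤ G := (deleteIncidenceSet_le _ v).trans (deleteIncidenceSet_le G u)
  have huv' : s(u, v) ∉ G'.edgeSet := by simp [G', deleteIncidenceSet_adj]
  have card_eq : #G.edgeFinset + 1 = #G'.edgeFinset + (G.degree u + G.degree v) :=
    card_edgeFinset_add_one_eq_of_adj huv
  have card_lt : #G'.edgeFinset < #G.edgeFinset := by
    have := huv.degree_pos_left
    have := huv.degree_pos_right
    omega
  obtain ⟨M, hM, hcard⟩ := ih _ card_lt (hG.mono hle)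
    (fun w ↦ (degree_le_of_le hle).trans (hdeg w)) rfl
  obtain ⟨N, hN, hNM⟩ := exists_isMatching_edgeSet_eq_insert hM huv
  have card_N : N.edgeSet.ncard = M.edgeSet.ncard + 1 := by
    rw [hNM, Set.ncard_insert_of_notMem fun h ↦ huv' (M.edgeSet_subset h)]
  refine ⟨N, hN, ?_⟩
  calc #G.edgeFinset ≤ #G'.edgeFinset + k := by omega
    _ ≤ k * M.edgeSet.ncard + k := by gcongr
    _ = k * N.edgeSet.ncard := by rw [card_N, mul_add_one]

theorem exists_adj_dist_lt_dist (hvu : G.Reachable v u) (hne : v ≠ u) :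
    ∃ w, G.Adj v w ∧ G.dist w u < G.dist v u := by
  obtain ⟨p, hp⟩ := hvu.exists_walk_length_eq_dist
  cases p with
  | nil => contradiction
  | @cons _ w _ hvw q =>
    refine ⟨w, hvw, ?_⟩
    calc G.dist w u ≤ q.length := dist_le q
      _ < (Walk.cons hvw q).length := by simp
      _ = G.dist v u := hp

theorem exists_forall_adj_and_apply_apply_ne (hconn : G.Connected) (hcyc : ¬G.IsAcyclic) :
    ∃ f : V → V, ∀ v, G.Adj v (f v) ∧ f (f v) ≠ v := by
  classical
  simp only [isAcyclic_iff_forall_adj_isBridge, not_forall] at hcyc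
  obtain ⟨a, b, hab, hbridge⟩ := hcyc
  let G' := G.deleteEdges {s(a, b)}
  have hconn' : G'.Connected := hconn.connected_delete_edge_of_not_isBridge hbridge
  choose! parent adj_parent dist_parent_lt using
    fun v (hv : v ≠ a) ↦ exists_adj_dist_lt_dist (hconn' v a) hv
  have parent_b_ne : parent b ≠ a := fun h ↦ by
    simpa [G', h, Sym2.eq_swap] using adj_parent b hab.ne'
  refine ⟨Function.update parent a b, fun v ↦ ?_⟩
  rcases eq_or_ne v a with rfl | hv
  · simpa [hab.ne'] using And.intro hab parent_b_ne
  refine ⟨by simpa [hv] using deleteEdges_le _ (adj_parent v hv), ?_⟩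
  rcases eq_or_ne (parent v) a with hpa | hpa
  · suffices b ≠ v by simpa [hv, hpa]
    rintro rfl
    exact parent_b_ne hpa
  · suffices parent (parent v) ≠ v by simpa [hv, hpa]
    intro h
    have dist_lt := (dist_parent_lt _ hpa).trans (dist_parent_lt v hv)
    exact dist_lt.ne (by rw [h])

theorem exists_isPseudoforest_le_card_le_ncard_edgeSet [Fintype V] {f : V → V}
    (hadj : ∀ v, G.Adj v (f v)) (hf : ∀ v, f (f v) ≠ v) :
    ∃ H ≤ G, IsPseudoforest H ∧ Fintype.card V ≤ H.edgeSet.ncard := by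
  refine ⟨fromRel fun a b ↦ f a = b, ?_, ⟨f, fun _ _ hab ↦ hab.2⟩, ?_⟩
  · rintro a b ⟨-, rfl | rfl⟩
    · exact hadj a
    · exact (hadj b).symm
  · have edge_injective : Function.Injective fun v ↦ s(v, f v) := fun v w hvw ↦ by
      rcases Sym2.eq_iff.1 hvw with ⟨hvw, -⟩ | ⟨rfl, hfv⟩
      · exact hvw
      · exact absurd hfv (hf w)
    rw [← Nat.card_eq_fintype_card, ← Set.ncard_univ]
    exact Set.ncard_le_ncard_of_injOn _ (fun v _ ↦ by simpa using (hadj v).ne)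
      edge_injective.injOn

theorem unicyclic_matching_bound_general [Fintype V] [DecidableRel G.Adj] (hk : 3 ≤ k)
    (hconn : G.Connected) (hcyc : ¬G.IsAcyclic) (hdeg : ∀ v, G.degree v ≤ k) :
    ∃ M : G.Subgraph, M.IsMatching ∧ Fintype.card V ≤ k * M.edgeSet.ncard := by
  classical
  obtain ⟨f, hf⟩ := exists_forall_adj_and_apply_apply_ne hconn hcyc
  obtain ⟨H, hHG, hH, hcard⟩ :=
    exists_isPseudoforest_le_card_le_ncard_edgeSet (fun v ↦ (hf v).1) fun v ↦ (hf v).2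
  obtain ⟨M, hM, hMcard⟩ := hH.exists_isMatching_card_edgeFinset_le hk
    fun v ↦ (degree_le_of_le hHG).trans (hdeg v)
  obtain ⟨N, hN, hNM, -⟩ := exists_isMatching_of_le hM hHG
  refine ⟨N, hN, ?_⟩
  calc Fintype.card V ≤ H.edgeSet.ncard := hcard
    _ = #H.edgeFinset := by rw [← coe_edgeFinset, Set.ncard_coe_finset]
    _ ≤ k * M.edgeSet.ncard := hMcard
    _ = k * N.edgeSet.ncard := by rw [hNM]

theorem not_isAcyclic_of_card_le_ncard_edgeSet [Fintype V] (hconn : G.Connected)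
    (hcard : Fintype.card V ≤ G.edgeSet.ncard) : ¬G.IsAcyclic := fun hacyc ↦ by
  have tree_card := (isTree_iff_connected_and_card.1 ⟨hconn, hacyc⟩).2
  rw [Nat.card_coe_set_eq, Nat.card_eq_fintype_card] at tree_card
  omega

end

/-- A connected graph of order `n` with exactly one cycle (equivalently, with
exactly as many edges as vertices) and maximum degree at most `k`, `k ≥ 3`,
has a matching of size at least `n/k`. -/
theorem unicyclic_matching_bound {V : Type*} [Fintype V] (G : SimpleGraph V)
    [DecidableRel G.Adj] (k : ℕ) (hk : 3 ≤ k)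
    (hconn : G.Connected) (hunicyclic : G.edgeSet.ncard = Fintype.card V)
    (hdeg : ∀ v : V, G.degree v ≤ k) :
    ∃ M : G.Subgraph, M.IsMatching ∧ Fintype.card V ≤ k * M.edgeSet.ncard :=
  unicyclic_matching_bound_general hk hconn
    (not_isAcyclic_of_card_le_ncard_edgeSet hconn hunicyclic.ge) hdeg
end

section
/- Let G be a planar simple graph and let K₂(G) = L₂(G) ∪ H₂(G), where L₂(G) is the set of vertices of degree at most 2 that have a neighbor of degree no larger than their own, and H₂(G) is the set of vertices of degree greater than 2. Then |K₂(G)| ≤ 3ν(G). -/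
/-- A graph is planar if it has a topological embedding in the plane: vertices
are distinct points, edges are injective continuous arcs joining their
endpoints whose interiors avoid vertices, and distinct edges meet only at
common endpoints. -/
def SimpleGraph.IsPlanar {V : Type*} (G : SimpleGraph V) : Prop :=
  ∃ (pos : V → ℝ × ℝ) (γ : ∀ ⦃u v : V⦄, G.Adj u v → unitInterval → ℝ × ℝ),
    Function.Injective pos ∧
    (∀ ⦃u v : V⦄ (h : G.Adj u v),
      Continuous (γ h) ∧ Function.Injective (γ h) ∧
      γ h 0 = pos u ∧ γ h 1 = pos v) ∧
    (∀ ⦃u v : V⦄ (h : G.Adj u v) (t : unitInterval),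
      γ h.symm (unitInterval.symm t) = γ h t) ∧
    (∀ ⦃u v : V⦄ (h : G.Adj u v) (t : unitInterval),
      t ≠ 0 → t ≠ 1 → ∀ w : V, γ h t ≠ pos w) ∧
    (∀ ⦃u v u' v' : V⦄ (h : G.Adj u v) (h' : G.Adj u' v') (t t' : unitInterval),
      s(u, v) ≠ s(u', v') → γ h t = γ h' t' → t = 0 ∨ t = 1)

/-!
A drawing of `G` can be followed on a sufficiently fine square grid: cutting each arc into thirds
separates the pieces that must stay disjoint by a positive distance, so `G` is a minor of the grid.
Every cycle of the grid is, modulo 2, a sum of boundaries of unit squares. Contracting the branch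
sets, the cycle space of `G` is therefore spanned by face boundaries that use each edge at most
twice. If `G` has no triangle, each nonzero one uses at least four edges, whence `G` has at most
twice as many edges as vertices; so a planar graph has at most `2 (|A| + |B|)` edges between
disjoint vertex sets `A` and `B`.

For the matching bound, the Tutte–Berge formula provides a set `S` for which
`n + 2 |S| ≤ 3 ν + i`, where `i` counts the vertices isolated by deleting `S`, because an odd
component that is not a single vertex has at least three vertices. It remains to see that at most
`2 |S|` of these isolated vertices lie in `K₂`. Those with a neighbour of degree at most two are at
most twice as many as such neighbours in `S`; the others send at least three edges each to the
remaining vertices of `S`, and the edge bound applies.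
-/

namespace PlanarMatching

open Finset

section GridHomology

/-- The unit edges of the square grid on `ℤ × ℤ`: `horiz i j` joins `(i, j)` to `(i + 1, j)` and
`vert i j` joins `(i, j)` to `(i, j + 1)`. -/
inductive GridEdge
  | horiz (i j : ℤ)
  | vert (i j : ℤ)

namespace GridEdge

/-- The lower or left endpoint of a grid edge. -/
def fst : GridEdge → ℤ × ℤ
  | horiz i j => (i, j)
  | vert i j => (i, j)

/-- The upper or right endpoint of a grid edge. -/
def snd : GridEdge → ℤ × ℤ
  | horiz i j => (i + 1, j)
  | vert i j => (i, j + 1)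

/-- The unit cell above or to the right of a grid edge, cells being named by their lower left
corner. -/
def upperCell : GridEdge → ℤ × ℤ
  | horiz i j => (i, j)
  | vert i j => (i, j)

/-- The unit cell below or to the left of a grid edge, cells being named by their lower left
corner. -/
def lowerCell : GridEdge → ℤ × ℤ
  | horiz i j => (i, j - 1)
  | vert i j => (i - 1, j)

lemma fst_ne_snd (g : GridEdge) : g.fst ≠ g.snd := by
  cases g <;> simp [fst, snd]

lemma eq_of_fst_eq_of_snd_eq {g g' : GridEdge} (hfst : g.fst = g'.fst) (hsnd : g.snd = g'.snd) :
    g = g' := by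
  cases g <;> cases g' <;> simp_all [fst, snd]

end GridEdge

open GridEdge

/-- The infinite square grid. -/
def gridGraph : SimpleGraph (ℤ × ℤ) :=
  SimpleGraph.fromRel fun x y => ∃ g : GridEdge, g.fst = x ∧ g.snd = y

lemma gridGraph_adj {x y : ℤ × ℤ} :
    gridGraph.Adj x y ↔ ∃ g : GridEdge, s(g.fst, g.snd) = s(x, y) := by
  simp only [gridGraph, SimpleGraph.fromRel_adj, Sym2.eq_iff, exists_or, and_iff_right_iff_imp]
  rintro (⟨g, rfl, rfl⟩ | ⟨g, rfl, rfl⟩)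
  exacts [g.fst_ne_snd, g.fst_ne_snd.symm]

/-- The mod 2 boundary of a finite set of grid edges, encoded as a `ZMod 2`-valued function of
finite support. -/
noncomputable def gridBoundary : (GridEdge →₀ ZMod 2) →ₗ[ZMod 2] (ℤ × ℤ →₀ ZMod 2) :=
  Finsupp.linearCombination (ZMod 2) fun g => Finsupp.single g.fst 1 + Finsupp.single g.snd 1

lemma gridBoundary_single (g : GridEdge) :
    gridBoundary (Finsupp.single g 1) = Finsupp.single g.fst 1 + Finsupp.single g.snd 1 := by
  simp [gridBoundary]

lemma gridBoundary_apply (P : GridEdge →₀ ZMod 2) (i j : ℤ) :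
    gridBoundary P (i, j) =
      P (horiz i j) + P (horiz (i - 1) j) + P (vert i j) + P (vert i (j - 1)) := by
  classical
  induction P using Finsupp.induction_linear with
  | zero => simp
  | add P Q hP hQ => rw [map_add, Finsupp.add_apply, hP, hQ]; simp only [Finsupp.add_apply]; ring
  | single g a =>
    cases g <;>
      simp [gridBoundary, Finsupp.single_apply, fst, snd, eq_sub_iff_add_eq]

/-- The mod 2 coboundary of a set of cells: the grid edges separating a cell of the set from a cell
outside it. -/
def cellCoboundary (φ : ℤ × ℤ → ZMod 2) (g : GridEdge) : ZMod 2 := φ g.upperCell + φ g.lowerCell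

lemma gridBoundary_eq_zero_of_eq_cellCoboundary {P : GridEdge →₀ ZMod 2} {φ : ℤ × ℤ → ZMod 2}
    (hP : ∀ g, P g = cellCoboundary φ g) : gridBoundary P = 0 := by
  ext ⟨i, j⟩
  simp only [gridBoundary_apply, hP, cellCoboundary, upperCell, lowerCell, Finsupp.zero_apply]
  linear_combination
    (φ (i, j) + φ (i, j - 1) + φ (i - 1, j) + φ (i - 1, j - 1)) * CharTwo.two_eq_zero (R := ZMod 2)

lemma exists_forall_le_eq_zero (P : GridEdge →₀ ZMod 2) :
    ∃ N, ∀ i j, j ≤ N → P (horiz i j) = 0 ∧ P (vert i j) = 0 := by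
  classical
  obtain ⟨N, hN⟩ := (P.support.image fun g => g.fst.2).bddBelow
  have bound (g : GridEdge) (hg : g.fst.2 ≤ N - 1) : P g = 0 := by
    by_contra hne
    have := hN (mem_coe.2 (mem_image_of_mem _ (Finsupp.mem_support_iff.2 hne)))
    omega
  exact ⟨N - 1, fun i j hj => ⟨bound (horiz i j) hj, bound (vert i j) hj⟩⟩

-- The value at a cell counts the horizontal edges of the cycle met by the downward ray from it.
theorem exists_cellCoboundary_eq {P : GridEdge →₀ ZMod 2} (hP : gridBoundary P = 0) :
    ∃ φ : ℤ × ℤ → ZMod 2, ∀ g, cellCoboundary φ g = P g := by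
  obtain ⟨N, hN⟩ := exists_forall_le_eq_zero P
  let φ : ℤ × ℤ → ZMod 2 := fun x => ∑ k ∈ Ioc N x.2, P (horiz x.1 k)
  have φ_low (i j : ℤ) (hj : j ≤ N) : φ (i, j) = 0 := by simp [φ, Ioc_eq_empty_of_le hj]
  have φ_horiz (i j : ℤ) : φ (i, j) = P (horiz i j) + φ (i, j - 1) := by
    by_cases hj : j ≤ N
    · rw [φ_low i j hj, φ_low i (j - 1) (by omega), (hN i j hj).1, add_zero]
    · have hIoc : Ioc N j = insert j (Ioc N (j - 1)) := by ext; simp; omega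
      simp only [φ]
      rw [hIoc, sum_insert (by simp)]
  have closed (i j : ℤ) :
      P (horiz i j) + P (horiz (i - 1) j) + P (vert i j) + P (vert i (j - 1)) = 0 := by
    rw [← gridBoundary_apply, hP, Finsupp.zero_apply]
  have φ_vert (i j : ℤ) : φ (i, j) + φ (i - 1, j) = P (vert i j) := by
    rcases le_total j N with hj | hj
    · rw [φ_low i j hj, φ_low _ j hj, (hN i j hj).2, add_zero]
    induction j, hj using Int.leInduction with
    | base => rw [φ_low i N le_rfl, φ_low _ N le_rfl, (hN i N le_rfl).2, add_zero]
    | succ j _ ih =>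
      rw [φ_horiz i, φ_horiz (i - 1), add_sub_cancel_right]
      have hclosed := closed i (j + 1)
      rw [add_sub_cancel_right] at hclosed
      linear_combination ih + hclosed - P (vert i (j + 1)) * CharTwo.two_eq_zero (R := ZMod 2)
  refine ⟨φ, fun g => ?_⟩
  cases g with
  | horiz i j =>
    simp only [cellCoboundary, upperCell, lowerCell, φ_horiz i j]
    linear_combination φ (i, j - 1) * CharTwo.two_eq_zero (R := ZMod 2)
  | vert i j => exact φ_vert i j

lemma exists_gridBoundary_eq_of_reachable {s : Set (ℤ × ℤ)} {x y : s}
    (hxy : (gridGraph.induce s).Reachable x y) :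
    ∃ P ∈ Finsupp.supported (ZMod 2) (ZMod 2) {g : GridEdge | g.fst ∈ s ∧ g.snd ∈ s},
      gridBoundary P = Finsupp.single x.1 1 + Finsupp.single y.1 1 := by
  obtain ⟨p⟩ := hxy
  induction p with
  | nil => exact ⟨0, Submodule.zero_mem _, by rw [map_zero, ZModModule.add_self]⟩
  | @cons x y z hadj _ ih =>
    obtain ⟨P, hP, hPz⟩ := ih
    obtain ⟨g, hg⟩ := gridGraph_adj.1 hadj
    have hsingle : gridBoundary (Finsupp.single g 1) =
        Finsupp.single x.1 1 + Finsupp.single y.1 1 := by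
      rcases Sym2.eq_iff.1 hg with ⟨hfst, hsnd⟩ | ⟨hfst, hsnd⟩ <;>
        rw [gridBoundary_single, hfst, hsnd]
      exacts [rfl, add_comm _ _]
    have hends : g.fst ∈ s ∧ g.snd ∈ s := by
      rcases Sym2.eq_iff.1 hg with ⟨hfst, hsnd⟩ | ⟨hfst, hsnd⟩ <;> rw [hfst, hsnd] <;> simp
    refine ⟨Finsupp.single g 1 + P, Submodule.add_mem _ (Finsupp.single_mem_supported _ _ hends) hP,
      ?_⟩
    rw [map_add, hPz, hsingle, ZModModule.add_add_add_cancel]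

end GridHomology

section CycleSpace

variable {V : Type*} [DecidableEq V] (G : SimpleGraph V) [Fintype G.edgeSet]

/-- The mod 2 boundary map of a graph, sending a set of edges to the set of vertices that lie on an
odd number of them. -/
def edgeBoundary : (G.edgeSet → ZMod 2) →ₗ[ZMod 2] (V → ZMod 2) :=
  Fintype.linearCombination (ZMod 2) fun e v => if v ∈ e.1 then 1 else 0

/-- The cycle space of a graph over `ZMod 2`: the edge sets in which every vertex has even
degree. -/
def cycleSpace : Submodule (ZMod 2) (G.edgeSet → ZMod 2) := LinearMap.ker (edgeBoundary G)

variable {G}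

lemma edgeBoundary_apply (z : G.edgeSet → ZMod 2) (v : V) :
    edgeBoundary G z v = ∑ e : G.edgeSet, if v ∈ e.1 then z e else 0 := by
  simp [edgeBoundary, Fintype.linearCombination_apply]

lemma edgeBoundary_single (e : G.edgeSet) (v : V) :
    edgeBoundary G (Pi.single e 1) v = if v ∈ e.1 then 1 else 0 := by
  simp [edgeBoundary, Fintype.linearCombination_apply_single]

lemma exists_other_edge_of_mem_cycleSpace {z : G.edgeSet → ZMod 2} (hz : z ∈ cycleSpace G)
    {e : G.edgeSet} (he : z e ≠ 0) {v : V} (hv : v ∈ e.1) :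
    ∃ w, ∃ h : G.Adj v w, s(v, w) ≠ e.1 ∧ z ⟨s(v, w), h⟩ ≠ 0 := by
  by_contra! hother
  refine he ?_
  have hsum : edgeBoundary G z v = 0 := congrFun (LinearMap.mem_ker.1 hz) v
  rw [edgeBoundary_apply, sum_eq_single e, if_pos hv] at hsum
  · exact hsum
  · rintro ⟨e', he'⟩ - hne
    refine ite_eq_right_iff.2 fun hve' => ?_
    obtain ⟨w, rfl⟩ := hve'
    exact hother w he' fun h => hne (Subtype.ext h)
  · simp

lemma four_le_card_support_of_mem_cycleSpace (hG : G.CliqueFree 3) {z : G.edgeSet → ZMod 2}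
    (hz : z ∈ cycleSpace G) (hne : z ≠ 0) : 4 ≤ #{e | z e ≠ 0} := by
  obtain ⟨⟨e, he⟩, hze⟩ := Function.ne_iff.1 hne
  induction e with | _ u v
  obtain ⟨w, huw, hwv, hzw⟩ := exists_other_edge_of_mem_cycleSpace hz hze (Sym2.mem_mk_left u v)
  obtain ⟨x, hvx, hxu, hzx⟩ := exists_other_edge_of_mem_cycleSpace hz hze (Sym2.mem_mk_right u v)
  obtain ⟨y, hwy, hyu, hzy⟩ := exists_other_edge_of_mem_cycleSpace hz hzw (Sym2.mem_mk_right u w)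
  have huv : u ≠ v := G.ne_of_adj he
  have hwu : w ≠ u := (G.ne_of_adj huw).symm
  have hwv' : w ≠ v := by rintro rfl; exact hwv rfl
  have hxu' : x ≠ u := by rintro rfl; exact hxu Sym2.eq_swap
  have hyu' : y ≠ u := by rintro rfl; exact hyu Sym2.eq_swap
  have hyv : y ≠ v := by
    rintro rfl
    exact hG {u, y, w} (SimpleGraph.is3Clique_triple_iff.2 ⟨he, huw, hwy.symm⟩)
  let edges : Finset G.edgeSet := {⟨s(u, v), he⟩, ⟨s(u, w), huw⟩, ⟨s(v, x), hvx⟩, ⟨s(w, y), hwy⟩}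
  have hcard : #edges = 4 := by
    rw [card_insert_of_notMem, card_insert_of_notMem, card_insert_of_notMem, card_singleton] <;>
      simp only [mem_insert, mem_singleton, Subtype.ext_iff, Sym2.eq_iff] <;> tauto
  rw [← hcard]
  refine card_le_card fun e he => ?_
  simp only [edges, mem_insert, mem_singleton] at he
  rcases he with rfl | rfl | rfl | rfl <;> simpa

lemma card_edgeSet_le_finrank_cycleSpace_add_card [Fintype V] :
    Fintype.card G.edgeSet ≤ Module.finrank (ZMod 2) (cycleSpace G) + Fintype.card V := by
  have hrank := (edgeBoundary G).finrank_range_add_finrank_ker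
  have hrange := (LinearMap.range (edgeBoundary G)).finrank_le
  rw [Module.finrank_fintype_fun_eq_card] at hrank hrange
  rw [cycleSpace]
  omega

end CycleSpace

lemma finrank_span_mul_le_card_mul {K ι E : Type*} [Field K] [DecidableEq K] [Fintype E]
    (F : Finset ι) (b : ι → E → K) {m n : ℕ}
    (hsupport : ∀ i ∈ F, b i ≠ 0 → m ≤ #{e | b i e ≠ 0})
    (hoverlap : ∀ e, #{i ∈ F | b i e ≠ 0} ≤ n) :
    Module.finrank K (Submodule.span K (b '' F)) * m ≤ Fintype.card E * n := by
  classical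
  have hspan : Submodule.span K (b '' F) =
      Submodule.span K (({i ∈ F | b i ≠ 0}.image b : Finset (E → K)) : Set (E → K)) := by
    rw [← Submodule.span_sdiff_singleton_zero]
    congr 1
    ext
    simp only [Set.mem_sdiff, Set.mem_image, mem_coe, Set.mem_singleton_iff, mem_image, mem_filter]
    grind
  have hrank : Module.finrank K (Submodule.span K (b '' F)) ≤ #{i ∈ F | b i ≠ 0} := by
    rw [hspan]
    exact (finrank_span_finset_le_card _).trans card_image_le
  refine (Nat.mul_le_mul_right m hrank).trans (card_mul_le_card_mul (fun i e => b i e ≠ 0) ?_ ?_)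
  · intro i hi
    exact hsupport i (mem_filter.1 hi).1 (mem_filter.1 hi).2
  · intro e _
    exact (card_le_card (filter_subset_filter _ (filter_subset _ _))).trans (hoverlap e)

/-- A model of `G` as a minor of `H`: disjoint finite connected branch sets, one for each vertex of
`G`, such that the branch sets of adjacent vertices are joined by an edge of `H`. -/
structure MinorModel {V X : Type*} (G : SimpleGraph V) (H : SimpleGraph X) where
  branch : V → Set X
  finite_branch : ∀ v, (branch v).Finite
  connected_branch : ∀ v, (H.induce (branch v)).Connected
  disjoint_branch : Pairwise fun u v => Disjoint (branch u) (branch v)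
  exists_adj : ∀ ⦃u v⦄, G.Adj u v → ∃ x ∈ branch u, ∃ y ∈ branch v, H.Adj x y

namespace MinorModel

variable {V X : Type*} {G : SimpleGraph V}

lemma eq_of_mem_branch {H : SimpleGraph X} (M : MinorModel G H) {u v : V} {x : X}
    (hu : x ∈ M.branch u) (hv : x ∈ M.branch v) : u = v := by
  by_contra hne
  exact Set.disjoint_left.1 (M.disjoint_branch hne) hu hv

variable (M : MinorModel G gridGraph)

lemma exists_crossing (e : G.edgeSet) :
    ∃ g : GridEdge, ∃ u v,
      G.Adj u v ∧ e.1 = s(u, v) ∧ g.fst ∈ M.branch u ∧ g.snd ∈ M.branch v := by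
  obtain ⟨⟨u, v⟩, he : G.Adj u v⟩ := e
  obtain ⟨x, hx, y, hy, hxy⟩ := M.exists_adj he
  obtain ⟨g, hg⟩ := gridGraph_adj.1 hxy
  rcases Sym2.eq_iff.1 hg with ⟨rfl, rfl⟩ | ⟨rfl, rfl⟩
  exacts [⟨g, u, v, he, rfl, hx, hy⟩, ⟨g, v, u, he.symm, Sym2.eq_swap, hy, hx⟩]

/-- A chosen grid edge joining the branch sets of the two ends of an edge of `G`. -/
noncomputable def crossing (e : G.edgeSet) : GridEdge := (M.exists_crossing e).choose

lemma crossing_spec (e : G.edgeSet) :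
    ∃ u v, G.Adj u v ∧ e.1 = s(u, v) ∧
      (M.crossing e).fst ∈ M.branch u ∧ (M.crossing e).snd ∈ M.branch v :=
  (M.exists_crossing e).choose_spec

lemma crossing_injective : Function.Injective M.crossing := by
  intro e e' h
  obtain ⟨u, v, -, he, hu, hv⟩ := M.crossing_spec e
  obtain ⟨u', v', -, he', hu', hv'⟩ := M.crossing_spec e'
  rw [h] at hu hv
  rw [Subtype.ext_iff, he, he', M.eq_of_mem_branch hu hu', M.eq_of_mem_branch hv hv']

/-- The grid edges inside the branch sets. -/
def innerEdges : Set GridEdge := {g | ∃ v, g.fst ∈ M.branch v ∧ g.snd ∈ M.branch v}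

/-- The grid edges that bound the faces of the model. -/
def walls : Set GridEdge := M.innerEdges ∪ Set.range M.crossing

lemma crossing_notMem_innerEdges (e : G.edgeSet) : M.crossing e ∉ M.innerEdges := by
  rintro ⟨w, hfst, hsnd⟩
  obtain ⟨u, v, huv, -, hu, hv⟩ := M.crossing_spec e
  refine huv.ne ?_
  rw [M.eq_of_mem_branch hu hfst, M.eq_of_mem_branch hv hsnd]

lemma finite_walls [Finite V] : M.walls.Finite := by
  refine Set.Finite.union ?_ (Set.finite_range _)
  have hprod : (⋃ v, M.branch v ×ˢ M.branch v).Finite :=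
    Set.finite_iUnion fun v => (M.finite_branch v).prod (M.finite_branch v)
  refine (hprod.preimage (f := fun g : GridEdge => (g.fst, g.snd)) ?_).subset ?_
  · intro g _ g' _ h
    exact GridEdge.eq_of_fst_eq_of_snd_eq (Prod.ext_iff.1 h).1 (Prod.ext_iff.1 h).2
  · rintro g ⟨v, hv⟩
    exact Set.mem_iUnion.2 ⟨v, hv⟩

/-- The mod 2 reduction of grid edges to edges of `G`, keeping only the chosen crossings. -/
noncomputable def restrictCrossing : (GridEdge →₀ ZMod 2) →ₗ[ZMod 2] (G.edgeSet → ZMod 2) :=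
  LinearMap.funLeft (ZMod 2) (ZMod 2) M.crossing ∘ₗ Finsupp.lcoeFun

@[simp]
lemma restrictCrossing_apply (P : GridEdge →₀ ZMod 2) (e : G.edgeSet) :
    M.restrictCrossing P e = P (M.crossing e) := rfl

lemma restrictCrossing_eq_zero {P : GridEdge →₀ ZMod 2}
    (hP : P ∈ Finsupp.supported (ZMod 2) (ZMod 2) M.innerEdges) : M.restrictCrossing P = 0 :=
  funext fun e => (Finsupp.mem_supported' _ P).1 hP _ (M.crossing_notMem_innerEdges e)

open Classical in
/-- The mod 2 map on vertices contracting each branch set to the vertex of `G` it represents. -/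
noncomputable def contract : (ℤ × ℤ →₀ ZMod 2) →ₗ[ZMod 2] (V → ZMod 2) :=
  Finsupp.linearCombination (ZMod 2) fun x v => if x ∈ M.branch v then 1 else 0

/-- A chosen vertex of each branch set. -/
noncomputable def root (v : V) : ℤ × ℤ := (M.connected_branch v).nonempty.some.1

lemma exists_gridBoundary_eq_root {v : V} {x : ℤ × ℤ} (hx : x ∈ M.branch v) :
    ∃ P ∈ Finsupp.supported (ZMod 2) (ZMod 2) M.innerEdges,
      gridBoundary P = Finsupp.single x 1 + Finsupp.single (M.root v) 1 := by
  obtain ⟨P, hP, hPx⟩ := exists_gridBoundary_eq_of_reachable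
    ((M.connected_branch v).preconnected ⟨x, hx⟩ (M.connected_branch v).nonempty.some)
  have hinner : {g : GridEdge | g.fst ∈ M.branch v ∧ g.snd ∈ M.branch v} ⊆ M.innerEdges :=
    fun g hg => ⟨v, hg⟩
  exact ⟨P, Finsupp.supported_mono hinner hP, hPx⟩

/-- The faces of the model: the classes of grid cells that can be joined without crossing a wall. -/
def Face : Type :=
  Quot fun c c' : ℤ × ℤ => ∃ g : GridEdge, g ∉ M.walls ∧ g.upperCell = c ∧ g.lowerCell = c'

/-- The face containing a grid cell. -/
def faceOf (c : ℤ × ℤ) : M.Face := Quot.mk _ c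

lemma faceOf_upperCell_eq {g : GridEdge} (hg : g ∉ M.walls) :
    M.faceOf g.upperCell = M.faceOf g.lowerCell := Quot.sound ⟨g, hg, rfl, rfl⟩

lemma exists_eq_comp_faceOf {φ : ℤ × ℤ → ZMod 2}
    (hφ : ∀ g ∉ M.walls, cellCoboundary φ g = 0) : ∃ ψ : M.Face → ZMod 2, φ = ψ ∘ M.faceOf := by
  refine ⟨Quot.lift φ ?_, rfl⟩
  rintro _ _ ⟨g, hg, rfl, rfl⟩
  exact CharTwo.add_eq_zero.1 (hφ g hg)

open Classical in
/-- The set of edges of `G` on the boundary of a face; an edge with the same face on both sides does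
not count. -/
noncomputable def faceBoundary (f : M.Face) (e : G.edgeSet) : ZMod 2 :=
  cellCoboundary (fun c => if M.faceOf c = f then 1 else 0) (M.crossing e)

lemma card_filter_faceBoundary_le (F : Finset M.Face) (e : G.edgeSet) :
    #{f ∈ F | M.faceBoundary f e ≠ 0} ≤ 2 := by
  classical
  let sides : Finset M.Face :=
    {M.faceOf (M.crossing e).upperCell, M.faceOf (M.crossing e).lowerCell}
  refine (card_le_card (t := sides) fun f hf => ?_).trans card_le_two
  contrapose! hf
  simp_all [sides, faceBoundary, cellCoboundary, eq_comm]

variable [DecidableEq V]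

lemma restrictCrossing_single (e : G.edgeSet) :
    M.restrictCrossing (Finsupp.single (M.crossing e) 1) = Pi.single e 1 := by
  classical
  ext e'
  simp [Finsupp.single_apply, Pi.single_apply, M.crossing_injective.eq_iff, eq_comm]

variable [Fintype G.edgeSet]

lemma edgeBoundary_restrictCrossing {P : GridEdge →₀ ZMod 2}
    (hP : P ∈ Finsupp.supported (ZMod 2) (ZMod 2) M.walls) :
    edgeBoundary G (M.restrictCrossing P) = M.contract (gridBoundary P) := by
  classical
  rw [Finsupp.supported_eq_span_single] at hP
  induction hP using Submodule.span_induction with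
  | zero => simp
  | add P Q _ _ hP hQ => simp only [map_add, hP, hQ]
  | smul a P _ hP => simp only [map_smul, hP]
  | mem P hP =>
    obtain ⟨g, hg, rfl⟩ := hP
    ext w
    rw [gridBoundary_single, map_add, contract]
    simp only [Finsupp.linearCombination_single, one_smul, Pi.add_apply]
    rcases hg with ⟨v, hfst, hsnd⟩ | ⟨e, rfl⟩
    · rw [M.restrictCrossing_eq_zero (Finsupp.single_mem_supported _ _ ⟨v, hfst, hsnd⟩), map_zero]
      have hiff : g.fst ∈ M.branch w ↔ g.snd ∈ M.branch w :=
        ⟨fun h => M.eq_of_mem_branch hfst h ▸ hsnd, fun h => M.eq_of_mem_branch hsnd h ▸ hfst⟩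
      simp only [hiff, CharTwo.add_self_eq_zero, Pi.zero_apply]
    · obtain ⟨u, v, huv, he, hu, hv⟩ := M.crossing_spec e
      have hne : u ≠ v := huv.ne
      have hu_iff : (M.crossing e).fst ∈ M.branch w ↔ w = u :=
        ⟨fun h => M.eq_of_mem_branch h hu, fun h => h ▸ hu⟩
      have hv_iff : (M.crossing e).snd ∈ M.branch w ↔ w = v :=
        ⟨fun h => M.eq_of_mem_branch h hv, fun h => h ▸ hv⟩
      simp only [M.restrictCrossing_single, edgeBoundary_single, he, Sym2.mem_iff, hu_iff, hv_iff]
      grind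

lemma exists_edgeLift [Fintype V] (e : G.edgeSet) :
    ∃ P ∈ Finsupp.supported (ZMod 2) (ZMod 2) M.walls, M.restrictCrossing P = Pi.single e 1 ∧
      gridBoundary P =
        ∑ v, edgeBoundary G (Pi.single e 1) v • Finsupp.single (M.root v) (1 : ZMod 2) := by
  obtain ⟨u, v, huv, he, hu, hv⟩ := M.crossing_spec e
  obtain ⟨P, hP, hPu⟩ := M.exists_gridBoundary_eq_root hu
  obtain ⟨Q, hQ, hQv⟩ := M.exists_gridBoundary_eq_root hv
  have hinner : M.innerEdges ⊆ M.walls := Set.subset_union_left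
  have hcrossing : M.crossing e ∈ M.walls := Or.inr ⟨e, rfl⟩
  refine ⟨P + Finsupp.single (M.crossing e) 1 + Q, ?_, ?_, ?_⟩
  · exact add_mem (add_mem (Finsupp.supported_mono hinner hP)
      (Finsupp.single_mem_supported _ _ hcrossing)) (Finsupp.supported_mono hinner hQ)
  · rw [map_add, map_add, M.restrictCrossing_eq_zero hP, M.restrictCrossing_eq_zero hQ,
      M.restrictCrossing_single, zero_add, add_zero]
  · have hends : ∑ w, edgeBoundary G (Pi.single e 1) w • Finsupp.single (M.root w) (1 : ZMod 2) =
        Finsupp.single (M.root u) 1 + Finsupp.single (M.root v) 1 := by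
      rw [← sum_pair (f := fun w => Finsupp.single (M.root w) (1 : ZMod 2)) huv.ne]
      simp [edgeBoundary_single, he, ← sum_filter, filter_or, filter_eq']
    rw [hends, map_add, map_add, gridBoundary_single, hPu, hQv, add_comm (Finsupp.single _ _),
      ZModModule.add_add_add_cancel, ZModModule.add_add_add_cancel]

-- Each edge is lifted to its crossing together with paths to the roots inside the branch sets, so
-- that the boundary of the lift of `z` is the boundary of `z` moved to the roots.
lemma exists_cycleLift [Finite V] {z : G.edgeSet → ZMod 2} (hz : z ∈ cycleSpace G) :
    ∃ P ∈ Finsupp.supported (ZMod 2) (ZMod 2) M.walls,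
      M.restrictCrossing P = z ∧ gridBoundary P = 0 := by
  have := Fintype.ofFinite V
  choose lift hwalls hrestrict hboundary using M.exists_edgeLift
  refine ⟨Fintype.linearCombination (ZMod 2) lift z, ?_, ?_, ?_⟩
  · exact sum_mem fun e _ => Submodule.smul_mem _ _ (hwalls e)
  · simp only [Fintype.linearCombination_apply, map_sum, map_smul, hrestrict]
    exact (pi_eq_sum_univ' z).symm
  · have hz_single : ∑ e, z e • (Pi.single e 1 : G.edgeSet → ZMod 2) = z := (pi_eq_sum_univ' z).symm
    calc gridBoundary (Fintype.linearCombination (ZMod 2) lift z)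
        = ∑ v, edgeBoundary G (∑ e, z e • Pi.single e 1) v • Finsupp.single (M.root v) 1 := by
          simp only [Fintype.linearCombination_apply, map_sum, map_smul, hboundary, smul_sum,
            Finset.sum_apply, Pi.smul_apply, sum_smul, smul_assoc]
          exact sum_comm
      _ = 0 := by
          rw [hz_single, LinearMap.mem_ker.1 hz]
          simp

lemma faceBoundary_mem_cycleSpace [Finite V] (f : M.Face) :
    M.faceBoundary f ∈ cycleSpace G := by
  classical
  let φ : ℤ × ℤ → ZMod 2 := fun c => if M.faceOf c = f then 1 else 0
  have hwalls (g : GridEdge) (hg : cellCoboundary φ g ≠ 0) : g ∈ M.walls := by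
    by_contra hmem
    simp [φ, cellCoboundary, M.faceOf_upperCell_eq hmem, CharTwo.add_self_eq_zero] at hg
  let P : GridEdge →₀ ZMod 2 := Finsupp.ofSupportFinite _ (M.finite_walls.subset hwalls)
  have hP : P ∈ Finsupp.supported (ZMod 2) (ZMod 2) M.walls :=
    (Finsupp.mem_supported' _ P).2 fun g hg => not_not.1 (mt (hwalls g) hg)
  have hP_eq : M.restrictCrossing P = M.faceBoundary f := rfl
  rw [cycleSpace, LinearMap.mem_ker, ← hP_eq, M.edgeBoundary_restrictCrossing hP,
    gridBoundary_eq_zero_of_eq_cellCoboundary (φ := φ) fun _ => rfl, map_zero]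

open Classical in
/-- The faces on either side of some crossing. -/
noncomputable def incidentFaces : Finset M.Face :=
  univ.biUnion fun e : G.edgeSet =>
    {M.faceOf (M.crossing e).upperCell, M.faceOf (M.crossing e).lowerCell}

lemma cycleSpace_le_span_faceBoundary [Finite V] :
    cycleSpace G ≤ Submodule.span (ZMod 2) (M.faceBoundary '' M.incidentFaces) := by
  classical
  intro z hz
  obtain ⟨P, hP, rfl, hclosed⟩ := M.exists_cycleLift hz
  obtain ⟨φ, hφ⟩ := exists_cellCoboundary_eq hclosed
  obtain ⟨ψ, rfl⟩ := M.exists_eq_comp_faceOf fun g hg => by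
    rw [hφ, (Finsupp.mem_supported' _ P).1 hP g hg]
  have hsum : M.restrictCrossing P = ∑ f ∈ M.incidentFaces, ψ f • M.faceBoundary f := by
    ext e
    have hupper : M.faceOf (M.crossing e).upperCell ∈ M.incidentFaces :=
      mem_biUnion.2 ⟨e, mem_univ e, mem_insert_self _ _⟩
    have hlower : M.faceOf (M.crossing e).lowerCell ∈ M.incidentFaces :=
      mem_biUnion.2 ⟨e, mem_univ e, mem_insert_of_mem (mem_singleton_self _)⟩
    simp [← hφ, faceBoundary, cellCoboundary, mul_add, sum_add_distrib, hupper, hlower]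
  rw [hsum]
  exact sum_mem fun f hf =>
    Submodule.smul_mem _ _ (Submodule.subset_span (Set.mem_image_of_mem _ hf))

end MinorModel

lemma card_edgeSet_le_of_minorModel_gridGraph {V : Type*} [Fintype V] {G : SimpleGraph V}
    [Fintype G.edgeSet] (M : MinorModel G gridGraph) (hG : G.CliqueFree 3) :
    Fintype.card G.edgeSet ≤ 2 * Fintype.card V := by
  classical
  have hdim := card_edgeSet_le_finrank_cycleSpace_add_card (G := G)
  have hspan := Submodule.finrank_mono M.cycleSpace_le_span_faceBoundary
  have hcount := finrank_span_mul_le_card_mul M.incidentFaces M.faceBoundary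
    (fun f _ hf => four_le_card_support_of_mem_cycleSpace hG (M.faceBoundary_mem_cycleSpace f) hf)
    (M.card_filter_faceBoundary_le _)
  omega

section Connectors

variable {V X : Type*} {H : SimpleGraph X}

lemma connected_induce_insert_of_adj {s : Set X} {x y : X} (hs : (H.induce s).Connected)
    (hx : x ∈ s) (hxy : H.Adj x y) : (H.induce (insert y s)).Connected := by
  rw [show insert y s = s ∪ {x, y} by grind]
  exact H.induce_union_connected hs.preconnected
    (H.induce_pair_connected_of_adj hxy).preconnected ⟨x, hx, by simp⟩

lemma connected_induce_of_forall_exists_connected {s : Set X} {x : X} (hx : x ∈ s)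
    (h : ∀ y ∈ s, ∃ t ⊆ s, x ∈ t ∧ y ∈ t ∧ (H.induce t).Connected) : (H.induce s).Connected := by
  refine H.induce_connected_of_patches x hx fun {y} hy => ?_
  obtain ⟨t, hts, hxt, hyt, ht⟩ := h y hy
  exact ⟨t, hts, hxt, hyt, ht.preconnected _ _⟩

lemma exists_connected_extension_of_walk {d t : Set X} {x y : d} (p : (H.induce d).Walk x y)
    (hy : y.1 ∈ t) {s : Set X} (hx : x.1 ∈ s) (hs : (H.induce s).Connected) (hst : Disjoint s t) :
    ∃ q ⊆ d \ t, (H.induce (s ∪ q)).Connected ∧ ∃ a ∈ s ∪ q, ∃ b ∈ t, H.Adj a b := by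
  induction p generalizing s with
  | nil => exact absurd hy (Set.disjoint_left.1 hst hx)
  | @cons x x' y hadj _ ih =>
    by_cases hx' : x'.1 ∈ t
    · exact ⟨∅, by simp, by rwa [Set.union_empty], x, Or.inl hx, x', hx', hadj⟩
    · obtain ⟨q, hq, hconn, hreach⟩ := ih hy (Set.mem_insert x'.1 s)
        (connected_induce_insert_of_adj hs hx hadj) (Set.disjoint_insert_left.2 ⟨hx', hst⟩)
      rw [Set.insert_union, ← Set.union_insert] at hconn hreach
      exact ⟨insert x'.1 q, Set.insert_subset ⟨x'.2, hx'⟩ hq, hconn, hreach⟩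

lemma exists_connected_extension {s t d : Set X} (hs : (H.induce s).Connected)
    (hd : (H.induce d).Preconnected) (hst : Disjoint s t) (hds : (d ∩ s).Nonempty)
    (hdt : (d ∩ t).Nonempty) :
    ∃ q ⊆ d \ t, (H.induce (s ∪ q)).Connected ∧ ∃ a ∈ s ∪ q, ∃ b ∈ t, H.Adj a b := by
  obtain ⟨x, hxd, hxs⟩ := hds
  obtain ⟨y, hyd, hyt⟩ := hdt
  obtain ⟨p⟩ := hd ⟨x, hxd⟩ ⟨y, hyd⟩
  exact exists_connected_extension_of_walk p hyt hxs hs hst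

/-- Finite connected sets `core u` and connectors `link u v` arranged in a graph `H` in the pattern
of `G`: each link joins the cores of its two ends, and apart from that cores and links are
disjoint. -/
structure ConnectorModel (G : SimpleGraph V) (H : SimpleGraph X) where
  core : V → Set X
  link : V → V → Set X
  finite_core : ∀ u, (core u).Finite
  finite_link : ∀ u v, (link u v).Finite
  connected_core : ∀ u, (H.induce (core u)).Connected
  connected_link : ∀ ⦃u v⦄, G.Adj u v → (H.induce (link u v)).Connected
  link_inter_core_left : ∀ ⦃u v⦄, G.Adj u v → (link u v ∩ core u).Nonempty
  link_inter_core_right : ∀ ⦃u v⦄, G.Adj u v → (link u v ∩ core v).Nonempty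
  disjoint_core : Pairwise fun u v => Disjoint (core u) (core v)
  disjoint_link_core : ∀ ⦃u v w⦄, w ≠ u → w ≠ v → Disjoint (link u v) (core w)
  disjoint_link : ∀ ⦃u v u' v'⦄, s(u, v) ≠ s(u', v') → Disjoint (link u v) (link u' v')

variable {G : SimpleGraph V}

namespace ConnectorModel

variable (C : ConnectorModel G H)

lemma exists_arm (u v : V) :
    ∃ q ⊆ C.link u v \ C.core v, G.Adj u v → (H.induce (C.core u ∪ q)).Connected ∧
      ∃ a ∈ C.core u ∪ q, ∃ b ∈ C.core v, H.Adj a b := by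
  by_cases huv : G.Adj u v
  · obtain ⟨q, hq, h⟩ := exists_connected_extension (C.connected_core u)
      (C.connected_link huv).preconnected (C.disjoint_core huv.ne) (C.link_inter_core_left huv)
      (C.link_inter_core_right huv)
    exact ⟨q, hq, fun _ => h⟩
  · exact ⟨∅, Set.empty_subset _, fun h => absurd h huv⟩

/-- A part of `link u v` that attaches to `core u` and reaches a neighbour of `core v`. -/
noncomputable def arm (u v : V) : Set X := (C.exists_arm u v).choose

lemma arm_subset (u v : V) : C.arm u v ⊆ C.link u v \ C.core v := (C.exists_arm u v).choose_spec.1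

lemma connected_core_union_arm {u v : V} (huv : G.Adj u v) :
    (H.induce (C.core u ∪ C.arm u v)).Connected := ((C.exists_arm u v).choose_spec.2 huv).1

lemma exists_adj_core {u v : V} (huv : G.Adj u v) :
    ∃ a ∈ C.core u ∪ C.arm u v, ∃ b ∈ C.core v, H.Adj a b :=
  ((C.exists_arm u v).choose_spec.2 huv).2

lemma disjoint_core_arm {u v w : V} (huv : u ≠ v) : Disjoint (C.core u) (C.arm v w) := by
  refine Set.disjoint_left.2 fun x hx hxw => ?_
  obtain ⟨hlink, hcore⟩ := C.arm_subset v w hxw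
  have huw : u ≠ w := by rintro rfl; exact hcore hx
  exact Set.disjoint_left.1 (C.disjoint_link_core huv huw) hlink hx

variable [LinearOrder V]

/-- The core of `u` together with the arms towards its larger neighbours, so that each link is used
at only one of its ends. -/
def extendedCore (u : V) : Set X := C.core u ∪ {x | ∃ v, u < v ∧ G.Adj u v ∧ x ∈ C.arm u v}

lemma core_union_arm_subset {u v : V} (hlt : u < v) (huv : G.Adj u v) :
    C.core u ∪ C.arm u v ⊆ C.extendedCore u :=
  Set.union_subset_union_right _ fun _ hx => ⟨v, hlt, huv, hx⟩

lemma connected_extendedCore (u : V) : (H.induce (C.extendedCore u)).Connected := by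
  obtain ⟨x, hx⟩ := (C.connected_core u).nonempty
  refine connected_induce_of_forall_exists_connected (Or.inl hx) fun y hy => ?_
  rcases hy with hy | ⟨v, hlt, huv, hy⟩
  · exact ⟨C.core u, Set.subset_union_left, hx, hy, C.connected_core u⟩
  · exact ⟨C.core u ∪ C.arm u v, C.core_union_arm_subset hlt huv, Or.inl hx, Or.inr hy,
      C.connected_core_union_arm huv⟩

lemma disjoint_extendedCore :
    Pairwise fun u v => Disjoint (C.extendedCore u) (C.extendedCore v) := by
  intro u v huv
  refine Set.disjoint_left.2 ?_
  rintro x (hx | ⟨w, huw, -, hx⟩) (hx' | ⟨w', hvw', -, hx'⟩)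
  · exact Set.disjoint_left.1 (C.disjoint_core huv) hx hx'
  · exact Set.disjoint_left.1 (C.disjoint_core_arm huv) hx hx'
  · exact Set.disjoint_left.1 (C.disjoint_core_arm huv.symm) hx' hx
  · have hne : s(u, w) ≠ s(v, w') := by
      rw [Ne, Sym2.eq_iff]
      rintro (⟨rfl, -⟩ | ⟨rfl, rfl⟩)
      exacts [huv rfl, huw.asymm hvw']
    exact Set.disjoint_left.1 (C.disjoint_link hne) (C.arm_subset _ _ hx).1
      (C.arm_subset _ _ hx').1

lemma exists_adj_extendedCore {u v : V} (huv : G.Adj u v) :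
    ∃ a ∈ C.extendedCore u, ∃ b ∈ C.extendedCore v, H.Adj a b := by
  wlog hlt : u < v generalizing u v
  · obtain ⟨a, ha, b, hb, hab⟩ := this huv.symm (huv.ne.lt_or_gt.resolve_left hlt)
    exact ⟨b, hb, a, ha, hab.symm⟩
  obtain ⟨a, ha, b, hb, hab⟩ := C.exists_adj_core huv
  exact ⟨a, C.core_union_arm_subset hlt huv ha, b, Or.inl hb, hab⟩

lemma finite_extendedCore [Finite V] (u : V) : (C.extendedCore u).Finite := by
  refine (C.finite_core u).union ((Set.finite_iUnion (C.finite_link u)).subset ?_)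
  rintro x ⟨v, -, -, hx⟩
  exact Set.mem_iUnion.2 ⟨v, (C.arm_subset u v hx).1⟩

/-- The minor model obtained from a connector model by absorbing each link into the core of its
smaller end. -/
def toMinorModel [Finite V] : MinorModel G H where
  branch := C.extendedCore
  finite_branch := C.finite_extendedCore
  connected_branch := C.connected_extendedCore
  disjoint_branch := C.disjoint_extendedCore
  exists_adj _ _ := C.exists_adj_extendedCore

end ConnectorModel

end Connectors

section GridCover

open scoped Pointwise

/-- The integer point obtained by rounding down both coordinates. -/
noncomputable def floorPoint (p : ℝ × ℝ) : ℤ × ℤ := (⌊p.1⌋, ⌊p.2⌋)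

/-- The four corners of the unit square of the grid that contains `p`. -/
noncomputable def corners (p : ℝ × ℝ) : Set (ℤ × ℤ) := Set.Icc (floorPoint p) (floorPoint p + 1)

/-- The discrete approximation of a plane set by the corners of the unit squares meeting it. -/
noncomputable def gridCover (C : Set (ℝ × ℝ)) : Set (ℤ × ℤ) := ⋃ p ∈ C, corners p

lemma floorPoint_mono : Monotone floorPoint := fun _ _ h =>
  ⟨Int.floor_mono h.1, Int.floor_mono h.2⟩

lemma floorPoint_mem_corners (p : ℝ × ℝ) : floorPoint p ∈ corners p :=
  ⟨le_rfl, by simp⟩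

lemma corners_subset_gridCover {C : Set (ℝ × ℝ)} {p : ℝ × ℝ} (hp : p ∈ C) :
    corners p ⊆ gridCover C := Set.subset_biUnion_of_mem hp

lemma gridCover_inter_nonempty {C D : Set (ℝ × ℝ)} (h : (C ∩ D).Nonempty) :
    (gridCover C ∩ gridCover D).Nonempty := by
  obtain ⟨p, hC, hD⟩ := h
  exact ⟨floorPoint p, corners_subset_gridCover hC (floorPoint_mem_corners p),
    corners_subset_gridCover hD (floorPoint_mem_corners p)⟩

lemma dist_le_two_of_corners_inter {p q : ℝ × ℝ} (h : (corners p ∩ corners q).Nonempty) :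
    dist p q ≤ 2 := by
  have close {a b : ℝ} {n : ℤ} (ha : ⌊a⌋ ≤ n) (ha' : n ≤ ⌊a⌋ + 1) (hb : ⌊b⌋ ≤ n)
      (hb' : n ≤ ⌊b⌋ + 1) : dist a b ≤ 2 := by
    have := Int.floor_le a
    have := Int.lt_floor_add_one a
    have := Int.floor_le b
    have := Int.lt_floor_add_one b
    rify at ha ha' hb hb'
    rw [Real.dist_eq, abs_le]
    constructor <;> linarith
  obtain ⟨z, hp, hq⟩ := h
  exact max_le (close hp.1.1 hp.2.1 hq.1.1 hq.2.1) (close hp.1.2 hp.2.2 hq.1.2 hq.2.2)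

lemma eventually_disjoint_gridCover_smul {C D : Set (ℝ × ℝ)} (hC : IsCompact C) (hD : IsCompact D)
    (hCD : Disjoint C D) :
    ∀ᶠ R : ℝ in Filter.atTop, Disjoint (gridCover (R • C)) (gridCover (R • D)) := by
  obtain ⟨r, hr, hdist⟩ := Metric.exists_pos_forall_lt_edist hC hD.isClosed hCD
  filter_upwards [Filter.eventually_gt_atTop 0, Filter.eventually_ge_atTop (2 / (r : ℝ))]
    with R hR hRr
  refine Set.disjoint_left.2 fun z hzC hzD => ?_
  simp only [gridCover, Set.mem_iUnion] at hzC hzD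
  obtain ⟨_, ⟨p, hp, rfl⟩, hzp⟩ := hzC
  obtain ⟨_, ⟨q, hq, rfl⟩, hzq⟩ := hzD
  have hle : R * dist p q ≤ 2 := by
    have := dist_le_two_of_corners_inter ⟨z, hzp, hzq⟩
    rwa [dist_smul₀, Real.norm_of_nonneg hR.le] at this
  have hlt : r < dist p q := by
    have := hdist p hp q hq
    rwa [edist_dist, ENNReal.lt_ofReal_iff_toReal_lt ENNReal.coe_ne_top, ENNReal.coe_toReal] at this
  have hr' : (0 : ℝ) < r := hr
  have : 2 ≤ R * r := (div_le_iff₀ hr').1 hRr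
  nlinarith

lemma corners_inter_nonempty_of_dist_lt {p q : ℝ × ℝ} (h : dist p q < 1) :
    (corners p ∩ corners q).Nonempty := by
  have floor_le {a b : ℝ} (hab : dist a b < 1) : ⌊a⌋ ≤ ⌊b⌋ + 1 := by
    rw [Real.dist_eq] at hab
    rw [← Int.floor_add_one]
    exact Int.floor_mono (by linarith [le_abs_self (a - b)])
  have floorPoint_le {p q : ℝ × ℝ} (hpq : dist p q < 1) : floorPoint p ≤ floorPoint q + 1 :=
    ⟨floor_le ((le_max_left _ _).trans_lt hpq), floor_le ((le_max_right _ _).trans_lt hpq)⟩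
  have hself (p : ℝ × ℝ) := (floorPoint_mem_corners p).2
  exact ⟨floorPoint p ⊔ floorPoint q,
    ⟨le_sup_left, sup_le (hself p) (floorPoint_le (dist_comm p q ▸ h))⟩,
    ⟨le_sup_right, sup_le (floorPoint_le h) (hself q)⟩⟩

lemma connected_corners (p : ℝ × ℝ) : (gridGraph.induce (corners p)).Connected := by
  obtain ⟨i, j, hp⟩ : ∃ i j, floorPoint p = (i, j) := ⟨_, _, rfl⟩
  have hcorners : corners p =
      insert (i + 1, j + 1) (insert (i, j + 1) {(i, j), (i + 1, j)}) := by
    ext ⟨a, b⟩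
    simp only [corners, hp, Set.mem_Icc, Prod.le_def, Prod.fst_add, Prod.snd_add,
      Prod.fst_one, Prod.snd_one, Set.mem_insert_iff, Set.mem_singleton_iff, Prod.mk.injEq]
    omega
  have hbottom : gridGraph.Adj (i, j) (i + 1, j) := gridGraph_adj.2 ⟨.horiz i j, rfl⟩
  have hleft : gridGraph.Adj (i, j) (i, j + 1) := gridGraph_adj.2 ⟨.vert i j, rfl⟩
  have htop : gridGraph.Adj (i, j + 1) (i + 1, j + 1) := gridGraph_adj.2 ⟨.horiz i (j + 1), rfl⟩
  rw [hcorners]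
  refine connected_induce_insert_of_adj ?_ (Set.mem_insert _ _) htop
  refine connected_induce_insert_of_adj ?_ (Set.mem_insert _ _) hleft
  exact gridGraph.induce_pair_connected_of_adj hbottom

lemma connected_gridCover {C : Set (ℝ × ℝ)} (hC : IsConnected C) :
    (gridGraph.induce (gridCover C)).Connected := by
  obtain ⟨⟨p, hp⟩, hC⟩ := hC
  refine connected_induce_of_forall_exists_connected
    (corners_subset_gridCover hp (floorPoint_mem_corners p)) fun z hz => ?_
  simp only [gridCover, Set.mem_iUnion] at hz
  obtain ⟨q, hq, hzq⟩ := hz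
  let Linked (p q : ℝ × ℝ) : Prop :=
    ∃ t ⊆ gridCover C, corners p ∪ corners q ⊆ t ∧ (gridGraph.induce t).Connected
  suffices hlinked : Linked p q by
    obtain ⟨t, htC, hpq, ht⟩ := hlinked
    exact ⟨t, htC, hpq (Or.inl (floorPoint_mem_corners p)), hpq (Or.inr hzq), ht⟩
  refine hC.induction₂ Linked ?_ ?_ ?_ hp hq
  · intro a ha
    have hball : ∀ᶠ b in nhdsWithin a C, dist b a < 1 :=
      nhdsWithin_le_nhds (Metric.ball_mem_nhds a one_pos)
    filter_upwards [hball, self_mem_nhdsWithin] with b hba hb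
    refine ⟨_, Set.union_subset (corners_subset_gridCover ha) (corners_subset_gridCover hb),
      subset_rfl, ?_⟩
    exact gridGraph.induce_union_connected (connected_corners a).preconnected
      (connected_corners b).preconnected (corners_inter_nonempty_of_dist_lt (dist_comm a b ▸ hba))
  · rintro a b c - - - ⟨s, hsC, hab, hs⟩ ⟨t, htC, hbc, ht⟩
    refine ⟨s ∪ t, Set.union_subset hsC htC, by grind, ?_⟩
    exact gridGraph.induce_union_connected hs.preconnected ht.preconnected
      ⟨_, hab (Or.inr (floorPoint_mem_corners b)), hbc (Or.inl (floorPoint_mem_corners b))⟩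
  · rintro a b - - ⟨t, htC, hab, ht⟩
    exact ⟨t, htC, by rwa [Set.union_comm], ht⟩

lemma finite_gridCover {C : Set (ℝ × ℝ)} (hC : Bornology.IsBounded C) : (gridCover C).Finite := by
  obtain ⟨a, ha⟩ := hC.bddBelow
  obtain ⟨b, hb⟩ := hC.bddAbove
  refine (Set.finite_Icc (floorPoint a) (floorPoint b + 1)).subset ?_
  refine Set.iUnion₂_subset fun p hp => Set.Icc_subset_Icc (floorPoint_mono (ha hp)) ?_
  gcongr
  exact floorPoint_mono (hb hp)

end GridCover

section PlaneDrawing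

open scoped Pointwise

variable {V : Type*} {G : SimpleGraph V}

/-- A drawing of a graph in the plane, bundling the data of `SimpleGraph.IsPlanar`. -/
structure PlaneDrawing (G : SimpleGraph V) where
  pos : V → ℝ × ℝ
  arc : ∀ ⦃u v : V⦄, G.Adj u v → unitInterval → ℝ × ℝ
  pos_injective : Function.Injective pos
  continuous_arc : ∀ ⦃u v : V⦄ (h : G.Adj u v), Continuous (arc h)
  arc_injective : ∀ ⦃u v : V⦄ (h : G.Adj u v), Function.Injective (arc h)
  arc_zero : ∀ ⦃u v : V⦄ (h : G.Adj u v), arc h 0 = pos u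
  arc_symm : ∀ ⦃u v : V⦄ (h : G.Adj u v) (t : unitInterval),
    arc h.symm (unitInterval.symm t) = arc h t
  arc_ne_pos : ∀ ⦃u v : V⦄ (h : G.Adj u v) (t : unitInterval), t ≠ 0 → t ≠ 1 → ∀ w, arc h t ≠ pos w
  eq_zero_or_eq_one : ∀ ⦃u v u' v' : V⦄ (h : G.Adj u v) (h' : G.Adj u' v') (t t' : unitInterval),
    s(u, v) ≠ s(u', v') → arc h t = arc h' t' → t = 0 ∨ t = 1

lemma nonempty_planeDrawing_of_isPlanar (hG : G.IsPlanar) : Nonempty (PlaneDrawing G) := by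
  obtain ⟨pos, arc, pos_inj, harc, harc_symm, harc_pos, harc_arc⟩ := hG
  exact ⟨⟨pos, arc, pos_inj, fun _ _ h => (harc h).1, fun _ _ h => (harc h).2.1,
    fun _ _ h => (harc h).2.2.1, harc_symm, harc_pos, harc_arc⟩⟩

/-- The parameter at which an arc leaves the star of its initial vertex. -/
noncomputable def oneThird : unitInterval := ⟨1 / 3, by norm_num, by norm_num⟩

lemma oneThird_pos : 0 < oneThird := by
  rw [← Subtype.coe_lt_coe]; norm_num [oneThird]

lemma oneThird_lt_symm : oneThird < unitInterval.symm oneThird := by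
  rw [← Subtype.coe_lt_coe, unitInterval.coe_symm_eq]; norm_num [oneThird]

lemma symm_oneThird_lt_one : unitInterval.symm oneThird < 1 := by
  rw [← Subtype.coe_lt_coe, unitInterval.coe_symm_eq]; norm_num [oneThird]

lemma ne_zero_and_ne_one_of_mem_Icc {t : unitInterval} (ht : oneThird ≤ t)
    (ht' : t ≤ unitInterval.symm oneThird) : t ≠ 0 ∧ t ≠ 1 :=
  ⟨(oneThird_pos.trans_le ht).ne', (ht'.trans_lt symm_oneThird_lt_one).ne⟩

namespace PlaneDrawing

variable (D : PlaneDrawing G)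

/-- A vertex together with the initial thirds of the arcs leaving it. -/
def star (u : V) : Set (ℝ × ℝ) :=
  {D.pos u} ∪ ⋃ (v) (h : G.Adj u v), D.arc h '' Set.Iic oneThird

/-- The middle third of the arc from `u` to `v`, empty if these are not adjacent. -/
def middle (u v : V) : Set (ℝ × ℝ) :=
  ⋃ h : G.Adj u v, D.arc h '' Set.Icc oneThird (unitInterval.symm oneThird)

lemma mem_star {u : V} {p : ℝ × ℝ} :
    p ∈ D.star u ↔ p = D.pos u ∨ ∃ v, ∃ h : G.Adj u v, ∃ t ≤ oneThird, D.arc h t = p := by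
  simp [star]

lemma mem_middle {u v : V} {p : ℝ × ℝ} :
    p ∈ D.middle u v ↔ ∃ h : G.Adj u v, ∃ t, oneThird ≤ t ∧ t ≤ unitInterval.symm oneThird ∧
      D.arc h t = p := by
  simp [middle, and_assoc]

lemma isCompact_star [Finite V] (u : V) : IsCompact (D.star u) :=
  isCompact_singleton.union <| isCompact_iUnion fun _ => isCompact_iUnion fun h =>
    isClosed_Iic.isCompact.image (D.continuous_arc h)

lemma isCompact_middle (u v : V) : IsCompact (D.middle u v) :=
  isCompact_iUnion fun h => isClosed_Icc.isCompact.image (D.continuous_arc h)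

lemma isConnected_star (u : V) : IsConnected (D.star u) := by
  refine ⟨⟨_, Or.inl rfl⟩, isPreconnected_of_forall (D.pos u) fun p hp => ?_⟩
  rcases D.mem_star.1 hp with rfl | ⟨v, h, t, ht, rfl⟩
  · exact ⟨{D.pos u}, Set.subset_union_left, rfl, rfl, isPreconnected_singleton⟩
  · refine ⟨D.arc h '' Set.Iic oneThird, ?_, ⟨0, oneThird_pos.le, D.arc_zero h⟩, ⟨t, ht, rfl⟩,
      isPreconnected_Iic.image _ (D.continuous_arc h).continuousOn⟩
    rintro _ ⟨s, hs, rfl⟩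
    exact D.mem_star.2 (Or.inr ⟨v, h, s, hs, rfl⟩)

lemma isConnected_middle {u v : V} (h : G.Adj u v) : IsConnected (D.middle u v) := by
  rw [middle, ← Set.iSup_eq_iUnion, iSup_pos h]
  exact (isConnected_Icc oneThird_lt_symm.le).image _ (D.continuous_arc h).continuousOn

lemma middle_inter_star_left {u v : V} (h : G.Adj u v) : (D.middle u v ∩ D.star u).Nonempty :=
  ⟨D.arc h oneThird, D.mem_middle.2 ⟨h, oneThird, le_rfl, oneThird_lt_symm.le, rfl⟩,
    D.mem_star.2 (Or.inr ⟨v, h, oneThird, le_rfl, rfl⟩)⟩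

lemma middle_inter_star_right {u v : V} (h : G.Adj u v) : (D.middle u v ∩ D.star v).Nonempty :=
  ⟨D.arc h (unitInterval.symm oneThird),
    D.mem_middle.2 ⟨h, _, oneThird_lt_symm.le, le_rfl, rfl⟩,
    D.mem_star.2 (Or.inr ⟨u, h.symm, oneThird, le_rfl, by
      rw [← D.arc_symm h, unitInterval.symm_symm]⟩)⟩

lemma disjoint_middle {u v u' v' : V} (hne : s(u, v) ≠ s(u', v')) :
    Disjoint (D.middle u v) (D.middle u' v') := by
  refine Set.disjoint_left.2 fun p hp hp' => ?_
  obtain ⟨h, t, ht, ht', rfl⟩ := D.mem_middle.1 hp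
  obtain ⟨h', t', -, -, heq⟩ := D.mem_middle.1 hp'
  obtain ⟨ht0, ht1⟩ := ne_zero_and_ne_one_of_mem_Icc ht ht'
  exact (D.eq_zero_or_eq_one h h' t t' hne heq.symm).elim ht0 ht1

lemma disjoint_middle_star {u v w : V} (hwu : w ≠ u) (hwv : w ≠ v) :
    Disjoint (D.middle u v) (D.star w) := by
  refine Set.disjoint_left.2 fun p hp hp' => ?_
  obtain ⟨h, t, ht, ht', rfl⟩ := D.mem_middle.1 hp
  obtain ⟨ht0, ht1⟩ := ne_zero_and_ne_one_of_mem_Icc ht ht'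
  rcases D.mem_star.1 hp' with heq | ⟨x, h', t', -, heq⟩
  · exact D.arc_ne_pos h t ht0 ht1 w heq
  · have hne : s(u, v) ≠ s(w, x) := by
      rw [Ne, Sym2.eq_iff]
      rintro (⟨rfl, -⟩ | ⟨-, rfl⟩)
      exacts [hwu rfl, hwv rfl]
    exact (D.eq_zero_or_eq_one h h' t t' hne heq.symm).elim ht0 ht1

lemma arc_eq_pos_of_le_oneThird {u v w : V} (h : G.Adj u v) {t : unitInterval} (ht : t ≤ oneThird)
    (heq : D.arc h t = D.pos w) : u = w := by
  have ht1 : t ≠ 1 := (ht.trans_lt (oneThird_lt_symm.trans symm_oneThird_lt_one)).ne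
  have ht0 : t = 0 := not_not.1 fun ht0 => D.arc_ne_pos h t ht0 ht1 w heq
  rw [ht0, D.arc_zero] at heq
  exact D.pos_injective heq

lemma disjoint_star : Pairwise fun u w => Disjoint (D.star u) (D.star w) := by
  intro u w huw
  refine Set.disjoint_left.2 fun p hp hp' => huw ?_
  rcases D.mem_star.1 hp with rfl | ⟨v, h, t, ht, rfl⟩ <;>
    rcases D.mem_star.1 hp' with heq | ⟨x, h', t', ht', heq⟩
  · exact D.pos_injective heq
  · exact (D.arc_eq_pos_of_le_oneThird h' ht' heq).symm
  · exact D.arc_eq_pos_of_le_oneThird h ht heq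
  · by_cases hne : s(u, v) = s(w, x)
    · obtain ⟨rfl, rfl⟩ | ⟨rfl, rfl⟩ := Sym2.eq_iff.1 hne
      · rfl
      · rw [← D.arc_symm h'] at heq
        have : unitInterval.symm t' = t := D.arc_injective h heq
        have := unitInterval.symm_le_symm.2 ht'
        exact absurd oneThird_lt_symm (by order)
    · have ht1 : t' ≠ 1 := (ht'.trans_lt (oneThird_lt_symm.trans symm_oneThird_lt_one)).ne
      have ht0 : t' = 0 :=
        (D.eq_zero_or_eq_one h' h t' t (Ne.symm hne) heq).resolve_right ht1
      rw [ht0, D.arc_zero] at heq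
      exact D.arc_eq_pos_of_le_oneThird h ht heq.symm

lemma eventually_disjoint_gridCover [Finite V] :
    ∀ᶠ R : ℝ in Filter.atTop,
      (∀ u v, u ≠ v → Disjoint (gridCover (R • D.star u)) (gridCover (R • D.star v))) ∧
      (∀ u v w, w ≠ u → w ≠ v →
        Disjoint (gridCover (R • D.middle u v)) (gridCover (R • D.star w))) ∧
      (∀ u v u' v', s(u, v) ≠ s(u', v') →
        Disjoint (gridCover (R • D.middle u v)) (gridCover (R • D.middle u' v'))) := by
  simp only [Filter.eventually_and, Filter.eventually_all]
  exact ⟨fun u v huv => eventually_disjoint_gridCover_smul (D.isCompact_star u)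
      (D.isCompact_star v) (D.disjoint_star huv),
    fun u v w hwu hwv => eventually_disjoint_gridCover_smul (D.isCompact_middle u v)
      (D.isCompact_star w) (D.disjoint_middle_star hwu hwv),
    fun u v u' v' hne => eventually_disjoint_gridCover_smul (D.isCompact_middle u v)
      (D.isCompact_middle u' v') (D.disjoint_middle hne)⟩

end PlaneDrawing

theorem nonempty_connectorModel_gridGraph [Finite V] (D : PlaneDrawing G) :
    Nonempty (ConnectorModel G gridGraph) := by
  obtain ⟨R, hstar, hmiddle_star, hmiddle⟩ := D.eventually_disjoint_gridCover.exists
  have hscale {C : Set (ℝ × ℝ)} (hC : IsConnected C) : IsConnected (R • C) :=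
    hC.image _ (continuous_const_smul R).continuousOn
  have hinter {C C' : Set (ℝ × ℝ)} (h : (C ∩ C').Nonempty) :
      (gridCover (R • C) ∩ gridCover (R • C')).Nonempty :=
    gridCover_inter_nonempty ((h.smul_set (a := R)).mono Set.smul_set_inter_subset)
  exact ⟨{
    core := fun u => gridCover (R • D.star u)
    link := fun u v => gridCover (R • D.middle u v)
    finite_core := fun u => finite_gridCover ((D.isCompact_star u).smul R).isBounded
    finite_link := fun u v => finite_gridCover ((D.isCompact_middle u v).smul R).isBounded
    connected_core := fun u => connected_gridCover (hscale (D.isConnected_star u))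
    connected_link := fun _ _ h => connected_gridCover (hscale (D.isConnected_middle h))
    link_inter_core_left := fun _ _ h => hinter (D.middle_inter_star_left h)
    link_inter_core_right := fun _ _ h => hinter (D.middle_inter_star_right h)
    disjoint_core := fun u v => hstar u v
    disjoint_link_core := fun u v w => hmiddle_star u v w
    disjoint_link := fun u v u' v' => hmiddle u v u' v' }⟩

theorem nonempty_minorModel_gridGraph_of_isPlanar [Finite V] (hG : G.IsPlanar) :
    Nonempty (MinorModel G gridGraph) := by
  classical
  let := linearOrderOfSTO (WellOrderingRel (α := V))
  obtain ⟨D⟩ := nonempty_planeDrawing_of_isPlanar hG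
  exact (nonempty_connectorModel_gridGraph D).map fun C => C.toMinorModel

end PlaneDrawing

section PlanarEdgeBound

variable {V W : Type*} {G : SimpleGraph V} {H : SimpleGraph W}

lemma isPlanar_of_injective_hom (f : G →g H) (hf : Function.Injective f) (hH : H.IsPlanar) :
    G.IsPlanar := by
  obtain ⟨pos, arc, pos_inj, harc, harc_symm, harc_pos, harc_arc⟩ := hH
  exact ⟨pos ∘ f, fun _ _ h => arc (f.map_adj h), pos_inj.comp hf, fun _ _ h => harc (f.map_adj h),
    fun _ _ h => harc_symm (f.map_adj h), fun _ _ h t ht0 ht1 w => harc_pos _ t ht0 ht1 (f w),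
    fun _ _ _ _ _ _ t t' hne => harc_arc _ _ t t' ((Sym2.map.injective hf).ne hne)⟩

theorem card_edgeSet_le_of_isPlanar_of_cliqueFree [Fintype V] [Fintype G.edgeSet]
    (hG : G.IsPlanar) (hfree : G.CliqueFree 3) :
    Fintype.card G.edgeSet ≤ 2 * Fintype.card V := by
  obtain ⟨M⟩ := nonempty_minorModel_gridGraph_of_isPlanar hG
  exact card_edgeSet_le_of_minorModel_gridGraph M hfree

lemma card_edgeFinset_le_of_isPlanar_of_support_subset [Fintype V]
    [DecidableRel G.Adj] (hG : G.IsPlanar) (hfree : G.CliqueFree 3) {s : Finset V}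
    (hs : G.support ⊆ s) : #G.edgeFinset ≤ 2 * #s := by
  classical
  let f := SimpleGraph.Embedding.induce (G := G) G.support
  calc #G.edgeFinset = #(G.induce G.support).edgeFinset :=
        SimpleGraph.card_edgeFinset_induce_support.symm
    _ = Fintype.card (G.induce G.support).edgeSet := SimpleGraph.edgeFinset_card
    _ ≤ 2 * Fintype.card G.support := card_edgeSet_le_of_isPlanar_of_cliqueFree
        (isPlanar_of_injective_hom f.toHom f.injective hG) (hfree.comap f.isContained)
    _ = 2 * #G.support.toFinset := by rw [Set.toFinset_card]
    _ ≤ 2 * #s := by grw [Set.toFinset_subset.2 hs]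

theorem card_interedges_le_of_isPlanar [Finite V] [DecidableRel G.Adj]
    (hG : G.IsPlanar) {A B : Finset V} (hAB : Disjoint A B) :
    #(G.interedges A B) ≤ 2 * (#A + #B) := by
  classical
  have := Fintype.ofFinite V
  have hbip : (G.between ↑A ↑B).IsBipartiteWith ↑A ↑B :=
    SimpleGraph.between_isBipartiteWith (disjoint_coe.2 hAB)
  have hsupp : (G.between ↑A ↑B).support ⊆ ↑(A ∪ B) := by
    simpa using SimpleGraph.isBipartiteWith_support_subset hbip
  have hplanar : (G.between (A : Set V) B).IsPlanar :=
    isPlanar_of_injective_hom (.ofLE SimpleGraph.between_le) Function.injective_id hG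
  have hmaps : ∀ e ∈ G.interedges A B, s(e.1, e.2) ∈ (G.between (A : Set V) B).edgeFinset := by
    intro e he
    obtain ⟨hA, hB, hadj⟩ := G.mem_interedges_iff.1 he
    simpa [SimpleGraph.between_adj, hadj] using Or.inl ⟨hA, hB⟩
  have hinj : Set.InjOn (fun e : V × V => s(e.1, e.2)) (G.interedges A B) := by
    intro e he e' he' heq
    obtain ⟨hA, -, -⟩ := G.mem_interedges_iff.1 he
    obtain ⟨-, hB, -⟩ := G.mem_interedges_iff.1 he'
    obtain ⟨h₁, h₂⟩ | ⟨h, -⟩ := Sym2.eq_iff.1 heq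
    · exact Prod.ext h₁ h₂
    · exact absurd (h ▸ hB) (disjoint_left.1 hAB hA)
  calc #(G.interedges A B)
      ≤ #(G.between (A : Set V) B).edgeFinset := card_le_card_of_injOn _ hmaps hinj
    _ ≤ 2 * #(A ∪ B) := card_edgeFinset_le_of_isPlanar_of_support_subset hplanar
        (hbip.isBipartite.cliqueFree (by norm_num)) hsupp
    _ = 2 * (#A + #B) := by rw [card_union_of_disjoint hAB]

end PlanarEdgeBound

section TutteBerge

variable {V W : Type*} {G : SimpleGraph V} {H : SimpleGraph W}

lemma ncard_verts_of_isMatching [Finite V] {M : G.Subgraph} (hM : M.IsMatching) :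
    M.verts.ncard = 2 * M.edgeSet.ncard := by
  classical
  have := Fintype.ofFinite M.verts
  rw [SimpleGraph.Subgraph.isMatching_iff_forall_degree] at hM
  rw [← M.image_coe_edgeSet_coe,
    Set.ncard_image_of_injective _ (Sym2.map.injective Subtype.val_injective),
    Set.ncard_eq_toFinset_card' M.coe.edgeSet, ← SimpleGraph.edgeFinset,
    ← M.coe.sum_degrees_eq_twice_card_edges]
  simp [hM]

lemma ncard_oddComponents_congr (φ : G ≃g H) :
    G.oddComponents.ncard = H.oddComponents.ncard :=
  Set.ncard_congr' <| φ.connectedComponentEquiv.subtypeEquiv fun c => by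
    simp only [SimpleGraph.oddComponents, Set.mem_ofPred_eq,
      Set.ncard_congr' (SimpleGraph.ConnectedComponent.isoEquivSupp φ c)]

lemma ncard_oddComponents_le_one_of_preconnected (hG : G.Preconnected) :
    G.oddComponents.ncard ≤ 1 :=
  have := hG.subsingleton_connectedComponent
  Set.ncard_le_one_of_subsingleton _

/-- The graph obtained from `G` by adding the elements of `W` as vertices adjacent to everything,
written as the complement of `Gᶜ` together with the isolated vertices `W`. -/
def cone (G : SimpleGraph V) (W : Type*) : SimpleGraph (V ⊕ W) := (Gᶜ ⊕g (⊥ : SimpleGraph W))ᶜ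

/-- The base of a cone, as an induced subgraph. -/
def coneBase (G : SimpleGraph V) (W : Type*) : G ↪g cone G W where
  toEmbedding := .inl
  map_rel_iff' {u v} := by
    have := G.ne_of_adj (a := u) (b := v)
    simp only [cone, SimpleGraph.compl_adj, SimpleGraph.sum_adj, Function.Embedding.inl_apply,
      ne_eq, Sum.inl.injEq, not_and, not_not]
    tauto

lemma cone_adj_inr (w : W) {x : V ⊕ W} (hx : x ≠ Sum.inr w) : (cone G W).Adj x (Sum.inr w) := by
  cases x <;> simp_all [cone]

lemma compl_range_coneBase (G : SimpleGraph V) (W : Type*) :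
    (Set.range (coneBase G W))ᶜ = Set.range Sum.inr :=
  Set.isCompl_range_inl_range_inr.compl_eq

lemma ncard_compl_range_coneBase (G : SimpleGraph V) (W : Type*) :
    (Set.range (coneBase G W))ᶜ.ncard = Nat.card W := by
  rw [compl_range_coneBase, ← Set.image_univ,
    Set.ncard_image_of_injective _ Sum.inr_injective, Set.ncard_univ]

lemma ncard_eq_ncard_preimage_add {f : V → W} [Finite W] (hf : Function.Injective f) {u : Set W}
    (hu : uᶜ ⊆ Set.range f) : u.ncard = (f ⁻¹' u).ncard + (Set.range f)ᶜ.ncard := by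
  rw [← Set.ncard_image_of_injective _ hf, Set.image_preimage_eq_inter_range,
    ← Set.ncard_union_eq (Set.disjoint_compl_right_iff_subset.2 Set.inter_subset_right),
    Set.inter_union_distrib_right, Set.union_compl_self, Set.inter_univ,
    Set.union_eq_left.2 (Set.compl_subset_comm.1 hu)]

lemma ncard_oddComponents_induce_compl_preimage (f : G ↪g H) {u : Set W} (hu : uᶜ ⊆ Set.range f) :
    (G.induce (f ⁻¹' u)ᶜ).oddComponents.ncard =
      ((⊤ : H.Subgraph).deleteVerts u).coe.oddComponents.ncard := by
  let g : ((f ⁻¹' u)ᶜ : Set V) → ((⊤ : H.Subgraph).deleteVerts u).verts :=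
    fun v => ⟨f v, trivial, v.2⟩
  have hg : Function.Bijective g := by
    refine ⟨fun v w h => Subtype.ext (f.injective (congrArg Subtype.val h)), ?_⟩
    rintro ⟨x, -, hx⟩
    obtain ⟨v, rfl⟩ := hu hx
    exact ⟨⟨v, hx⟩, rfl⟩
  refine ncard_oddComponents_congr ⟨Equiv.ofBijective g hg, fun {v w} => ?_⟩
  have hv : f v ∉ u := v.2
  have hw : f w ∉ u := w.2
  simp [g, hv, hw]

lemma exists_isMatching_of_isPerfectMatching [Finite W] (f : G ↪g H) {N : H.Subgraph}
    (hN : N.IsPerfectMatching) : ∃ M : G.Subgraph, M.IsMatching ∧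
      Nat.card V ≤ 2 * M.edgeSet.ncard + (Set.range f)ᶜ.ncard := by
  have := Finite.of_injective f f.injective
  let M : G.Subgraph :=
    { verts := {v | ∃ w, N.Adj (f v) (f w)}
      Adj := fun v w => N.Adj (f v) (f w)
      adj_sub := fun h => f.map_adj_iff.1 h.adj_sub
      edge_vert := fun h => ⟨_, h⟩
      symm := ⟨fun _ _ h => h.symm⟩ }
  have hM : M.IsMatching := fun v ⟨w, hw⟩ =>
    ⟨w, hw, fun w' hw' => f.injective (hN.1.eq_of_adj_left hw' hw)⟩
  choose mate hmate using fun v => (hN.1 (hN.2 (f v))).exists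
  have hmaps : ∀ v ∈ M.vertsᶜ, mate v ∈ (Set.range f)ᶜ := by
    rintro v hv ⟨w, hw⟩
    exact hv ⟨w, hw ▸ hmate v⟩
  have hinj : Function.Injective mate := fun v w h =>
    f.injective (hN.1.eq_of_adj_right (hmate v) (h ▸ hmate w))
  refine ⟨M, hM, ?_⟩
  rw [← ncard_verts_of_isMatching hM, ← Set.ncard_add_ncard_compl M.verts]
  exact Nat.add_le_add_left (Set.ncard_le_ncard_of_injOn mate hmaps hinj.injOn) _

lemma preconnected_deleteVerts_cone {u : Set (V ⊕ W)} {w : W} (hw : Sum.inr w ∉ u) :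
    ((⊤ : (cone G W).Subgraph).deleteVerts u).coe.Preconnected := by
  let apex : ((⊤ : (cone G W).Subgraph).deleteVerts u).verts := ⟨Sum.inr w, trivial, hw⟩
  suffices hreach : ∀ x, ((⊤ : (cone G W).Subgraph).deleteVerts u).coe.Reachable x apex from
    fun x y => (hreach x).trans (hreach y).symm
  intro x
  by_cases hx : x = apex
  · rw [hx]
  · have hadj := cone_adj_inr (G := G) w fun h => hx (Subtype.ext h)
    exact SimpleGraph.Adj.reachable <| by
      simpa [apex, hw] using ⟨x.2.2, hadj⟩

theorem exists_isPerfectMatching_cone [Finite V] {d : ℕ}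
    (hd : ∀ S : Set V, (G.induce Sᶜ).oddComponents.ncard ≤ S.ncard + d)
    (heven : Even (Nat.card V + d)) :
    ∃ M : (cone G (Fin d)).Subgraph, M.IsPerfectMatching := by
  refine SimpleGraph.tutte.2 fun u hu => ?_
  rw [SimpleGraph.IsTutteViolator] at hu
  by_cases hinr : uᶜ ⊆ Set.range (coneBase G (Fin d))
  · have hcard := ncard_eq_ncard_preimage_add (coneBase G (Fin d)).injective hinr
    rw [ncard_compl_range_coneBase, Nat.card_fin] at hcard
    rw [← ncard_oddComponents_induce_compl_preimage _ hinr] at hu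
    have := hd (coneBase G (Fin d) ⁻¹' u)
    lia
  · obtain ⟨i, hi⟩ : ∃ i, Sum.inr i ∉ u := by
      rw [Set.compl_subset_comm, compl_range_coneBase] at hinr
      simpa [Set.subset_def] using hinr
    have hone := ncard_oddComponents_le_one_of_preconnected
      (preconnected_deleteVerts_cone (G := G) hi)
    obtain rfl : u = ∅ := (Set.ncard_eq_zero u.toFinite).1 (by lia)
    have hodd := ((⊤ : (cone G (Fin d)).Subgraph).deleteVerts ∅).coe.odd_ncard_oddComponents.1
      (by rw [le_antisymm hone (by lia)]; exact odd_one)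
    exact Nat.not_odd_iff_even.2 heven (by simpa using hodd)

/-- One half of the Tutte–Berge formula. -/
theorem exists_isMatching_card_add_ncard_le (G : SimpleGraph V) [Finite V] :
    ∃ (M : G.Subgraph) (S : Set V), M.IsMatching ∧
      Nat.card V + S.ncard ≤ 2 * M.edgeSet.ncard + (G.induce Sᶜ).oddComponents.ncard := by
  obtain ⟨S, hS⟩ := Finite.exists_max fun S : Set V =>
    ((G.induce Sᶜ).oddComponents.ncard : ℤ) - S.ncard
  obtain ⟨d, hd⟩ : ∃ d, (G.induce Sᶜ).oddComponents.ncard = S.ncard + d := by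
    refine Nat.exists_eq_add_of_le ?_
    have := hS ∅
    rw [Set.ncard_empty] at this
    omega
  have heven : Even (Nat.card V + d) := by
    have hodd := (G.induce Sᶜ).odd_ncard_oddComponents
    have := S.ncard_add_ncard_compl
    rw [Nat.card_coe_set_eq, hd] at hodd
    grind
  have hmax (T : Set V) : (G.induce Tᶜ).oddComponents.ncard ≤ T.ncard + d := by
    have := hS T
    omega
  obtain ⟨N, hN⟩ := exists_isPerfectMatching_cone hmax heven
  obtain ⟨M, hM, hcard⟩ := exists_isMatching_of_isPerfectMatching (coneBase G (Fin d)) hN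
  rw [ncard_compl_range_coneBase, Nat.card_fin] at hcard
  exact ⟨M, S, hM, by omega⟩

end TutteBerge

section IsolatedVertices

variable {V : Type*} {G : SimpleGraph V}

lemma sum_ncard_supp_inter [Finite V] [Fintype G.ConnectedComponent] (s : Set V) :
    ∑ c : G.ConnectedComponent, (c.supp ∩ s).ncard = s.ncard := by
  classical
  have := Fintype.ofFinite V
  rw [Set.ncard_eq_toFinset_card', card_eq_sum_card_fiberwise (f := G.connectedComponentMk)
    (t := univ) fun _ _ => mem_univ _]
  refine sum_congr rfl fun c _ => ?_
  rw [← Set.ncard_coe_finset]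
  congr 1
  ext v
  simp [and_comm]

lemma three_le_ncard_supp_add [Finite V] (c : G.ConnectedComponent) (hc : Odd c.supp.ncard) :
    3 ≤ c.supp.ncard + 2 * (c.supp ∩ G.supportᶜ).ncard := by
  by_cases hone : c.supp.ncard = 1
  · obtain ⟨v, hv⟩ := Set.ncard_eq_one.1 hone
    have hmem {w : V} : G.connectedComponentMk w = c ↔ w = v := by
      rw [← SimpleGraph.ConnectedComponent.mem_supp_iff, hv, Set.mem_singleton_iff]
    have hisolated : v ∉ G.support := by
      rintro ⟨w, hw⟩
      have hwv : G.connectedComponentMk w = c := by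
        rw [← hmem.2 rfl, SimpleGraph.ConnectedComponent.eq]
        exact hw.symm.reachable
      exact hw.ne (hmem.1 hwv).symm
    rw [hv, Set.singleton_inter_of_mem hisolated, Set.ncard_singleton]
  · grind

lemma three_mul_ncard_oddComponents_le [Finite V] :
    3 * G.oddComponents.ncard ≤ Nat.card V + 2 * G.supportᶜ.ncard := by
  classical
  have := Fintype.ofFinite G.ConnectedComponent
  calc 3 * G.oddComponents.ncard
      = ∑ c ∈ G.oddComponents.toFinset, 3 := by
        rw [sum_const, smul_eq_mul, mul_comm, ← Set.ncard_eq_toFinset_card']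
    _ ≤ ∑ c ∈ G.oddComponents.toFinset, (c.supp.ncard + 2 * (c.supp ∩ G.supportᶜ).ncard) :=
        sum_le_sum fun c hc => three_le_ncard_supp_add c (by simpa using hc)
    _ ≤ ∑ c : G.ConnectedComponent, (c.supp.ncard + 2 * (c.supp ∩ G.supportᶜ).ncard) :=
        sum_le_sum_of_subset (subset_univ _)
    _ = Nat.card V + 2 * G.supportᶜ.ncard := by
        rw [sum_add_distrib, ← mul_sum, sum_ncard_supp_inter, ← Set.ncard_univ,
          ← sum_ncard_supp_inter (G := G) Set.univ]
        simp only [Set.inter_univ]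

/-- The vertices that become isolated when the vertex set `S` is deleted. -/
def isolatedVerts (G : SimpleGraph V) (S : Set V) : Set V := {v | v ∉ S ∧ G.neighborSet v ⊆ S}

lemma ncard_compl_support_induce_compl (G : SimpleGraph V) (S : Set V) :
    (G.induce Sᶜ).supportᶜ.ncard = (isolatedVerts G S).ncard := by
  rw [← Set.ncard_image_of_injective _ Subtype.val_injective]
  congr 1
  ext v
  constructor
  · rintro ⟨v, hv, rfl⟩
    refine ⟨v.2, fun w hvw => ?_⟩
    by_contra hw
    exact hv ⟨⟨w, hw⟩, hvw⟩
  · rintro ⟨hv, hvS⟩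
    exact ⟨⟨v, hv⟩, fun ⟨w, hvw⟩ => w.2 (hvS hvw), rfl⟩

theorem exists_isMatching_card_add_two_mul_ncard_le [Finite V] (G : SimpleGraph V) :
    ∃ (M : G.Subgraph) (S : Set V), M.IsMatching ∧
      Nat.card V + 2 * S.ncard ≤ 3 * M.edgeSet.ncard + (isolatedVerts G S).ncard := by
  obtain ⟨M, S, hM, hMS⟩ := exists_isMatching_card_add_ncard_le G
  have hodd := three_mul_ncard_oddComponents_le (G := G.induce Sᶜ)
  rw [ncard_compl_support_induce_compl, Nat.card_coe_set_eq] at hodd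
  have := S.ncard_add_ncard_compl
  exact ⟨M, S, hM, by omega⟩

end IsolatedVertices

section Counting

variable {V : Type*} [Fintype V] {G : SimpleGraph V} [DecidableRel G.Adj] {A S : Finset V}

lemma mul_card_le_card_interedges {k : ℕ} (hdeg : ∀ v ∈ A, k ≤ G.degree v)
    (hA : ∀ v ∈ A, G.neighborFinset v ⊆ S) : k * #A ≤ #(G.interedges A S) := by
  classical
  have hfiber : ∀ v ∈ A, k ≤ #{e ∈ G.interedges A S | e.1 = v} := by
    intro v hv
    refine (hdeg v hv).trans (card_le_card_of_injOn (Prod.mk v) ?_ ?_)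
    · intro w hw
      have hwS := hA v hv hw
      simp_all [SimpleGraph.mem_interedges_iff]
    · exact (Prod.mk_right_injective v).injOn
  exact mul_card_image_le_card_of_maps_to (fun _ he => (G.mem_interedges_iff.1 he).1) k hfiber

lemma card_le_mul_card_of_forall_exists_adj {k : ℕ} (hdeg : ∀ w ∈ S, G.degree w ≤ k)
    (hA : ∀ v ∈ A, ∃ w ∈ S, G.Adj v w) : #A ≤ k * #S := by
  classical
  have hsub : A ⊆ S.biUnion fun w => G.neighborFinset w := fun v hv => by
    obtain ⟨w, hw, hvw⟩ := hA v hv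
    exact mem_biUnion.2 ⟨w, hw, (G.mem_neighborFinset w v).2 hvw.symm⟩
  rw [mul_comm]
  exact (card_le_card hsub).trans (card_biUnion_le_card_mul _ _ _ hdeg)

theorem card_le_two_mul_card_of_sparse
    (hsparse : ∀ A B : Finset V, Disjoint A B → #(G.interedges A B) ≤ 2 * (#A + #B))
    (hdisj : Disjoint A S) (hA : ∀ v ∈ A, G.neighborFinset v ⊆ S)
    (hdeg : ∀ v ∈ A, (∃ w, G.Adj v w ∧ G.degree w ≤ 2) ∨ 2 < G.degree v) :
    #A ≤ 2 * #S := by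
  classical
  let A₁ := {v ∈ A | ∃ w, G.Adj v w ∧ G.degree w ≤ 2}
  let A₂ := {v ∈ A | ¬∃ w, G.Adj v w ∧ G.degree w ≤ 2}
  let S₁ := {w ∈ S | G.degree w ≤ 2}
  let S₂ := {w ∈ S | ¬G.degree w ≤ 2}
  have hA₁ : #A₁ ≤ 2 * #S₁ := by
    refine card_le_mul_card_of_forall_exists_adj (fun w hw => (mem_filter.1 hw).2) fun v hv => ?_
    obtain ⟨hvA, w, hvw, hw⟩ := mem_filter.1 hv
    exact ⟨w, mem_filter.2 ⟨hA v hvA ((G.mem_neighborFinset v w).2 hvw), hw⟩, hvw⟩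
  have hA₂ : 3 * #A₂ ≤ #(G.interedges A₂ S₂) := by
    refine mul_card_le_card_interedges (fun v hv => ?_) fun v hv w hw => ?_
    · obtain ⟨hvA, hv⟩ := mem_filter.1 hv
      exact (hdeg v hvA).resolve_left hv
    · obtain ⟨hvA, hv⟩ := mem_filter.1 hv
      exact mem_filter.2 ⟨hA v hvA hw, fun h => hv ⟨w, (G.mem_neighborFinset v w).1 hw, h⟩⟩
  have hA₂S₂ := hsparse A₂ S₂ (disjoint_filter_filter hdisj)
  have hAcard : #A₁ + #A₂ = #A := card_filter_add_card_filter_not _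
  have hScard : #S₁ + #S₂ = #S := card_filter_add_card_filter_not _
  lia

end Counting

end PlanarMatching

open PlanarMatching Finset in
theorem K2_le_three_matching_general {V : Type*} [Fintype V] (G : SimpleGraph V)
    [DecidableRel G.Adj]
    (hsparse : ∀ A B : Finset V, Disjoint A B → #(G.interedges A B) ≤ 2 * (#A + #B)) :
    ∃ M : G.Subgraph, M.IsMatching ∧
      ({v : V | (G.degree v ≤ 2 ∧ ∃ w, G.Adj v w ∧ G.degree w ≤ G.degree v) ∨
          2 < G.degree v} : Set V).ncard ≤ 3 * M.edgeSet.ncard := by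
  classical
  obtain ⟨M, S, hM, hMS⟩ := exists_isMatching_card_add_two_mul_ncard_le G
  refine ⟨M, hM, ?_⟩
  set K := {v : V | (G.degree v ≤ 2 ∧ ∃ w, G.Adj v w ∧ G.degree w ≤ G.degree v) ∨ 2 < G.degree v}
  set I := isolatedVerts G S
  have hKI : (K ∩ I).ncard ≤ 2 * S.ncard := by
    rw [Set.ncard_eq_toFinset_card', Set.ncard_eq_toFinset_card']
    refine card_le_two_mul_card_of_sparse hsparse ?_ ?_ ?_
    · rw [Set.disjoint_toFinset, Set.disjoint_left]
      exact fun v hv => hv.2.1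
    · intro v hv
      rw [SimpleGraph.neighborFinset, Set.toFinset_subset_toFinset]
      exact (Set.mem_toFinset.1 hv).2.2
    · intro v hv
      exact (Set.mem_toFinset.1 hv).1.imp_left fun ⟨hv, w, hvw, hw⟩ => ⟨w, hvw, hw.trans hv⟩
  have hK : K.ncard ≤ (K ∩ I).ncard + Iᶜ.ncard := by
    rw [← Set.ncard_inter_add_ncard_sdiff_eq_ncard K I]
    gcongr
    exacts [Set.toFinite _, Set.sdiff_subset_compl K I]
  have hI := I.ncard_add_ncard_compl
  omega

/-- For a planar graph `G`, the set `K₂(G) = L₂(G) ∪ H₂(G)` — vertices of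
degree at most 2 having a neighbor of degree no larger than their own,
together with vertices of degree greater than 2 — has size at most `3ν(G)`. -/
theorem K2_le_three_matching {V : Type*} [Fintype V] (G : SimpleGraph V)
    [DecidableRel G.Adj] (hplanar : G.IsPlanar) :
    ∃ M : G.Subgraph, M.IsMatching ∧
      ({v : V | (G.degree v ≤ 2 ∧ ∃ w, G.Adj v w ∧ G.degree w ≤ G.degree v) ∨
          2 < G.degree v} : Set V).ncard ≤ 3 * M.edgeSet.ncard :=
  K2_le_three_matching_general G fun _ _ =>
    PlanarMatching.card_interedges_le_of_isPlanar hplanar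
end

section
/- Let t ≥ 2 and let G be a graph with arboricity at most t. Let K_t(G) = L_t(G) ∪ H_t(G), where L_t(G) is the set of locally superior vertices of degree at most t and H_t(G) is the set of vertices of degree greater than t. Then |K_t(G)| ≤ (t+1)ν(G). -/
/-- A graph has arboricity at most `a` if its edge set can be covered by `a`
forests. -/
def SimpleGraph.ArboricityLE {V : Type*} (G : SimpleGraph V) (a : ℕ) : Prop :=
  ∃ F : Fin a → SimpleGraph V, (∀ i, F i ≤ G) ∧ (∀ i, (F i).IsAcyclic) ∧
    ∀ u v : V, G.Adj u v → ∃ i, (F i).Adj u v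

/-!
Choose a set `I` maximising the surplus `|I| - |N(I)|`; it may be taken independent. Put
`U = N(I)` and `W = V \ (I ∪ U)`. Maximality is Hall's condition both for matching `U` into `I` and
for an injection `f : W → W` along edges. The orbits of `f` are directed cycles without loops, so
some `S ⊆ W` with `|W| ≤ 3|S|` is disjoint from `f(S)`, and therefore `ν(G) ≥ |U| + |W| / 3`.

A vertex of `K_t(G) ∩ I` has all its neighbours in `U`. Those with a neighbour of degree at most `t`
number at most `t` times the number of vertices of degree at most `t` in `U`. The others form a set
`B` of vertices of degree greater than `t`, joined only to the set `C` of vertices of degree greater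
than `t` in `U`; the forests give `(t + 1)|B| ≤ t(|B| + |C|)`, that is, `|B| ≤ t|C|`. Hence
`|K_t(G)| ≤ t|U| + |U| + |W| ≤ (t + 1)(|U| + |W| / 3)`, because `3 ≤ t + 1`.
-/

open Finset

section Finset

variable {α β : Type*} [DecidableEq β]

theorem exists_injOn_forall_mem_of_card_le_card_biUnion [Nonempty β] {A : Finset α}
    {T : α → Finset β} (hall : ∀ s ⊆ A, #s ≤ #(s.biUnion T)) :
    ∃ f : α → β, Set.InjOn f A ∧ ∀ a ∈ A, f a ∈ T a := by
  classical
  have hall_subtype (s : Finset A) : #s ≤ #(s.biUnion fun a => T a) := by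
    have h := hall (s.image Subtype.val) (image_subset_iff.mpr fun a _ => a.2)
    rwa [card_image_of_injective s Subtype.val_injective, image_biUnion] at h
  obtain ⟨g, hg_inj, hg_mem⟩ :=
    (all_card_le_biUnion_card_iff_exists_injective fun a : A => T a).mp hall_subtype
  have extend_eq (a : A) : Function.extend Subtype.val g (Classical.arbitrary _) a = g a :=
    Subtype.val_injective.extend_apply ..
  refine ⟨Function.extend Subtype.val g (Classical.arbitrary _), fun a ha b hb hab => ?_,
    fun a ha => ?_⟩
  · rw [extend_eq ⟨a, ha⟩, extend_eq ⟨b, hb⟩] at hab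
    exact congrArg Subtype.val (hg_inj hab)
  · rw [extend_eq ⟨a, ha⟩]
    exact hg_mem ⟨a, ha⟩

theorem exists_subset_disjoint_image_card_le_three_mul {W : Finset β} {f : β → β}
    (hf_inj : Set.InjOn f W) (hf_ne : ∀ w ∈ W, f w ≠ w) :
    ∃ S ⊆ W, Disjoint S (S.image f) ∧ #W ≤ 3 * #S := by
  obtain ⟨S, hS_mem, hS_max⟩ := exists_max_image
    (W.powerset.filter fun S => Disjoint S (S.image f)) card ⟨∅, by simp⟩
  obtain ⟨hSW, hS⟩ : S ⊆ W ∧ Disjoint S (S.image f) := by simpa using hS_mem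
  have hcover : W ⊆ S ∪ (S.image f ∪ {w ∈ W | f w ∈ S}) := by
    intro w hw
    by_contra hw_uncovered
    simp only [mem_union, mem_filter, hw, true_and, not_or] at hw_uncovered
    obtain ⟨hwS, hw_image, hfw⟩ := hw_uncovered
    have hinsert : Disjoint (insert w S) ((insert w S).image f) := by
      rw [image_insert, disjoint_insert_right, disjoint_insert_left, mem_insert, not_or]
      exact ⟨⟨hf_ne w hw, hfw⟩, hw_image, hS⟩
    have hle := hS_max (insert w S)
      (mem_filter.mpr ⟨mem_powerset.mpr (insert_subset hw hSW), hinsert⟩)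
    rw [card_insert_of_notMem hwS] at hle
    omega
  have hpreimage : #{w ∈ W | f w ∈ S} ≤ #S :=
    card_le_card_of_injOn f (fun w hw => (mem_filter.mp hw).2)
      (hf_inj.mono (coe_subset.mpr (filter_subset _ W)))
  refine ⟨S, hSW, hS, ?_⟩
  calc #W ≤ #S + (#(S.image f) + #{w ∈ W | f w ∈ S}) :=
        (card_le_card hcover).trans <| (card_union_le _ _).trans <|
          Nat.add_le_add_left (card_union_le _ _) _
    _ ≤ #S + (#S + #S) := by grw [card_image_le, hpreimage]
    _ = 3 * #S := by ring

end Finset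

section Forests

variable {V : Type*}

theorem card_edgeFinset_lt_card_of_isAcyclic [Fintype V] [Nonempty V] {F : SimpleGraph V}
    [Fintype F.edgeSet] (hF : F.IsAcyclic) : #F.edgeFinset < Fintype.card V := by
  classical
  obtain ⟨T, hFT, -, hT⟩ :=
    SimpleGraph.connected_top.exists_isTree_le_of_le_of_isAcyclic le_top hF
  calc #F.edgeFinset ≤ #T.edgeFinset := card_le_card (SimpleGraph.edgeFinset_mono hFT)
    _ < #T.edgeFinset + 1 := Nat.lt_succ_self _
    _ = Fintype.card V := hT.card_edgeFinset

theorem card_le_card_of_isAcyclic_of_subset_sym2 {F : SimpleGraph V} (hF : F.IsAcyclic)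
    {E : Finset (Sym2 V)} {S : Finset V} (hEF : (E : Set (Sym2 V)) ⊆ F.edgeSet)
    (hES : E ⊆ S.sym2) : #E ≤ #S := by
  classical
  obtain rfl | hS := S.eq_empty_or_nonempty
  · simp_all
  have : Nonempty S := hS.to_subtype
  let F' : SimpleGraph S := F.comap Subtype.val
  have hE : E ⊆ F'.edgeFinset.image (Sym2.map Subtype.val) := by
    intro e he
    induction e with
    | _ a b =>
      obtain ⟨ha, hb⟩ := mk_mem_sym2_iff.mp (hES he)
      refine mem_image.mpr ⟨s(⟨a, ha⟩, ⟨b, hb⟩), ?_, rfl⟩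
      exact SimpleGraph.mem_edgeFinset.mpr (hEF he)
  calc #E ≤ #F'.edgeFinset := (card_le_card hE).trans card_image_le
    _ ≤ Fintype.card S := (card_edgeFinset_lt_card_of_isAcyclic (hF.induce _)).le
    _ = #S := Fintype.card_coe S

theorem card_interedges_le_of_isAcyclic {F : SimpleGraph V} [DecidableRel F.Adj]
    (hF : F.IsAcyclic) {B C : Finset V} (hBC : Disjoint B C) :
    #(F.interedges B C) ≤ #B + #C := by
  classical
  let E : Finset (Sym2 V) := (F.interedges B C).image fun p => s(p.1, p.2)
  have hEF : (E : Set (Sym2 V)) ⊆ F.edgeSet := by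
    simp only [E, coe_image, Set.image_subset_iff]
    exact fun p hp => (F.mem_interedges_iff.mp hp).2.2
  have hES : E ⊆ (B ∪ C).sym2 := image_subset_iff.mpr fun p hp => by
    obtain ⟨hb, hc, -⟩ := F.mem_interedges_iff.mp hp
    exact mk_mem_sym2_iff.mpr ⟨mem_union_left C hb, mem_union_right B hc⟩
  have hinj : Set.InjOn (fun p : V × V => s(p.1, p.2)) (F.interedges B C) := by
    rintro ⟨b, c⟩ hbc ⟨b', c'⟩ hbc' heq
    have hb := (F.mk_mem_interedges_iff.mp hbc).1
    have hc' := (F.mk_mem_interedges_iff.mp hbc').2.1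
    obtain ⟨rfl, rfl⟩ | ⟨rfl, rfl⟩ := Sym2.eq_iff.mp heq
    · rfl
    · exact absurd hc' (disjoint_left.mp hBC hb)
  calc #(F.interedges B C) = #E := (card_image_of_injOn hinj).symm
    _ ≤ #(B ∪ C) := card_le_card_of_isAcyclic_of_subset_sym2 hF hEF hES
    _ ≤ #B + #C := card_union_le B C

theorem card_interedges_le_of_arboricityLE {G : SimpleGraph V} [DecidableRel G.Adj] {t : ℕ}
    (harb : G.ArboricityLE t) {B C : Finset V} (hBC : Disjoint B C) :
    #(G.interedges B C) ≤ t * (#B + #C) := by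
  classical
  obtain ⟨F, -, hF, hcover⟩ := harb
  have hsub : G.interedges B C ⊆ univ.biUnion fun i => (F i).interedges B C := by
    rintro ⟨b, c⟩ hbc
    obtain ⟨hb, hc, hadj⟩ := G.mk_mem_interedges_iff.mp hbc
    obtain ⟨i, hi⟩ := hcover b c hadj
    exact mem_biUnion.mpr ⟨i, mem_univ i, (F i).mk_mem_interedges_iff.mpr ⟨hb, hc, hi⟩⟩
  calc #(G.interedges B C) ≤ #(univ.biUnion fun i => (F i).interedges B C) := card_le_card hsub
    _ ≤ #(univ : Finset (Fin t)) * (#B + #C) :=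
        card_biUnion_le_card_mul _ _ _ fun i _ => card_interedges_le_of_isAcyclic (hF i) hBC
    _ = t * (#B + #C) := by rw [card_fin]

end Forests

section Neighborhood

variable {V : Type*} [DecidableEq V] (G : SimpleGraph V) [G.LocallyFinite]

/-- The open neighbourhood `N(X)` of a set of vertices: all vertices adjacent to some vertex of `X`,
including those that lie in `X` themselves. -/
def nbhd (X : Finset V) : Finset V :=
  X.biUnion fun v => G.neighborFinset v

/-- `I` maximises the surplus `|X| - |N(X)|` among all sets `X` of vertices. The inequality is
rearranged into sums because subtraction of natural numbers truncates. -/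
def IsSurplusMaximal (I : Finset V) : Prop :=
  ∀ X : Finset V, #X + #(nbhd G I) ≤ #I + #(nbhd G X)

variable {G} {I X Y : Finset V} {v : V}

theorem mem_nbhd : v ∈ nbhd G X ↔ ∃ x ∈ X, G.Adj x v := by
  simp [nbhd]

theorem nbhd_mono (h : X ⊆ Y) : nbhd G X ⊆ nbhd G Y :=
  biUnion_subset_biUnion_of_subset_left _ h

theorem nbhd_union : nbhd G (X ∪ Y) = nbhd G X ∪ nbhd G Y :=
  union_biUnion

theorem nbhd_sdiff_nbhd_subset : nbhd G (X \ nbhd G Y) ⊆ nbhd G X \ Y := by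
  intro v hv
  obtain ⟨x, hx, hadj⟩ := mem_nbhd.mp hv
  obtain ⟨hxX, hxY⟩ := mem_sdiff.mp hx
  exact mem_sdiff.mpr ⟨mem_nbhd.mpr ⟨x, hxX, hadj⟩,
    fun hvY => hxY (mem_nbhd.mpr ⟨v, hvY, hadj.symm⟩)⟩

theorem card_nbhd_le_mul_card {t : ℕ} (hX : ∀ x ∈ X, G.degree x ≤ t) :
    #(nbhd G X) ≤ t * #X :=
  (card_biUnion_le_card_mul _ _ _ hX).trans_eq (mul_comm _ _)

theorem sum_degree_eq_card_interedges [DecidableRel G.Adj] {B C : Finset V} (hBC : nbhd G B ⊆ C) :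
    ∑ b ∈ B, G.degree b = #(G.interedges B C) := by
  rw [SimpleGraph.interedges_def, card_filter, sum_product]
  refine sum_congr rfl fun b hb => ?_
  rw [← card_filter, ← G.card_neighborFinset_eq_degree]
  congr 1
  ext c
  simpa using fun hbc => hBC (mem_nbhd.mpr ⟨b, hb, hbc⟩)

theorem card_le_mul_card_of_arboricityLE {t : ℕ} (harb : G.ArboricityLE t)
    {B C : Finset V} (hdisj : Disjoint B C) (hBC : nbhd G B ⊆ C) (hdeg : ∀ b ∈ B, t < G.degree b) :
    #B ≤ t * #C := by
  classical
  have h : #B * (t + 1) ≤ t * (#B + #C) :=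
    calc #B * (t + 1) ≤ ∑ b ∈ B, G.degree b := card_nsmul_le_sum B _ (t + 1) hdeg
      _ = #(G.interedges B C) := sum_degree_eq_card_interedges hBC
      _ ≤ t * (#B + #C) := card_interedges_le_of_arboricityLE harb hdisj
  linarith

variable (G) in
theorem exists_disjoint_nbhd_isSurplusMaximal [Finite V] :
    ∃ I : Finset V, Disjoint I (nbhd G I) ∧ IsSurplusMaximal G I := by
  obtain ⟨X, hX⟩ := Finite.exists_max fun X : Finset V => (#X : ℤ) - #(nbhd G X)
  -- Passing from `X` to `X \ N(X)` loses `X ∩ N(X)` on both sides of the surplus.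
  refine ⟨X \ nbhd G X, ?_, fun Y => ?_⟩
  · exact disjoint_sdiff.mono sdiff_subset nbhd_sdiff_nbhd_subset
  · have hmax := hX Y
    have hnbhd := card_le_card (nbhd_sdiff_nbhd_subset (G := G) (X := X) (Y := X))
    have hX_card := card_sdiff_add_card_inter X (nbhd G X)
    have hN_card := card_sdiff_add_card_inter (nbhd G X) X
    rw [inter_comm] at hN_card
    omega

namespace IsSurplusMaximal

theorem card_le_card_nbhd_inter (hI : IsSurplusMaximal G I) (hX : X ⊆ nbhd G I) :
    #X ≤ #(nbhd G X ∩ I) := by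
  have hmax := hI (I \ nbhd G X)
  have hnbhd := card_le_card (nbhd_sdiff_nbhd_subset (G := G) (X := I) (Y := X))
  have hN_card := card_sdiff_add_card_eq_card hX
  have hI_card := card_sdiff_add_card_inter I (nbhd G X)
  rw [inter_comm] at hI_card
  omega

theorem card_le_card_nbhd_sdiff (hI : IsSurplusMaximal G I) (hX : Disjoint I X) :
    #X ≤ #(nbhd G X \ nbhd G I) := by
  have hmax := hI (I ∪ X)
  rw [nbhd_union, card_union_of_disjoint hX, ← union_sdiff_self_eq_union,
    card_union_of_disjoint disjoint_sdiff] at hmax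
  omega

theorem exists_injOn_nbhd (hI : IsSurplusMaximal G I) :
    ∃ f : V → V, Set.InjOn f (nbhd G I) ∧ ∀ u ∈ nbhd G I, G.Adj u (f u) ∧ f u ∈ I := by
  obtain _ | _ := isEmpty_or_nonempty V
  · exact ⟨id, by simp⟩
  obtain ⟨f, hf_inj, hf_mem⟩ := exists_injOn_forall_mem_of_card_le_card_biUnion
    (A := nbhd G I) (T := fun u => G.neighborFinset u ∩ I) fun s hs => by
      rw [← biUnion_inter]
      exact hI.card_le_card_nbhd_inter hs
  exact ⟨f, hf_inj, fun u hu => by simpa using hf_mem u hu⟩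

theorem exists_injOn_compl [Fintype V] (hI : IsSurplusMaximal G I) :
    ∃ f : V → V, Set.InjOn f ((I ∪ nbhd G I)ᶜ : Finset V) ∧
      ∀ w ∈ (I ∪ nbhd G I)ᶜ, G.Adj w (f w) ∧ f w ∈ (I ∪ nbhd G I)ᶜ := by
  obtain _ | _ := isEmpty_or_nonempty V
  · exact ⟨id, by simp⟩
  obtain ⟨f, hf_inj, hf_mem⟩ := exists_injOn_forall_mem_of_card_le_card_biUnion
    (A := (I ∪ nbhd G I)ᶜ) (T := fun w => G.neighborFinset w ∩ (nbhd G I)ᶜ) fun s hs => by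
      have hIs : Disjoint I s := disjoint_compl_right.mono subset_union_left hs
      rw [← biUnion_inter, ← sdiff_eq_inter_compl]
      exact hI.card_le_card_nbhd_sdiff hIs
  refine ⟨f, hf_inj, fun w hw => ?_⟩
  obtain ⟨hadj, hfw⟩ : G.Adj w (f w) ∧ f w ∉ nbhd G I := by simpa using hf_mem w hw
  have hfwI : f w ∉ I := fun h => mem_compl.mp hw <|
    mem_union_right I (mem_nbhd.mpr ⟨f w, h, hadj.symm⟩)
  exact ⟨hadj, by simp [hfw, hfwI]⟩

end IsSurplusMaximal

end Neighborhood

section Matching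

variable {V : Type*} {G : SimpleGraph V}

theorem ncard_verts_le_two_mul_ncard_edgeSet [Finite V] {M : G.Subgraph} (hM : M.IsMatching) :
    M.verts.ncard ≤ 2 * M.edgeSet.ncard := by
  classical
  have := Fintype.ofFinite V
  have hverts : M.verts.toFinset = M.edgeSet.toFinset.biUnion Sym2.toFinset := by
    ext v
    simp [hM.verts_eq_biUnion_edgeSet]
  rw [Set.ncard_eq_toFinset_card', Set.ncard_eq_toFinset_card', hverts, mul_comm 2]
  refine card_biUnion_le_card_mul _ _ _ fun e he => ?_
  exact (Sym2.card_toFinset_of_not_isDiag e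
    (G.not_isDiag_of_mem_edgeSet (M.edgeSet_subset (Set.mem_toFinset.mp he)))).le

variable [DecidableEq V]

theorem exists_isMatching_verts_eq_union_image {A : Finset V} {f : V → V}
    (hf_inj : Set.InjOn f A) (hf_disj : Disjoint A (A.image f)) (hf_adj : ∀ a ∈ A, G.Adj a (f a)) :
    ∃ M : G.Subgraph, M.verts = (A ∪ A.image f : Finset V) ∧ M.IsMatching := by
  rw [coe_union, coe_image]
  rw [← disjoint_coe, coe_image] at hf_disj
  exact SimpleGraph.Subgraph.IsMatching.exists_of_disjoint_sets_of_equiv hf_disj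
    (hf_inj.bijOn_image.equiv f) fun a => hf_adj a a.2

variable (G) in
theorem exists_isMatching_three_mul_card_nbhd_add_card_compl_le [Fintype V]
    [G.LocallyFinite] :
    ∃ I : Finset V, Disjoint I (nbhd G I) ∧ ∃ M : G.Subgraph, M.IsMatching ∧
      3 * #(nbhd G I) + #(I ∪ nbhd G I)ᶜ ≤ 3 * M.edgeSet.ncard := by
  obtain ⟨I, hI_disj, hI⟩ := exists_disjoint_nbhd_isSurplusMaximal G
  obtain ⟨g, hg_inj, hg⟩ := hI.exists_injOn_nbhd
  obtain ⟨f, hf_inj, hf⟩ := hI.exists_injOn_compl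
  obtain ⟨S, hSW, hS, hS_card⟩ :=
    exists_subset_disjoint_image_card_le_three_mul hf_inj fun w hw => (hf w hw).1.ne'
  have hgI : (nbhd G I).image g ⊆ I := image_subset_iff.mpr fun u hu => (hg u hu).2
  have hfW : S.image f ⊆ (I ∪ nbhd G I)ᶜ := image_subset_iff.mpr fun w hw => (hf w (hSW hw)).2
  have hg_disj : Disjoint (nbhd G I) ((nbhd G I).image g) := hI_disj.symm.mono_right hgI
  have hfS_inj : Set.InjOn f S := hf_inj.mono (coe_subset.mpr hSW)
  obtain ⟨M, hM_verts, hM⟩ :=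
    exists_isMatching_verts_eq_union_image hg_inj hg_disj fun u hu => (hg u hu).1
  obtain ⟨N, hN_verts, hN⟩ :=
    exists_isMatching_verts_eq_union_image hfS_inj hS fun w hw => (hf w (hSW hw)).1
  have hMN : Disjoint (nbhd G I ∪ (nbhd G I).image g) (S ∪ S.image f) :=
    disjoint_compl_right.mono (union_subset subset_union_right (hgI.trans subset_union_left))
      (union_subset hSW hfW)
  have hMN_matching : (M ⊔ N).IsMatching := hM.sup hN <| by
    rw [hM.support_eq_verts, hN.support_eq_verts, hM_verts, hN_verts]
    exact disjoint_coe.mpr hMN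
  have hMN_card : (M ⊔ N).verts.ncard = 2 * #(nbhd G I) + 2 * #S := by
    rw [SimpleGraph.Subgraph.verts_sup, hM_verts, hN_verts, ← coe_union, Set.ncard_coe_finset,
      card_union_of_disjoint hMN, card_union_of_disjoint hg_disj, card_union_of_disjoint hS,
      card_image_of_injOn hg_inj, card_image_of_injOn hfS_inj, two_mul, two_mul]
  have := ncard_verts_le_two_mul_ncard_edgeSet hMN_matching
  exact ⟨I, hI_disj, M ⊔ N, hMN_matching, by omega⟩

end Matching

section Kt

variable {V : Type*} [Fintype V] (G : SimpleGraph V) [DecidableRel G.Adj] (t : ℕ)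

/-- The set `K_t(G) = L_t(G) ∪ H_t(G)` of the locally superior vertices of degree at most `t` and
the vertices of degree greater than `t`. -/
def Kt : Finset V :=
  {v | (G.degree v ≤ t ∧ ∃ w, G.Adj v w ∧ G.degree w ≤ G.degree v) ∨ t < G.degree v}

variable {G t}

theorem lt_degree_of_mem_Kt {v : V} (hv : v ∈ Kt G t) (hnbr : ∀ w, G.Adj v w → t < G.degree w) :
    t < G.degree v := by
  obtain ⟨hle, w, hvw, hwv⟩ | hlt := (mem_filter.mp hv).2
  · exact absurd (hwv.trans hle) (hnbr w hvw).not_ge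
  · exact hlt

variable [DecidableEq V]

theorem card_Kt_inter_le_mul_card_nbhd (harb : G.ArboricityLE t) {I : Finset V}
    (hI : Disjoint I (nbhd G I)) : #(Kt G t ∩ I) ≤ t * #(nbhd G I) := by
  set low := {u ∈ nbhd G I | G.degree u ≤ t}
  set high := {u ∈ nbhd G I | ¬G.degree u ≤ t}
  set B := (Kt G t ∩ I) \ nbhd G low
  have hBI : B ⊆ I := sdiff_subset.trans inter_subset_right
  have hB_high : nbhd G B ⊆ high := fun u hu => by
    obtain ⟨huI, hu_low⟩ := mem_sdiff.mp (nbhd_sdiff_nbhd_subset hu)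
    have hu_nbhd : u ∈ nbhd G I := nbhd_mono inter_subset_right huI
    exact mem_filter.mpr ⟨hu_nbhd, fun hle => hu_low (mem_filter.mpr ⟨hu_nbhd, hle⟩)⟩
  have hB_deg : ∀ b ∈ B, t < G.degree b := fun b hb =>
    lt_degree_of_mem_Kt (mem_inter.mp (mem_sdiff.mp hb).1).1 fun w hw =>
      not_le.mp (mem_filter.mp (hB_high (mem_nbhd.mpr ⟨b, hb, hw⟩))).2
  have hB_disj : Disjoint B high := hI.mono hBI (filter_subset _ _)
  calc #(Kt G t ∩ I) ≤ #B + #(nbhd G low) := card_le_card_sdiff_add_card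
    _ ≤ t * #high + t * #low := Nat.add_le_add
        (card_le_mul_card_of_arboricityLE harb hB_disj hB_high hB_deg)
        (card_nbhd_le_mul_card fun u hu => (mem_filter.mp hu).2)
    _ = t * #(nbhd G I) := by
        rw [← mul_add, add_comm, card_filter_add_card_filter_not]

end Kt

/-- For `t ≥ 2` and a graph `G` of arboricity at most `t`, the set
`K_t(G) = L_t(G) ∪ H_t(G)` — locally superior vertices of degree at most `t`
together with vertices of degree greater than `t` — has size at most
`(t+1)ν(G)`. -/
theorem Kt_le_matching_of_arboricity {V : Type*} [Fintype V] (G : SimpleGraph V)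
    [DecidableRel G.Adj] (t : ℕ) (ht : 2 ≤ t) (harb : G.ArboricityLE t) :
    ∃ M : G.Subgraph, M.IsMatching ∧
      ({v : V | (G.degree v ≤ t ∧ ∃ w, G.Adj v w ∧ G.degree w ≤ G.degree v) ∨
          t < G.degree v} : Set V).ncard ≤ (t + 1) * M.edgeSet.ncard := by
  classical
  obtain ⟨I, hI, M, hM, hM_card⟩ := exists_isMatching_three_mul_card_nbhd_add_card_compl_le G
  refine ⟨M, hM, ?_⟩
  rw [← coe_filter_univ, Set.ncard_coe_finset]
  change #(Kt G t) ≤ _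
  have hK : #(Kt G t) ≤ (t + 1) * #(nbhd G I) + #(I ∪ nbhd G I)ᶜ :=
    calc #(Kt G t) = #(Kt G t ∩ I) + #(Kt G t \ I) := (card_inter_add_card_sdiff _ _).symm
      _ ≤ t * #(nbhd G I) + (#(nbhd G I) + #(I ∪ nbhd G I)ᶜ) := by
        refine Nat.add_le_add (card_Kt_inter_le_mul_card_nbhd harb hI) ?_
        exact (card_le_card (by grind [mem_compl])).trans (card_union_le _ _)
      _ = (t + 1) * #(nbhd G I) + #(I ∪ nbhd G I)ᶜ := by ring
  suffices 3 * #(Kt G t) ≤ 3 * ((t + 1) * M.edgeSet.ncard) by omega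
  calc 3 * #(Kt G t) ≤ 3 * ((t + 1) * #(nbhd G I)) + 3 * #(I ∪ nbhd G I)ᶜ := by omega
    _ ≤ 3 * ((t + 1) * #(nbhd G I)) + (t + 1) * #(I ∪ nbhd G I)ᶜ := by gcongr; omega
    _ = (t + 1) * (3 * #(nbhd G I) + #(I ∪ nbhd G I)ᶜ) := by ring
    _ ≤ (t + 1) * (3 * M.edgeSet.ncard) := by gcongr
    _ = 3 * ((t + 1) * M.edgeSet.ncard) := by ring
end

section
/- If G is a planar graph, then the number of locally superior vertices satisfies |L(G)| ≤ 3ν(G). -/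
/-!
Planarity enters only through the absence of a `K₃,₃` minor. Among nine arcs joining three points
`p i` to three points `q j` in `ℂ`, two with no common endpoint must meet: otherwise the differences
of disjoint arcs have continuous logarithms, and summing their increments over the cyclic pairs of
arcs in two ways gives values that differ by an odd multiple of `π i`.

In a graph with no `K₃,₃` minor, disjoint sets `S` and `P` such that every vertex of `S` has three
neighbours in `P` satisfy `|S| ≤ 2|P|`. View `S` as a hypergraph of triples on `P` and choose a pair
`a, c` in a common triple such that all third vertices of triples through `a, c` lie in one
component of the hypergraph without `a, c`. Three triples through `a, c` would give a `K₃,₃` minor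
with that component as a branch set, so there are at most two, and contracting `a` and `c` to one
vertex through one of them costs one vertex of `P` and at most two of `S`.

By the Tutte–Berge formula some vertex set `A` and matching `M` satisfy
`|V| + |A| ≤ 2|M| + o(G - A)`, where `o` counts the components of odd order. Every such component
has at least three vertices unless it is one of the vertices isolated in `G - A`, so
`|A| + 3 o(G - A) ≤ |V| + 2|I|` for the set `I` of these. A vertex of `I` has all its neighbours
in `A`; if it is locally superior, then it is adjacent to one of the vertices of `A` of degree at
most two or has at least three neighbours, all of degree at least three. Hence `|I ∩ L(G)| ≤ 2|A|`,
and the three inequalities combine to `|L(G)| ≤ 3|M|`.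
-/

section ContinuousLogarithm

open Complex

variable {A : Type*} [TopologicalSpace A]

theorem exists_continuous_exp_eq [SimplyConnectedSpace A] [LocallyPathConnectedSpace A]
    {f : A → ℂ} (hf : Continuous f) (hf₀ : ∀ x, f x ≠ 0) :
    ∃ L : A → ℂ, Continuous L ∧ ∀ x, exp (L x) = f x := by
  obtain ⟨a⟩ : Nonempty A := inferInstance
  obtain ⟨L, ⟨-, hL⟩, -⟩ := isCoveringMapOn_exp.existsUnique_continuousMap_lifts ⟨f, hf⟩
    (a₀ := a) (exp_log (hf₀ a)) hf₀
  exact ⟨L, L.continuous, congrFun hL⟩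

theorem sub_eq_sub_of_exp_eq_exp [PreconnectedSpace A] {L L' : A → ℂ} (hL : Continuous L)
    (hL' : Continuous L') (h : ∀ x, exp (L x) = exp (L' x)) (x y : A) :
    L x - L y = L' x - L' y := by
  have hshift : L = fun z ↦ L' z + (L y - L' y) := by
    refine isCoveringMap_exp.eq_of_comp_eq hL (by fun_prop) ?_ y (by ring)
    funext z
    refine Subtype.ext ?_
    simp [exp_add, exp_sub, h]
  rw [congrFun hshift x]
  ring

/-- The increment `L 1 - L 0` of a continuous logarithm `L` of the curve `f`, that is, its
logarithmic variation over the unit interval; the junk value `0` if `f` has no such logarithm. -/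
noncomputable def logIncrement (f : ℝ → ℂ) : ℂ :=
  open Classical in
  if h : ∃ L : ℝ → ℂ, Continuous L ∧ ∀ t, exp (L t) = f t then h.choose 1 - h.choose 0 else 0

theorem logIncrement_eq_sub {f L : ℝ → ℂ} (hL : Continuous L) (hexp : ∀ t, exp (L t) = f t) :
    logIncrement f = L 1 - L 0 := by
  have h : ∃ L : ℝ → ℂ, Continuous L ∧ ∀ t, exp (L t) = f t := ⟨L, hL, hexp⟩
  rw [logIncrement, dif_pos h]
  exact sub_eq_sub_of_exp_eq_exp h.choose_spec.1 hL
    (fun t ↦ (h.choose_spec.2 t).trans (hexp t).symm) 1 0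

theorem exp_logIncrement {f : ℝ → ℂ} (hf : Continuous f) (hf₀ : ∀ t, f t ≠ 0) :
    exp (logIncrement f) = f 1 / f 0 := by
  obtain ⟨L, hL, hexp⟩ := exists_continuous_exp_eq hf hf₀
  rw [logIncrement_eq_sub hL hexp, exp_sub, hexp, hexp]

theorem logIncrement_neg {f : ℝ → ℂ} (hf : Continuous f) (hf₀ : ∀ t, f t ≠ 0) :
    logIncrement (-f) = logIncrement f := by
  obtain ⟨L, hL, hexp⟩ := exists_continuous_exp_eq hf hf₀
  have hneg : ∀ t, exp (L t + Real.pi * I) = (-f) t := fun t ↦ by simp [exp_add, hexp]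
  rw [logIncrement_eq_sub hL hexp, logIncrement_eq_sub (by fun_prop) hneg]
  ring

-- Both sides are the increment from `(0, 0)` to `(1, 1)` of a logarithm of `f s - g t` on the
-- plane of parameters `(s, t)`, along the two ways around a square.
theorem logIncrement_add_logIncrement_comm {f g : ℝ → ℂ} (hf : Continuous f) (hg : Continuous g)
    (hfg : ∀ s t, f s ≠ g t) :
    logIncrement (fun t ↦ f t - g 0) + logIncrement (fun t ↦ g t - f 1) =
      logIncrement (fun t ↦ g t - f 0) + logIncrement (fun t ↦ f t - g 1) := by
  obtain ⟨L, hL, hexp⟩ := exists_continuous_exp_eq (f := fun x : ℝ × ℝ ↦ f x.1 - g x.2)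
    (by fun_prop) fun x ↦ sub_ne_zero.mpr (hfg _ _)
  have horizontal (t : ℝ) : logIncrement (fun s ↦ f s - g t) = L (1, t) - L (0, t) :=
    logIncrement_eq_sub (L := fun s ↦ L (s, t)) (by fun_prop) fun s ↦ hexp (s, t)
  have vertical (s : ℝ) : logIncrement (fun t ↦ g t - f s) = L (s, 1) - L (s, 0) := by
    rw [← logIncrement_neg (by fun_prop) fun t ↦ sub_ne_zero.mpr (hfg s t).symm]
    exact logIncrement_eq_sub (L := fun t ↦ L (s, t)) (by fun_prop)
      fun t ↦ (hexp (s, t)).trans (neg_sub _ _).symm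
  rw [horizontal, horizontal, vertical, vertical]
  ring

end ContinuousLogarithm

section CompleteBipartiteCurves

open Complex

variable {p q : Fin 3 → ℂ} {g : Fin 3 → Fin 3 → ℝ → ℂ}

theorem sum_logIncrement_cyclic_eq (hg : ∀ i j, Continuous (g i j))
    (hp : ∀ i j, g i j 0 = p i) (hq : ∀ i j, g i j 1 = q j)
    (hdisj : ∀ i k j l, i ≠ k → j ≠ l → ∀ s t, g i j s ≠ g k l t) :
    ∑ i, ∑ j, logIncrement (fun t ↦ g i j t - p (i + 1)) =
      ∑ i, ∑ j, logIncrement (fun t ↦ g (i + 1) j t - p i) := by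
  set θ : Fin 3 → Fin 3 → ℂ → ℂ := fun i j v ↦ logIncrement fun t ↦ g i j t - v
  have four_term (i k j l : Fin 3) (hik : i ≠ k) (hjl : j ≠ l) :
      θ i j (p k) + θ k l (q j) = θ k l (p i) + θ i j (q l) := by
    have := logIncrement_add_logIncrement_comm (hg i j) (hg k l) (hdisj i k j l hik hjl)
    simpa only [hp, hq] using this
  set T : Fin 3 → ℂ := fun i ↦ ∑ j, (θ i j (q (j + 1)) + θ i j (q (j + 2)))
  have sum_four_term (i k : Fin 3) (hik : i ≠ k) :
      2 * ∑ j, θ i j (p k) - 2 * ∑ j, θ k j (p i) = T i - T k := by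
    simp only [Fin.sum_univ_three, Fin.reduceAdd, zero_add, T]
    linear_combination four_term i k 0 1 hik (by decide) + four_term i k 0 2 hik (by decide) +
      four_term i k 1 0 hik (by decide) + four_term i k 1 2 hik (by decide) +
      four_term i k 2 0 hik (by decide) + four_term i k 2 1 hik (by decide)
  have h₀₁ := sum_four_term 0 1 (by decide)
  have h₁₂ := sum_four_term 1 2 (by decide)
  have h₂₀ := sum_four_term 2 0 (by decide)
  change ∑ i, ∑ j, θ i j (p (i + 1)) = ∑ i, ∑ j, θ (i + 1) j (p i)
  simp only [Fin.sum_univ_three, Fin.reduceAdd, zero_add] at h₀₁ h₁₂ h₂₀ ⊢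
  linear_combination (h₀₁ + h₁₂ + h₂₀) / 2

-- Otherwise the exponentials of the two sides of `sum_logIncrement_cyclic_eq` differ by `(-1) ^ 9`,
-- one sign for each pair of an `i` and a `j`.
theorem exists_eq_of_completeBipartite_curves (hg : ∀ i j, Continuous (g i j))
    (hp : ∀ i j, g i j 0 = p i) (hq : ∀ i j, g i j 1 = q j) :
    ∃ i k j l, i ≠ k ∧ j ≠ l ∧ ∃ s t, g i j s = g k l t := by
  by_contra! hdisj
  have ne_succ : ∀ i : Fin 3, i ≠ i + 1 := by decide
  have exp_theta (i k j : Fin 3) (hik : i ≠ k) :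
      exp (logIncrement fun t ↦ g i j t - p k) = (q j - p k) / (p i - p k) := by
    rw [exp_logIncrement (by fun_prop) fun t ↦ ?_, hp, hq]
    rw [← hp k (j + 1)]
    exact sub_ne_zero.mpr (hdisj i k j (j + 1) hik (ne_succ j) t 0)
  have hpp (i : Fin 3) : p i - p (i + 1) ≠ 0 := by
    rw [← hp i 0, ← hp (i + 1) 1]
    exact sub_ne_zero.mpr (hdisj i (i + 1) 0 1 (ne_succ i) (by decide) 0 0)
  have hqp (i j : Fin 3) : q j - p i ≠ 0 := by
    rw [← hp i (j + 1), ← hq (i + 1) j]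
    exact sub_ne_zero.mpr (hdisj (i + 1) i j (j + 1) (ne_succ i).symm (ne_succ j) 1 0)
  have ratio (i j : Fin 3) :
      exp (logIncrement fun t ↦ g i j t - p (i + 1)) =
        -((q j - p (i + 1)) / (q j - p i)) * exp (logIncrement fun t ↦ g (i + 1) j t - p i) := by
    rw [exp_theta _ _ _ (ne_succ i), exp_theta _ _ _ (ne_succ i).symm, ← neg_sub (p i) (p (i + 1))]
    have := hpp i
    have := hqp i j
    field_simp
  have hprod : ∏ i, ∏ j, -((q j - p (i + 1)) / (q j - p i)) = (-1 : ℂ) := by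
    simp only [Fin.prod_univ_three, Fin.reduceAdd, zero_add]
    field_simp [hqp]
  have hexp := congrArg exp (sum_logIncrement_cyclic_eq hg hp hq hdisj)
  simp only [exp_sum, ratio, Finset.prod_mul_distrib, hprod] at hexp
  have hne : ∏ i, ∏ j, exp (logIncrement fun t ↦ g (i + 1) j t - p i) ≠ 0 := by
    simp only [← exp_sum, exp_ne_zero, ne_eq, not_false_eq_true]
  exact hne (by linear_combination (-1 / 2) * hexp)

end CompleteBipartiteCurves

section Minors

open SimpleGraph

variable {V W : Type*}

/-- The sets `B w` are the branch sets of a model of `H` as a minor of `G`: they are connected and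
pairwise disjoint, and those of adjacent vertices of `H` are joined by an edge of `G`. -/
structure IsMinorModel (H : SimpleGraph W) (G : SimpleGraph V) (B : W → Set V) : Prop where
  connected (w : W) : (G.induce (B w)).Connected
  pairwise_disjoint : Pairwise (Function.onFun Disjoint B)
  exists_adj {w w' : W} (h : H.Adj w w') : ∃ x ∈ B w, ∃ y ∈ B w', G.Adj x y

/-- `H` is a minor of `G`, expressed by branch sets rather than by deletions and contractions. -/
def IsMinor (H : SimpleGraph W) (G : SimpleGraph V) : Prop :=
  ∃ B : W → Set V, IsMinorModel H G B

end Minors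

section Drawing

open SimpleGraph

variable {V X : Type*} [TopologicalSpace X] {G : SimpleGraph V}

/-- A drawing without crossings of the graph `G` in the space `X`. In contrast to
`SimpleGraph.IsPlanar`, the arcs need not be injective, and the arcs of `uv` and `vu` are
unrelated. -/
structure Drawing (G : SimpleGraph V) (X : Type*) [TopologicalSpace X] where
  pos : V → X
  arc ⦃u v : V⦄ (h : G.Adj u v) : Path (pos u) (pos v)
  pos_injective : Function.Injective pos
  arc_ne_pos ⦃u v : V⦄ (h : G.Adj u v) {t : unitInterval} (ht₀ : t ≠ 0) (ht₁ : t ≠ 1) (w : V) :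
    arc h t ≠ pos w
  arc_ne_arc ⦃u v u' v' : V⦄ (h : G.Adj u v) (h' : G.Adj u' v') {t : unitInterval} (ht₀ : t ≠ 0)
    (ht₁ : t ≠ 1) (hne : s(u, v) ≠ s(u', v')) (t' : unitInterval) : arc h t ≠ arc h' t'

namespace Drawing

variable (D : Drawing G X)

theorem eq_or_eq_of_arc_eq_pos {u v w : V} {h : G.Adj u v} {t : unitInterval}
    (ht : D.arc h t = D.pos w) : w = u ∨ w = v := by
  by_cases ht₀ : t = 0
  · subst ht₀
    exact .inl (D.pos_injective (ht.symm.trans (D.arc h).source))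
  by_cases ht₁ : t = 1
  · subst ht₁
    exact .inr (D.pos_injective (ht.symm.trans (D.arc h).target))
  exact absurd ht (D.arc_ne_pos h ht₀ ht₁ w)

/-- The part of the drawing that belongs to the subgraph induced on `W`. -/
def region (W : Set V) : Set X :=
  D.pos '' W ∪ {x | ∃ (u v : V) (h : G.Adj u v), u ∈ W ∧ v ∈ W ∧ x ∈ Set.range (D.arc h)}

variable {D} {W W' : Set V}

theorem pos_mem_region {w : V} (hw : w ∈ W) : D.pos w ∈ D.region W :=
  .inl ⟨w, hw, rfl⟩

theorem arc_mem_region {u v : V} (h : G.Adj u v) (hu : u ∈ W) (hv : v ∈ W) (t : unitInterval) :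
    D.arc h t ∈ D.region W :=
  .inr ⟨u, v, h, hu, hv, t, rfl⟩

theorem mem_of_pos_mem_region {w : V} (hw : D.pos w ∈ D.region W) : w ∈ W := by
  obtain ⟨w', hw', heq⟩ | ⟨u, v, h, hu, hv, t, ht⟩ := hw
  · exact D.pos_injective heq ▸ hw'
  · obtain rfl | rfl := D.eq_or_eq_of_arc_eq_pos ht
    exacts [hu, hv]

theorem disjoint_region (hW : Disjoint W W') : Disjoint (D.region W) (D.region W') := by
  rw [Set.disjoint_left]
  have pos_notMem (w : V) (hw : w ∈ W) : D.pos w ∉ D.region W' := fun h ↦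
    hW.notMem_of_mem_left hw (mem_of_pos_mem_region h)
  rintro _ (⟨w, hw, rfl⟩ | ⟨u, v, h, hu, hv, t, rfl⟩) hx
  · exact pos_notMem w hw hx
  by_cases ht₀ : t = 0
  · rw [ht₀, Path.source] at hx
    exact pos_notMem u hu hx
  by_cases ht₁ : t = 1
  · rw [ht₁, Path.target] at hx
    exact pos_notMem v hv hx
  obtain ⟨w, -, hw⟩ | ⟨u', v', h', hu', hv', t', ht'⟩ := hx
  · exact D.arc_ne_pos h ht₀ ht₁ w hw.symm
  · refine D.arc_ne_arc h h' ht₀ ht₁ (fun heq ↦ ?_) t' ht'.symm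
    obtain ⟨rfl, -⟩ | ⟨rfl, -⟩ := Sym2.eq_iff.mp heq
    · exact hW.notMem_of_mem_left hu hu'
    · exact hW.notMem_of_mem_left hu hv'

theorem joinedIn_region (hW : (G.induce W).Preconnected) {u v : V} (hu : u ∈ W) (hv : v ∈ W) :
    JoinedIn (D.region W) (D.pos u) (D.pos v) := by
  obtain ⟨walk⟩ := hW ⟨u, hu⟩ ⟨v, hv⟩
  suffices ∀ {x y : W}, (G.induce W).Walk x y → JoinedIn (D.region W) (D.pos x) (D.pos y) from
    this walk
  intro x y walk
  induction walk with
  | nil => exact .refl (pos_mem_region (Subtype.prop _))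
  | @cons x y _ h _ ih =>
    have hxy : G.Adj x y := h
    exact .trans ⟨D.arc hxy, arc_mem_region hxy x.2 y.2⟩ ih

end Drawing

theorem not_isMinor_completeBipartiteGraph_of_drawing (D : Drawing G ℂ) :
    ¬ IsMinor (completeBipartiteGraph (Fin 3) (Fin 3)) G := by
  rintro ⟨B, hB⟩
  choose x hx using fun w ↦ Set.nonempty_coe_sort.mp (hB.connected w).nonempty
  have joined (i j : Fin 3) : JoinedIn (D.region (B (.inl i) ∪ B (.inr j)))
      (D.pos (x (.inl i))) (D.pos (x (.inr j))) := by
    obtain ⟨u, hu, v, hv, huv⟩ := hB.exists_adj (w := .inl i) (w' := .inr j) (by simp)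
    exact D.joinedIn_region (connected_induce_union (hB.connected _).preconnected
      (hB.connected _).preconnected hu hv huv).preconnected (.inl (hx _)) (.inr (hx _))
  choose γ hγ using joined
  obtain ⟨i, k, j, l, hik, hjl, s, t, hst⟩ := exists_eq_of_completeBipartite_curves
    (g := fun i j ↦ (γ i j).extend) (fun i j ↦ (γ i j).continuous_extend)
    (fun i j ↦ (γ i j).extend_zero) (fun i j ↦ (γ i j).extend_one)
  have extend_mem (i j : Fin 3) (s : ℝ) :
      (γ i j).extend s ∈ D.region (B (.inl i) ∪ B (.inr j)) := hγ i j _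
  have hdisj : Disjoint (B (.inl i) ∪ B (.inr j)) (B (.inl k) ∪ B (.inr l)) := by
    simp only [Set.disjoint_union_left, Set.disjoint_union_right]
    exact ⟨⟨hB.pairwise_disjoint (by simpa), hB.pairwise_disjoint (by simp)⟩,
      hB.pairwise_disjoint (by simp), hB.pairwise_disjoint (by simpa)⟩
  exact (Drawing.disjoint_region hdisj).ne_of_mem (extend_mem i j s) (extend_mem k l t) hst

theorem nonempty_drawing_of_isPlanar (hG : G.IsPlanar) : Nonempty (Drawing G ℂ) := by
  obtain ⟨pos, γ, hpos, hγ, -, hγ_pos, hγ_γ⟩ := hG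
  let e : (ℝ × ℝ) ≃L[ℝ] ℂ := Complex.equivRealProdCLM.symm
  exact ⟨{
    pos := fun v ↦ e (pos v)
    arc := fun u v h ↦
      { toFun := fun t ↦ e (γ h t)
        continuous_toFun := e.continuous.comp (hγ h).1
        source' := congrArg e (hγ h).2.2.1
        target' := congrArg e (hγ h).2.2.2 }
    pos_injective := e.injective.comp hpos
    arc_ne_pos := fun u v h t ht₀ ht₁ w ↦ e.injective.ne (hγ_pos h t ht₀ ht₁ w)
    arc_ne_arc := fun u v u' v' h h' t ht₀ ht₁ hne t' ↦
      e.injective.ne fun heq ↦ (hγ_γ h h' t t' hne heq).elim ht₀ ht₁ }⟩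

theorem not_isMinor_completeBipartiteGraph_of_isPlanar (hG : G.IsPlanar) :
    ¬ IsMinor (completeBipartiteGraph (Fin 3) (Fin 3)) G :=
  (nonempty_drawing_of_isPlanar hG).elim not_isMinor_completeBipartiteGraph_of_drawing

end Drawing

section ConnectedSets

open SimpleGraph

variable {V ι κ α : Type*} {G : SimpleGraph V}

theorem connected_induce_union_of_forall_exists_adj {B T : Set V} (hB : (G.induce B).Connected)
    (hT : ∀ v ∈ T, ∃ x ∈ B, G.Adj v x) : (G.induce (B ∪ T)).Connected := by
  obtain ⟨u, hu⟩ := hB.nonempty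
  refine induce_connected_of_patches u (.inl hu) fun {v} hv ↦ ?_
  obtain hv | hv := hv
  · exact ⟨B, Set.subset_union_left, hu, hv, hB _ _⟩
  · obtain ⟨x, hx, hvx⟩ := hT v hv
    have hconn : (G.induce (B ∪ {v})).Connected := connected_induce_union hB.preconnected
      Preconnected.of_subsingleton hx (Set.mem_singleton v) hvx.symm
    exact ⟨B ∪ {v}, Set.union_subset_union_right B (Set.singleton_subset_iff.mpr hv),
      .inl hu, .inr rfl, hconn _ _⟩

theorem connected_induce_biUnion_reachable {H : SimpleGraph ι} {C : ι → Set V} {b : ι}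
    (hC : ∀ k, H.Reachable b k → (G.induce (C k)).Connected)
    (hmeet : ∀ k l, H.Adj k l → (C k ∩ C l).Nonempty) :
    (G.induce (⋃ k ∈ {k | H.Reachable b k}, C k)).Connected := by
  have chain (k : ι) (hk : H.Reachable b k) : ∃ s ⊆ ⋃ k ∈ {k | H.Reachable b k}, C k,
      C b ⊆ s ∧ C k ⊆ s ∧ (G.induce s).Connected := by
    rw [reachable_iff_reflTransGen] at hk
    induction hk with
    | refl => exact ⟨C b, Set.subset_biUnion_of_mem (u := C) (Reachable.refl b),
        subset_rfl, subset_rfl, hC b (.refl b)⟩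
    | @tail k l hk hkl ih =>
      obtain ⟨s, hs, hbs, hks, hconn⟩ := ih
      have hl : H.Reachable b l := ((reachable_iff_reflTransGen b k).mpr hk).trans hkl.reachable
      refine ⟨s ∪ C l, Set.union_subset hs (Set.subset_biUnion_of_mem (u := C) hl),
        hbs.trans Set.subset_union_left, Set.subset_union_right,
        induce_union_connected hconn.preconnected (hC l hl).preconnected ?_⟩
      exact (hmeet k l hkl).mono (Set.inter_subset_inter_left _ hks)
  obtain ⟨u, hu⟩ := (hC b (.refl b)).nonempty
  refine induce_connected_of_patches u (Set.mem_biUnion (Reachable.refl b) hu) fun {v} hv ↦ ?_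
  obtain ⟨k, hk, hvk⟩ := Set.mem_iUnion₂.mp hv
  obtain ⟨s, hs, hbs, hks, hconn⟩ := chain k hk
  exact ⟨s, hs, hbs hu, hks hvk, hconn _ _⟩

theorem isMinor_completeBipartiteGraph {s : α → V} {D : κ → Set V} (hs : Function.Injective s)
    (hD : ∀ j, (G.induce (D j)).Connected) (hdisj : Pairwise (Function.onFun Disjoint D))
    (hsD : ∀ i j, s i ∉ D j) (hadj : ∀ i j, ∃ x ∈ D j, G.Adj (s i) x) :
    IsMinor (completeBipartiteGraph α κ) G := by
  refine ⟨Sum.elim (fun i ↦ {s i}) D, ?_, ?_, ?_⟩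
  · rintro (i | j)
    exacts [Connected.of_subsingleton (V := ({s i} : Set V)), hD j]
  · rintro (i | j) (i' | j') hne
    · simpa [Function.onFun, hs.eq_iff, eq_comm] using hne
    · simpa [Function.onFun] using hsD i j'
    · simpa [Function.onFun] using hsD i' j
    · exact hdisj (by simpa using hne)
  · rintro (i | j) (i' | j') h
    · simp at h
    · simpa using hadj i j'
    · simpa [adj_comm] using hadj i' j
    · simp at h

end ConnectedSets

section Shadow

open SimpleGraph

variable {α ι : Type*} {S : Finset α} {τ : α → Finset ι} {A : Set ι} {a b c d k : ι}

/-- The `2`-shadow of the hypergraph with edges `τ s`, `s ∈ S`, after deletion of the vertices in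
`A`; the deleted vertices are kept as isolated ones. -/
def shadowAvoiding (S : Finset α) (τ : α → Finset ι) (A : Set ι) : SimpleGraph ι where
  Adj k l := k ≠ l ∧ k ∉ A ∧ l ∉ A ∧ ∃ s ∈ S, k ∈ τ s ∧ l ∈ τ s
  symm := ⟨fun _ _ ⟨hne, hk, hl, s, hs, hks, hls⟩ ↦ ⟨hne.symm, hl, hk, s, hs, hls, hks⟩⟩
  loopless := ⟨fun _ h ↦ h.1 rfl⟩

theorem notMem_of_reachable_shadowAvoiding (hb : b ∉ A)
    (h : (shadowAvoiding S τ A).Reachable b k) : k ∉ A := by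
  obtain rfl | hne := eq_or_ne k b
  · exact hb
  · obtain ⟨l, hkl⟩ := (mem_support _).mp (mem_support_of_reachable hne h.symm)
    exact hkl.2.1

theorem reachable_shadowAvoiding_of_not_reachable
    (hb : ¬ (shadowAvoiding S τ {a, c}).Reachable d b)
    (h : (shadowAvoiding S τ {a, c}).Reachable d k) :
    (shadowAvoiding S τ {a, b}).Reachable d k := by
  rw [reachable_iff_reflTransGen] at h
  induction h with
  | refl => rfl
  | @tail k l hk hkl ih =>
    have hdk := (reachable_iff_reflTransGen d k).mpr hk
    have hkb : k ≠ b := by rintro rfl; exact hb hdk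
    have hlb : l ≠ b := by rintro rfl; exact hb (hdk.trans hkl.reachable)
    obtain ⟨hne, hk, hl, s, hs, hks, hls⟩ := hkl
    simp only [Set.mem_insert_iff, Set.mem_singleton_iff, not_or] at hk hl
    refine ih.trans (Adj.reachable ⟨hne, ?_, ?_, s, hs, hks, hls⟩)
    · simp [hk.1, hkb]
    · simp [hl.1, hlb]

/-- `a`, `b` and `c` are three different vertices of a common edge `τ s` with `s ∈ S`. -/
def IsEdgeTriple (S : Finset α) (τ : α → Finset ι) (a b c : ι) : Prop :=
  a ≠ b ∧ a ≠ c ∧ b ≠ c ∧ ∃ s ∈ S, a ∈ τ s ∧ b ∈ τ s ∧ c ∈ τ s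

open Classical in
theorem component_ssubset_component (habc : IsEdgeTriple S τ a b c) (hacd : IsEdgeTriple S τ a c d)
    (hbd : ¬ (shadowAvoiding S τ {a, c}).Reachable b d) :
    {k ∈ S.biUnion τ | (shadowAvoiding S τ {a, c}).Reachable d k} ⊂
      {k ∈ S.biUnion τ | (shadowAvoiding S τ {a, b}).Reachable c k} := by
  obtain ⟨-, hac, hbc, -⟩ := habc
  obtain ⟨-, had, hcd, s, hs, -, hcs, hds⟩ := hacd
  have hbd' : b ≠ d := by rintro rfl; exact hbd (.refl b)
  have hcd_reach : (shadowAvoiding S τ {a, b}).Reachable c d :=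
    Adj.reachable ⟨hcd, by simp [hac.symm, hbc.symm], by simp [had.symm, hbd'.symm],
      s, hs, hcs, hds⟩
  rw [Finset.ssubset_iff_of_subset]
  · refine ⟨c, by simpa using ⟨s, hs, hcs⟩, fun hc ↦ ?_⟩
    exact notMem_of_reachable_shadowAvoiding (by simp [had.symm, hcd.symm])
      (Finset.mem_filter.mp hc).2 (Set.mem_insert_of_mem a rfl)
  · intro k hk
    obtain ⟨hkS, hdk⟩ := Finset.mem_filter.mp hk
    exact Finset.mem_filter.mpr ⟨hkS, hcd_reach.trans
      (reachable_shadowAvoiding_of_not_reachable (fun h ↦ hbd h.symm) hdk)⟩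

open Classical in
-- If `{a, c}` separates `d` from `b`, replace `(a, b, c)` by `(a, c, d)`; this shrinks the
-- component of the third vertex after deletion of the first two.
theorem exists_isEdgeTriple_forall_reachable (h : IsEdgeTriple S τ a b c) :
    ∃ b c, IsEdgeTriple S τ a b c ∧
      ∀ d, IsEdgeTriple S τ a c d → (shadowAvoiding S τ {a, c}).Reachable b d := by
  induction hK : ({k ∈ S.biUnion τ | (shadowAvoiding S τ {a, b}).Reachable c k})
    using Finset.strongInduction generalizing b c with
  | H K ih =>
    by_cases hall : ∀ d, IsEdgeTriple S τ a c d → (shadowAvoiding S τ {a, c}).Reachable b d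
    · exact ⟨b, c, h, hall⟩
    · push Not at hall
      obtain ⟨d, hacd, hbd⟩ := hall
      exact ih _ (hK ▸ component_ssubset_component h hacd hbd) hacd rfl

end Shadow

section TripleModel

open SimpleGraph

variable {V ι : Type*} {G : SimpleGraph V} {S : Finset V} {P : Finset ι} {τ : V → Finset ι}
  {B : ι → Set V} {a b c : ι} {s : V}

/-- `G` contains, up to contraction of the connected sets `B k` for `k ∈ P`, a bipartite graph in
which every `s ∈ S` has exactly the three neighbours `τ s ⊆ P`. -/
structure IsTripleModel (G : SimpleGraph V) (S : Finset V) (P : Finset ι) (τ : V → Finset ι)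
    (B : ι → Set V) : Prop where
  subset ⦃s : V⦄ (hs : s ∈ S) : τ s ⊆ P
  card_eq_three ⦃s : V⦄ (hs : s ∈ S) : (τ s).card = 3
  exists_adj ⦃s : V⦄ (hs : s ∈ S) ⦃k : ι⦄ (hk : k ∈ τ s) : ∃ x ∈ B k, G.Adj s x
  connected ⦃k : ι⦄ (hk : k ∈ P) : (G.induce (B k)).Connected
  pairwiseDisjoint : (P : Set ι).PairwiseDisjoint B
  notMem ⦃s : V⦄ (hs : s ∈ S) ⦃k : ι⦄ (hk : k ∈ P) : s ∉ B k

namespace IsTripleModel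

theorem exists_isEdgeTriple (M : IsTripleModel G S P τ B) (hs : s ∈ S) :
    ∃ a b c, IsEdgeTriple S τ a b c := by
  obtain ⟨a, ha, b, hb, c, hc, hab, hac, hbc⟩ :=
    Finset.two_lt_card.mp (show 2 < (τ s).card by rw [M.card_eq_three hs]; norm_num)
  exact ⟨a, b, c, hab, hac, hbc, s, hs, ha, hb, hc⟩

theorem exists_isEdgeTriple_of_mem (M : IsTripleModel G S P τ B) (hs : s ∈ S) (ha : a ∈ τ s)
    (hc : c ∈ τ s) (hac : a ≠ c) : ∃ d ∈ τ s, IsEdgeTriple S τ a c d := by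
  classical
  obtain ⟨d, hd, hdac⟩ : ∃ d ∈ τ s, d ∉ ({a, c} : Finset ι) := by
    refine Finset.exists_mem_notMem_of_card_lt_card ?_
    rw [M.card_eq_three hs]
    exact Finset.card_le_two.trans_lt (by norm_num)
  simp only [Finset.mem_insert, Finset.mem_singleton, not_or] at hdac
  exact ⟨d, hd, hac, Ne.symm hdac.1, Ne.symm hdac.2, s, hs, ha, hc, hd⟩

theorem reachable_mem (M : IsTripleModel G S P τ B) {A : Set ι} {k : ι} (hb : b ∈ P)
    (h : (shadowAvoiding S τ A).Reachable b k) : k ∈ P := by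
  obtain rfl | hne := eq_or_ne k b
  · exact hb
  · obtain ⟨l, -, -, -, s, hs, hks, -⟩ := (mem_support _).mp (mem_support_of_reachable hne h.symm)
    exact M.subset hs hks

variable (S τ B) in
/-- The set `B k` together with the vertices of `S` attached to it, except those attached to both
`a` and `c`. -/
def star (a c k : ι) : Set V :=
  B k ∪ {v | v ∈ S ∧ k ∈ τ v ∧ ¬ (a ∈ τ v ∧ c ∈ τ v)}

variable (S τ B) in
/-- The union of the sets `star a c k` over the component of `b` in the shadow without `a`
and `c`. -/
def componentBranchSet (a b c : ι) : Set V :=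
  ⋃ k ∈ {k | (shadowAvoiding S τ {a, c}).Reachable b k}, star S τ B a c k

theorem connected_componentBranchSet (M : IsTripleModel G S P τ B) (hb : b ∈ P) (hac : a ≠ c) :
    (G.induce (componentBranchSet S τ B a b c)).Connected := by
  classical
  refine connected_induce_biUnion_reachable (fun k hk ↦ ?_) fun k l hkl ↦ ?_
  · exact connected_induce_union_of_forall_exists_adj (M.connected (M.reachable_mem hb hk))
      fun v ⟨hv, hkv, _⟩ ↦ M.exists_adj hv hkv
  · obtain ⟨hne, hk, hl, s, hs, hks, hls⟩ := hkl
    simp only [Set.mem_insert_iff, Set.mem_singleton_iff, not_or] at hk hl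
    have not_both : ¬ (a ∈ τ s ∧ c ∈ τ s) := by
      rintro ⟨has, hcs⟩
      have hsub : ({a, c, k, l} : Finset ι) ⊆ τ s := by
        simp [Finset.insert_subset_iff, has, hcs, hks, hls]
      have hcard : ({a, c, k, l} : Finset ι).card = 4 := by
        simp [Finset.card_insert_of_notMem, hac, hne, Ne.symm hk.1, Ne.symm hk.2, Ne.symm hl.1,
          Ne.symm hl.2]
      have := Finset.card_le_card hsub
      have := M.card_eq_three hs
      omega
    exact ⟨s, .inr ⟨hs, hks, not_both⟩, .inr ⟨hs, hls, not_both⟩⟩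

theorem disjoint_componentBranchSet (M : IsTripleModel G S P τ B) (hb : b ∈ P) (hba : b ≠ a)
    (hbc : b ≠ c) {k : ι} (hk : k ∈ P) (hkac : k ∈ ({a, c} : Set ι)) :
    Disjoint (B k) (componentBranchSet S τ B a b c) := by
  simp only [componentBranchSet, star, Set.disjoint_iUnion_right, Set.disjoint_union_right]
  refine fun l hl ↦ ⟨M.pairwiseDisjoint hk (M.reachable_mem hb hl) ?_, ?_⟩
  · rintro rfl
    exact notMem_of_reachable_shadowAvoiding (by simp [hba, hbc]) hl hkac
  · exact Set.disjoint_left.mpr fun v hv ⟨hvS, _⟩ ↦ M.notMem hvS hk hv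

open Classical in
theorem isMinor_of_two_lt_card (M : IsTripleModel G S P τ B) (h : IsEdgeTriple S τ a b c)
    (hall : ∀ d, IsEdgeTriple S τ a c d → (shadowAvoiding S τ {a, c}).Reachable b d)
    (hcard : 2 < {s ∈ S | a ∈ τ s ∧ c ∈ τ s}.card) :
    IsMinor (completeBipartiteGraph (Fin 3) (Fin 3)) G := by
  obtain ⟨hab, hac, hbc, s, hs, has, hbs, hcs⟩ := h
  have haP := M.subset hs has
  have hbP := M.subset hs hbs
  have hcP := M.subset hs hcs
  obtain ⟨f⟩ := Function.Embedding.nonempty_of_card_le (α := Fin 3)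
    (β := {s ∈ S | a ∈ τ s ∧ c ∈ τ s}) (by simpa [Nat.succ_le_iff] using hcard)
  have hf (i : Fin 3) : (f i : V) ∈ S ∧ a ∈ τ (f i) ∧ c ∈ τ (f i) :=
    Finset.mem_filter.mp (f i).2
  refine isMinor_completeBipartiteGraph (s := fun i ↦ (f i : V))
    (D := ![B a, B c, componentBranchSet S τ B a b c]) (Subtype.val_injective.comp f.injective)
    ?_ ?_ (fun i ↦ ?_) (fun i ↦ ?_)
  · simpa [Fin.forall_fin_succ] using
      ⟨M.connected haP, M.connected hcP, M.connected_componentBranchSet hbP hac⟩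
  · have hac_disj := M.pairwiseDisjoint haP hcP hac
    have ha_disj := M.disjoint_componentBranchSet hbP hab.symm hbc haP (.inl rfl)
    have hc_disj := M.disjoint_componentBranchSet hbP hab.symm hbc hcP (.inr rfl)
    simpa [Pairwise, Function.onFun, Fin.forall_fin_succ] using
      ⟨⟨hac_disj, ha_disj⟩, ⟨hac_disj.symm, hc_disj⟩, ha_disj.symm, hc_disj.symm⟩
  · obtain ⟨hS, ha, hc⟩ := hf i
    have hnotMem (k : ι) (hk : (shadowAvoiding S τ {a, c}).Reachable b k) : (f i : V) ∉ B k :=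
      M.notMem hS (M.reachable_mem hbP hk)
    simpa [Fin.forall_fin_succ, componentBranchSet, star, ha, hc] using
      ⟨M.notMem hS haP, M.notMem hS hcP, hnotMem⟩
  · obtain ⟨hS, ha, hc⟩ := hf i
    obtain ⟨d, hd, hacd⟩ := M.exists_isEdgeTriple_of_mem hS ha hc hac
    obtain ⟨x, hx, hadj⟩ := M.exists_adj hS hd
    have hthird : ∃ x ∈ componentBranchSet S τ B a b c, G.Adj (f i) x :=
      ⟨x, Set.mem_biUnion (hall d hacd) (.inl hx), hadj⟩
    simpa [Fin.forall_fin_succ] using ⟨M.exists_adj hS ha, M.exists_adj hS hc, hthird⟩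

section Contract

variable [DecidableEq ι]

variable (B) in
/-- The sets `B` after contraction of `B a`, `B b` and the vertex `s` to a single set with
index `a`. -/
def contractSets (a b : ι) (s : V) : ι → Set V :=
  Function.update B a (B a ∪ {s} ∪ B b)

theorem subset_contractSets (k : ι) :
    B k ⊆ contractSets B a b s (Function.update id b a k) := by
  obtain rfl | hkb := eq_or_ne k b
  · rw [Function.update_self, contractSets, Function.update_self]
    exact Set.subset_union_right
  rw [Function.update_of_ne hkb, id_eq, contractSets]
  obtain rfl | hka := eq_or_ne k a
  · rw [Function.update_self, Set.union_assoc]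
    exact Set.subset_union_left
  · rw [Function.update_of_ne hka]

theorem pairwiseDisjoint_contractSets (M : IsTripleModel G S P τ B) (hs : s ∈ S) (ha : a ∈ τ s)
    (hb : b ∈ τ s) : (P.erase b : Set ι).PairwiseDisjoint (contractSets B a b s) := by
  have disjoint_merged {k : ι} (hk : k ∈ P.erase b) (hka : k ≠ a) :
      Disjoint (B a ∪ {s} ∪ B b) (B k) := by
    obtain ⟨hkb, hkP⟩ := Finset.mem_erase.mp hk
    simp only [Set.disjoint_union_left, Set.disjoint_singleton_left]
    exact ⟨⟨M.pairwiseDisjoint (M.subset hs ha) hkP hka.symm, M.notMem hs hkP⟩,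
      M.pairwiseDisjoint (M.subset hs hb) hkP hkb.symm⟩
  intro k hk l hl hkl
  rw [Function.onFun, contractSets]
  obtain rfl | hka := eq_or_ne k a
  · rw [Function.update_self, Function.update_of_ne hkl.symm]
    exact disjoint_merged hl hkl.symm
  obtain rfl | hla := eq_or_ne l a
  · rw [Function.update_self, Function.update_of_ne hkl]
    exact (disjoint_merged hk hkl).symm
  · rw [Function.update_of_ne hka, Function.update_of_ne hla]
    exact M.pairwiseDisjoint (Finset.mem_of_mem_erase hk) (Finset.mem_of_mem_erase hl) hkl

theorem connected_contractSets (M : IsTripleModel G S P τ B) (hs : s ∈ S) (ha : a ∈ τ s)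
    (hb : b ∈ τ s) {k : ι} (hk : k ∈ P) : (G.induce (contractSets B a b s k)).Connected := by
  rw [contractSets]
  obtain rfl | hka := eq_or_ne k a
  · obtain ⟨x, hx, hsx⟩ := M.exists_adj hs ha
    obtain ⟨y, hy, hsy⟩ := M.exists_adj hs hb
    rw [Function.update_self]
    refine connected_induce_union (Connected.preconnected ?_)
      (M.connected (M.subset hs hb)).preconnected (.inr rfl) hy hsy
    exact connected_induce_union (M.connected hk).preconnected Preconnected.of_subsingleton hx
      (Set.mem_singleton s) hsx.symm
  · rw [Function.update_of_ne hka]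
    exact M.connected hk

theorem notMem_contractSets (M : IsTripleModel G S P τ B) (hs : s ∈ S) (ha : a ∈ τ s)
    (hb : b ∈ τ s) {v : V} (hv : v ∈ S) (hvs : v ≠ s) {k : ι} (hk : k ∈ P) :
    v ∉ contractSets B a b s k := by
  rw [contractSets]
  obtain rfl | hka := eq_or_ne k a
  · simp [hvs, M.notMem hv hk, M.notMem hv (M.subset hs hb)]
  · rw [Function.update_of_ne hka]
    exact M.notMem hv hk

theorem contract (M : IsTripleModel G S P τ B) (hs : s ∈ S) (ha : a ∈ τ s) (hb : b ∈ τ s)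
    (hab : a ≠ b) :
    IsTripleModel G {v ∈ S | ¬ (a ∈ τ v ∧ b ∈ τ v)} (P.erase b)
      (fun v ↦ (τ v).image (Function.update id b a)) (contractSets B a b s) where
  subset v hv := by
    obtain ⟨hvS, -⟩ := Finset.mem_filter.mp hv
    rw [Finset.image_subset_iff]
    intro k hk
    obtain rfl | hkb := eq_or_ne k b
    · simp [hab, M.subset hs ha]
    · simp [hkb, M.subset hvS hk]
  card_eq_three v hv := by
    obtain ⟨hvS, hnot⟩ := Finset.mem_filter.mp hv
    rw [Finset.card_image_of_injOn, M.card_eq_three hvS]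
    intro k hk l hl hkl
    grind [Function.update_apply]
  exists_adj v hv k' hk' := by
    obtain ⟨k, hk, rfl⟩ := Finset.mem_image.mp hk'
    obtain ⟨x, hx, hvx⟩ := M.exists_adj (Finset.mem_filter.mp hv).1 hk
    exact ⟨x, subset_contractSets k hx, hvx⟩
  connected k hk := M.connected_contractSets hs ha hb (Finset.mem_of_mem_erase hk)
  pairwiseDisjoint := M.pairwiseDisjoint_contractSets hs ha hb
  notMem v hv k hk := by
    obtain ⟨hvS, hnot⟩ := Finset.mem_filter.mp hv
    have hvs : v ≠ s := by rintro rfl; exact hnot ⟨ha, hb⟩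
    exact M.notMem_contractSets hs ha hb hvS hvs (Finset.mem_of_mem_erase hk)

end Contract

theorem card_le_two_mul_card (hG : ¬ IsMinor (completeBipartiteGraph (Fin 3) (Fin 3)) G)
    (M : IsTripleModel G S P τ B) : S.card ≤ 2 * P.card := by
  classical
  induction hn : P.card generalizing S P τ B with
  | zero =>
    have hS : S = ∅ := by
      refine Finset.eq_empty_of_forall_notMem fun s hs ↦ ?_
      have := Finset.card_le_card (M.subset hs)
      have := M.card_eq_three hs
      omega
    simp [hS]
  | succ n ih =>
    obtain rfl | ⟨s, hs⟩ := S.eq_empty_or_nonempty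
    · simp
    obtain ⟨a, _, _, h⟩ := M.exists_isEdgeTriple hs
    obtain ⟨b, c, habc, hall⟩ := exists_isEdgeTriple_forall_reachable h
    have hboth : {s ∈ S | a ∈ τ s ∧ c ∈ τ s}.card ≤ 2 := by
      by_contra! hcard
      exact hG (M.isMinor_of_two_lt_card habc hall hcard)
    obtain ⟨-, hac, -, s, hs, ha, -, hc⟩ := habc
    have hP : (P.erase c).card = n := by
      rw [Finset.card_erase_of_mem (M.subset hs hc), hn, Nat.add_sub_cancel]
    have hrest := ih (M.contract hs ha hc hac) hP
    have hsplit := Finset.card_filter_add_card_filter_not (s := S) fun s ↦ a ∈ τ s ∧ c ∈ τ s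
    omega

end IsTripleModel

theorem card_le_two_mul_card_of_three_le_card_neighbors
    (hG : ¬ IsMinor (completeBipartiteGraph (Fin 3) (Fin 3)) G) {P : Finset V}
    (hSP : Disjoint S P) (hadj : ∀ s ∈ S, ∃ t ⊆ P, 3 ≤ t.card ∧ ∀ x ∈ t, G.Adj s x) :
    S.card ≤ 2 * P.card := by
  have htriple (s : V) (hs : s ∈ S) : ∃ t ⊆ P, t.card = 3 ∧ ∀ x ∈ t, G.Adj s x := by
    obtain ⟨t, htP, ht, hst⟩ := hadj s hs
    obtain ⟨t', ht't, ht'⟩ := Finset.exists_subset_card_eq ht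
    exact ⟨t', ht't.trans htP, ht', fun x hx ↦ hst x (ht't hx)⟩
  choose! τ hτP hτ hτadj using htriple
  exact IsTripleModel.card_le_two_mul_card hG (τ := τ) (B := fun x ↦ {x})
    { subset := hτP
      card_eq_three := hτ
      exists_adj := fun s hs x hx ↦ ⟨x, rfl, hτadj s hs x hx⟩
      connected := fun x _ ↦ Connected.of_subsingleton
      pairwiseDisjoint := fun x _ y _ hxy ↦ Set.disjoint_singleton.mpr hxy
      notMem := fun s hs x hx hsx ↦ Finset.disjoint_left.mp hSP hs (hsx ▸ hx) }

end TripleModel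

section TutteBerge

open SimpleGraph

variable {V W κ : Type*} {G : SimpleGraph V} {H : SimpleGraph W}

/-- The number of components of odd order of `G - A`, encoded as in
`SimpleGraph.IsTutteViolator`. -/
noncomputable def oddComponentCount (G : SimpleGraph V) (A : Set V) : ℕ :=
  ((⊤ : G.Subgraph).deleteVerts A).coe.oddComponents.ncard

theorem mem_verts_deleteVerts_top_iff {A : Set V} {v : V} :
    v ∈ ((⊤ : G.Subgraph).deleteVerts A).verts ↔ v ∉ A := by
  simp

theorem coe_deleteVerts_top_adj_iff {A : Set V} {x y : ((⊤ : G.Subgraph).deleteVerts A).verts} :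
    ((⊤ : G.Subgraph).deleteVerts A).coe.Adj x y ↔ G.Adj x y := by
  have hx := mem_verts_deleteVerts_top_iff.mp x.2
  have hy := mem_verts_deleteVerts_top_iff.mp y.2
  simp [hx, hy]

theorem card_verts_deleteVerts_top_add_ncard [Finite V] (G : SimpleGraph V) (A : Set V) :
    Nat.card ((⊤ : G.Subgraph).deleteVerts A).verts + A.ncard = Nat.card V := by
  rw [Nat.card_coe_set_eq, Subgraph.deleteVerts_verts, Subgraph.verts_top,
    ← Set.compl_eq_univ_sdiff, add_comm, Set.ncard_add_ncard_compl]

theorem odd_oddComponentCount_add_ncard_iff [Finite V] (G : SimpleGraph V) (A : Set V) :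
    Odd (oddComponentCount G A + A.ncard) ↔ Odd (Nat.card V) := by
  rw [← card_verts_deleteVerts_top_add_ncard G A, Nat.odd_add, Nat.odd_add, oddComponentCount,
    odd_ncard_oddComponents]

theorem ncard_oddComponents_le_one_of_preconnected (hG : G.Preconnected) :
    G.oddComponents.ncard ≤ 1 := by
  have := hG.subsingleton_connectedComponent
  exact Set.ncard_le_one_iff_subsingleton.mpr Set.subsingleton_of_subsingleton

theorem ncard_oddComponents_eq_of_iso (φ : G ≃g H) :
    G.oddComponents.ncard = H.oddComponents.ncard := by
  have hsupp (c : G.ConnectedComponent) :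
      (φ.connectedComponentEquiv c).supp.ncard = c.supp.ncard :=
    (Nat.card_congr (ConnectedComponent.isoEquivSupp φ c)).symm
  refine Set.ncard_congr (fun c _ ↦ φ.connectedComponentEquiv c) ?_ ?_ ?_
  · intro c hc
    exact (congrArg Odd (hsupp c)).mpr hc
  · intro c d _ _ hcd
    exact φ.connectedComponentEquiv.injective hcd
  · intro d hd
    obtain ⟨c, rfl⟩ := φ.connectedComponentEquiv.surjective d
    exact ⟨c, (congrArg Odd (hsupp c)).mp hd, rfl⟩

/-- The join of `G` with the complete graph on `κ`. Matching a vertex of `G` to a vertex of `κ`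
stands for leaving it unmatched in `G`. -/
def addUniversal (G : SimpleGraph V) (κ : Type*) : SimpleGraph (V ⊕ κ) where
  Adj x y := x ≠ y ∧ ∀ u v, x = Sum.inl u → y = Sum.inl v → G.Adj u v
  symm := ⟨fun _ _ h ↦ ⟨h.1.symm, fun u v hu hv ↦ (h.2 v u hv hu).symm⟩⟩
  loopless := ⟨fun _ h ↦ h.1 rfl⟩

theorem addUniversal_adj_inl_inl {u v : V} :
    (addUniversal G κ).Adj (Sum.inl u) (Sum.inl v) ↔ G.Adj u v := by
  refine ⟨fun h ↦ h.2 u v rfl rfl, fun h ↦ ⟨Sum.inl_injective.ne h.ne, fun u' v' hu hv ↦ ?_⟩⟩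
  rwa [← Sum.inl_injective hu, ← Sum.inl_injective hv]

theorem addUniversal_adj_inr_left {k : κ} {x : V ⊕ κ} (hx : Sum.inr k ≠ x) :
    (addUniversal G κ).Adj (Sum.inr k) x :=
  ⟨hx, fun _ _ h ↦ nomatch h⟩

theorem oddComponentCount_addUniversal_le_one {A : Set (V ⊕ κ)} {k : κ} (hk : Sum.inr k ∉ A) :
    oddComponentCount (addUniversal G κ) A ≤ 1 := by
  apply ncard_oddComponents_le_one_of_preconnected
  have hreach (x) : ((⊤ : (addUniversal G κ).Subgraph).deleteVerts A).coe.Reachable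
      ⟨Sum.inr k, mem_verts_deleteVerts_top_iff.mpr hk⟩ x := by
    obtain ⟨x, hxA⟩ := x
    obtain rfl | hx := eq_or_ne (Sum.inr k) x
    · exact Reachable.refl _
    · exact (coe_deleteVerts_top_adj_iff.mpr (addUniversal_adj_inr_left hx)).reachable
  exact fun x y ↦ (hreach x).symm.trans (hreach y)

theorem oddComponentCount_addUniversal_of_forall_mem {A : Set (V ⊕ κ)}
    (hA : ∀ k, Sum.inr k ∈ A) :
    oddComponentCount (addUniversal G κ) A = oddComponentCount G (Sum.inl ⁻¹' A) := by
  let f (x : ((⊤ : G.Subgraph).deleteVerts (Sum.inl ⁻¹' A)).verts) :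
      ((⊤ : (addUniversal G κ).Subgraph).deleteVerts A).verts :=
    ⟨Sum.inl x, mem_verts_deleteVerts_top_iff.mpr (mem_verts_deleteVerts_top_iff (G := G).mp x.2)⟩
  have hf : Function.Bijective f := by
    refine ⟨fun x y h ↦ Subtype.ext (Sum.inl_injective (congrArg Subtype.val h)), ?_⟩
    rintro ⟨v | k, hx⟩
    · have hvA : Sum.inl v ∉ A := mem_verts_deleteVerts_top_iff.mp hx
      exact ⟨⟨v, mem_verts_deleteVerts_top_iff.mpr hvA⟩, rfl⟩
    · exact absurd (hA k) (mem_verts_deleteVerts_top_iff.mp hx)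
  refine (ncard_oddComponents_eq_of_iso ⟨Equiv.ofBijective f hf, ?_⟩).symm
  intro x y
  rw [coe_deleteVerts_top_adj_iff, coe_deleteVerts_top_adj_iff]
  exact addUniversal_adj_inl_inl

theorem ncard_eq_ncard_preimage_inl_add_card [Finite V] [Finite κ] {A : Set (V ⊕ κ)}
    (hA : ∀ k, Sum.inr k ∈ A) : A.ncard = (Sum.inl ⁻¹' A).ncard + Nat.card κ := by
  have hdisj : Disjoint (Sum.inl '' (Sum.inl ⁻¹' A)) (Set.range (Sum.inr : κ → V ⊕ κ)) :=
    Set.isCompl_range_inl_range_inr.disjoint.mono_left (Set.image_subset_range _ _)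
  have huniv : Sum.inr ⁻¹' A = Set.univ := Set.eq_univ_of_forall hA
  conv_lhs => rw [← Set.image_preimage_inl_union_image_preimage_inr A, huniv, Set.image_univ]
  rw [Set.ncard_union_eq hdisj, Set.ncard_image_of_injective _ Sum.inl_injective,
    Set.ncard_range_of_injective Sum.inr_injective]

theorem exists_isPerfectMatching_addUniversal [Finite V] [Finite κ]
    (hodd : ∀ A, oddComponentCount G A ≤ A.ncard + Nat.card κ)
    (heven : Even (Nat.card V + Nat.card κ)) :
    ∃ M : (addUniversal G κ).Subgraph, M.IsPerfectMatching := by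
  refine tutte.mpr fun A (hviol : A.ncard < oddComponentCount _ A) ↦ ?_
  by_cases hA : ∀ k, Sum.inr k ∈ A
  · have hcount := oddComponentCount_addUniversal_of_forall_mem (G := G) hA
    have hncard := ncard_eq_ncard_preimage_inl_add_card hA
    have := hodd (Sum.inl ⁻¹' A)
    omega
  · push Not at hA
    obtain ⟨k, hk⟩ := hA
    have hle := oddComponentCount_addUniversal_le_one (G := G) hk
    have hparity := odd_oddComponentCount_add_ncard_iff (addUniversal G κ) A
    rw [Nat.card_sum, ← Nat.not_even_iff_odd (n := _ + Nat.card κ)] at hparity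
    refine hparity.not.mpr (not_not.mpr heven) ?_
    rw [show oddComponentCount (addUniversal G κ) A + A.ncard = 1 by omega]
    exact odd_one

/-- The edges of a subgraph `M` of the join that lie inside `G`, together with their endpoints. -/
def restrictInl (M : (addUniversal G κ).Subgraph) : G.Subgraph where
  verts := {v | ∃ w, M.Adj (Sum.inl v) (Sum.inl w)}
  Adj v w := M.Adj (Sum.inl v) (Sum.inl w)
  adj_sub h := addUniversal_adj_inl_inl.mp h.adj_sub
  edge_vert h := ⟨_, h⟩
  symm := ⟨fun _ _ h ↦ h.symm⟩

theorem isMatching_restrictInl {M : (addUniversal G κ).Subgraph} (hM : M.IsMatching) :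
    (restrictInl M).IsMatching := by
  rintro v ⟨w, hw⟩
  exact ⟨w, hw, fun w' hw' ↦ Sum.inl_injective (hM.eq_of_adj_left hw' hw)⟩

theorem ncard_compl_verts_restrictInl_le [Finite κ] {M : (addUniversal G κ).Subgraph}
    (hM : M.IsPerfectMatching) : ((restrictInl M).vertsᶜ).ncard ≤ Nat.card κ := by
  have hpartner (v : ((restrictInl M).vertsᶜ : Set V)) :
      ∃ k, M.Adj (Sum.inl v.1) (Sum.inr k) := by
    obtain ⟨w | k, h, -⟩ := Subgraph.isPerfectMatching_iff.mp hM (Sum.inl v.1)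
    · exact absurd ⟨w, h⟩ v.2
    · exact ⟨k, h⟩
  choose partner hadj using hpartner
  rw [← Nat.card_coe_set_eq]
  refine Nat.card_le_card_of_injective partner fun v w hvw ↦ Subtype.ext ?_
  exact Sum.inl_injective (hM.1.eq_of_adj_right (hadj v) (hvw ▸ hadj w))

theorem ncard_verts_eq_two_mul_ncard_edgeSet [Finite V] {M : G.Subgraph} (hM : M.IsMatching) :
    M.verts.ncard = 2 * M.edgeSet.ncard := by
  classical
  have := Fintype.ofFinite V
  have hdegree (v : M.verts) [Fintype (M.coe.neighborSet v)] : M.coe.degree v = 1 := by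
    convert! Subgraph.isMatching_iff_forall_degree.mp hM v v.2
    rw [← Subgraph.coe_degree]
  have hsum := M.coe.sum_degrees_eq_twice_card_edges
  simp only [hdegree] at hsum
  rw [← M.image_coe_edgeSet_coe,
    Set.ncard_image_of_injective _ (Sym2.map.injective Subtype.val_injective), ← coe_edgeFinset,
    Set.ncard_coe_finset, ← hsum]
  simp [Set.ncard_eq_toFinset_card']

theorem tutte_berge [Finite V] (G : SimpleGraph V) :
    ∃ (M : G.Subgraph) (A : Set V), M.IsMatching ∧
      Nat.card V + A.ncard ≤ 2 * M.edgeSet.ncard + oddComponentCount G A := by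
  obtain ⟨A, hA⟩ := Finite.exists_max fun A : Set V ↦ (oddComponentCount G A : ℤ) - A.ncard
  obtain ⟨d, hd⟩ : ∃ d, oddComponentCount G A = A.ncard + d := by
    have hempty := hA ∅
    rw [Set.ncard_empty] at hempty
    exact Nat.exists_eq_add_of_le (by omega)
  have hodd (B : Set V) : oddComponentCount G B ≤ B.ncard + Nat.card (Fin d) := by
    have := hA B
    rw [Nat.card_fin]
    omega
  have heven : Even (Nat.card V + Nat.card (Fin d)) := by
    have hparity := odd_oddComponentCount_add_ncard_iff G A
    rw [Nat.card_fin]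
    grind
  obtain ⟨M, hM⟩ := exists_isPerfectMatching_addUniversal hodd heven
  refine ⟨restrictInl M, A, isMatching_restrictInl hM.1, ?_⟩
  have hunmatched := ncard_compl_verts_restrictInl_le hM
  rw [Nat.card_fin] at hunmatched
  have hverts := Set.ncard_add_ncard_compl (restrictInl M).verts
  rw [ncard_verts_eq_two_mul_ncard_edgeSet (isMatching_restrictInl hM.1)] at hverts
  omega

end TutteBerge

section IsolatedVertices

open SimpleGraph

variable {V : Type*} (G : SimpleGraph V)

theorem sum_ncard_supp_eq_card [Finite V] [Fintype G.ConnectedComponent] :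
    ∑ c : G.ConnectedComponent, c.supp.ncard = Nat.card V := by
  rw [← Nat.card_congr (Equiv.sigmaFiberEquiv G.connectedComponentMk), Nat.card_sigma]
  rfl

theorem ncard_setOf_ncard_supp_eq_one_le [Finite V] :
    {c : G.ConnectedComponent | c.supp.ncard = 1}.ncard ≤ {v | G.IsIsolated v}.ncard := by
  have himage : {c : G.ConnectedComponent | c.supp.ncard = 1} ⊆
      G.connectedComponentMk '' {v | G.IsIsolated v} := by
    intro c hc
    obtain ⟨v, hv⟩ := Set.ncard_eq_one.mp hc
    have hvc : v ∈ c.supp := hv ▸ Set.mem_singleton v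
    refine ⟨v, fun w hvw ↦ hvw.ne ?_, hvc⟩
    exact (Set.mem_singleton_iff.mp (hv ▸ (c.mem_supp_congr_adj hvw).mp hvc)).symm
  exact (Set.ncard_le_ncard himage).trans Set.ncard_image_le

theorem three_mul_ncard_oddComponents_le [Finite V] :
    3 * G.oddComponents.ncard ≤ Nat.card V + 2 * {v | G.IsIsolated v}.ncard := by
  classical
  have := Fintype.ofFinite G.ConnectedComponent
  calc 3 * G.oddComponents.ncard
      = ∑ c : G.ConnectedComponent, if Odd c.supp.ncard then 3 else 0 := by
        rw [← Finset.sum_filter, Finset.sum_const, smul_eq_mul, mul_comm, ← Set.ncard_coe_finset]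
        simp [oddComponents]
    -- An odd component that is not a single vertex has at least three vertices.
    _ ≤ ∑ c : G.ConnectedComponent, (c.supp.ncard + if c.supp.ncard = 1 then 2 else 0) :=
        Finset.sum_le_sum fun c _ ↦ by grind
    _ = Nat.card V + 2 * {c : G.ConnectedComponent | c.supp.ncard = 1}.ncard := by
        rw [Finset.sum_add_distrib, sum_ncard_supp_eq_card, ← Finset.sum_filter, Finset.sum_const,
          smul_eq_mul, mul_comm, ← Set.ncard_coe_finset]
        simp
    _ ≤ Nat.card V + 2 * {v | G.IsIsolated v}.ncard := by
        gcongr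
        exact ncard_setOf_ncard_supp_eq_one_le G

/-- The vertices outside `A` that are isolated in `G - A`. -/
def isolatedAfterDeleting (A : Set V) : Set V :=
  {v | v ∉ A ∧ ∀ w, G.Adj v w → w ∈ A}

theorem ncard_add_three_mul_oddComponentCount_le [Finite V] (A : Set V) :
    A.ncard + 3 * oddComponentCount G A ≤ Nat.card V + 2 * (isolatedAfterDeleting G A).ncard := by
  have hisolated : {x | ((⊤ : G.Subgraph).deleteVerts A).coe.IsIsolated x}.ncard ≤
      (isolatedAfterDeleting G A).ncard := by
    refine Set.ncard_le_ncard_of_injOn Subtype.val (fun x hx ↦ ?_) Subtype.val_injective.injOn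
    refine ⟨mem_verts_deleteVerts_top_iff.mp x.2, fun w hw ↦ by_contra fun hwA ↦ ?_⟩
    exact hx ⟨w, mem_verts_deleteVerts_top_iff.mpr hwA⟩ (coe_deleteVerts_top_adj_iff.mpr hw)
  have hodd := three_mul_ncard_oddComponents_le ((⊤ : G.Subgraph).deleteVerts A).coe
  have hcard := card_verts_deleteVerts_top_add_ncard G A
  rw [oddComponentCount]
  omega

end IsolatedVertices

section LocallySuperior

open SimpleGraph

theorem card_le_mul_card_of_forall_exists_adj {V : Type*} {G : SimpleGraph V} [G.LocallyFinite]
    {S P : Finset V} {d : ℕ} (hP : ∀ a ∈ P, G.degree a ≤ d)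
    (hS : ∀ v ∈ S, ∃ a ∈ P, G.Adj v a) : S.card ≤ d * P.card := by
  classical
  have hsub : S ⊆ P.biUnion fun a ↦ G.neighborFinset a := by
    intro v hv
    obtain ⟨a, ha, hva⟩ := hS v hv
    exact Finset.mem_biUnion.mpr ⟨a, ha, (G.mem_neighborFinset a v).mpr hva.symm⟩
  rw [mul_comm]
  exact (Finset.card_le_card hsub).trans (Finset.card_biUnion_le_card_mul _ _ _ hP)

variable {V : Type*} [Fintype V] (G : SimpleGraph V) [DecidableRel G.Adj]

/-- The set `L(G)` of locally superior vertices. -/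
def locallySuperior : Set V :=
  {v | ∃ w, G.Adj v w ∧ G.degree w ≤ G.degree v}

variable {G}

theorem ncard_isolatedAfterDeleting_inter_locallySuperior_le
    (hG : ¬ IsMinor (completeBipartiteGraph (Fin 3) (Fin 3)) G) (A : Set V) :
    (isolatedAfterDeleting G A ∩ locallySuperior G).ncard ≤ 2 * A.ncard := by
  classical
  set I := isolatedAfterDeleting G A ∩ locallySuperior G
  let low (v : V) : Prop := ∃ a ∈ A, G.Adj v a ∧ G.degree a ≤ 2
  have hlow : {v ∈ I.toFinset | low v}.card ≤ 2 * {a ∈ A.toFinset | G.degree a ≤ 2}.card := by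
    refine card_le_mul_card_of_forall_exists_adj (G := G) (by simp) fun v hv ↦ ?_
    obtain ⟨a, ha, hva, hdeg⟩ := (Finset.mem_filter.mp hv).2
    exact ⟨a, by simp [ha, hdeg], hva⟩
  -- Without a neighbour of degree at most two, local superiority forces at least three neighbours.
  have hhigh : {v ∈ I.toFinset | ¬ low v}.card ≤ 2 * {a ∈ A.toFinset | ¬ G.degree a ≤ 2}.card := by
    refine card_le_two_mul_card_of_three_le_card_neighbors hG ?_ fun v hv ↦ ?_
    · refine Finset.disjoint_left.mpr fun v hv hvA ↦ ?_
      rw [Finset.mem_filter, Set.mem_toFinset] at hv hvA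
      exact hv.1.1.1 hvA.1
    · rw [Finset.mem_filter, Set.mem_toFinset] at hv
      obtain ⟨⟨⟨-, hvA⟩, w, hvw, hdeg⟩, hvlow⟩ := hv
      have hnbr (a) (hva : G.Adj v a) : ¬ G.degree a ≤ 2 :=
        fun hda ↦ hvlow ⟨a, hvA a hva, hva, hda⟩
      refine ⟨G.neighborFinset v, fun a ha ↦ ?_, ?_, fun a ↦ (G.mem_neighborFinset v a).mp⟩
      · rw [mem_neighborFinset] at ha
        exact Finset.mem_filter.mpr ⟨Set.mem_toFinset.mpr (hvA a ha), hnbr a ha⟩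
      · have := hnbr w hvw
        rw [card_neighborFinset_eq_degree]
        omega
  have hI := Finset.card_filter_add_card_filter_not (s := I.toFinset) fun v ↦ low v
  have hA := Finset.card_filter_add_card_filter_not (s := A.toFinset) (G.degree · ≤ 2)
  rw [Set.ncard_eq_toFinset_card', Set.ncard_eq_toFinset_card']
  omega

theorem locally_superior_le_three_matching_general
    (hG : ¬ IsMinor (completeBipartiteGraph (Fin 3) (Fin 3)) G) :
    ∃ M : G.Subgraph, M.IsMatching ∧ (locallySuperior G).ncard ≤ 3 * M.edgeSet.ncard := by
  obtain ⟨M, A, hM, hberge⟩ := tutte_berge G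
  refine ⟨M, hM, ?_⟩
  have hodd := ncard_add_three_mul_oddComponentCount_le G A
  have hisolated := ncard_isolatedAfterDeleting_inter_locallySuperior_le hG A
  have hcompl := Set.ncard_add_ncard_compl (isolatedAfterDeleting G A)
  have hsplit : (locallySuperior G).ncard ≤ (isolatedAfterDeleting G A ∩ locallySuperior G).ncard +
      (isolatedAfterDeleting G A)ᶜ.ncard := by
    rw [← Set.ncard_inter_add_ncard_sdiff_eq_ncard _ (isolatedAfterDeleting G A), Set.inter_comm]
    exact Nat.add_le_add_left (Set.ncard_le_ncard fun _ hv ↦ hv.2) _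
  omega

end LocallySuperior

/-- If `G` is planar, the number of locally superior vertices satisfies
`|L(G)| ≤ 3ν(G)`. -/
theorem locally_superior_le_three_matching {V : Type*} [Fintype V]
    (G : SimpleGraph V) [DecidableRel G.Adj] (hplanar : G.IsPlanar) :
    ∃ M : G.Subgraph, M.IsMatching ∧
      ({v : V | ∃ w, G.Adj v w ∧ G.degree w ≤ G.degree v} : Set V).ncard ≤
        3 * M.edgeSet.ncard :=
  locally_superior_le_three_matching_general
    (not_isMinor_completeBipartiteGraph_of_isPlanar hplanar)
end
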